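/- Fix v, e ∈ ℕ with v ≥ 1. Let X(v,e) be the set of maps g : Fin e → Fin v × Fin v (directed graphs with labelled vertices, labelled oriented edges) such that (i) every vertex has valence at least 3, where the valence of x is the number of pairs (i, c) with i ∈ Fin e, c ∈ {1,2} and the c-th component of g(i) equal to x, and (ii) the graph is connected, i.e. the equivalence relation on Fin v generated by relating the two components of g(i) for each i ∈ Fin e has exactly one equivalence class. Let Γ := Perm(Fin v) × Perm(Fin e) × (Fin e → Perm(Fin 2)) act on X(v,e) by relabelling vertices, relabelling edges, and reversing edge orientations, and let χ : Γ → {1,−1} be the group homomorphism sending (ρ, μ, ν) to sgn(ρ)·Π_{i ∈ Fin e} sgn(ν_i). Define ñ^{odd}(v,e) as the number of Γ-orbits O on X(v,e) such that χ(γ) = 1 for every γ ∈ Γ stabilizing some point of O, and define ñ^{odd*}(v,e) in the same way but with X(v,e) replaced by its subset of graphs without multiple edges (no two distinct i, i' ∈ Fin e such that g(i') equals g(i) or its reversal). Then for every b ≥ 2: Σ_{v≥1} (−1)^v · ñ^{odd}(v, b+v) = Σ_{v≥1} (−1)^v · ñ^{odd*}(v, b+v). (Both sums are finite since at-least-trivalent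 graphs satisfy v ≤ 2b − 2.) -/

import Mathlib

namespace GraphComplexOdd

/-- A graph with `v` labelled vertices and `e` labelled oriented edges: each edge is sent to
its (ordered) pair of endpoints. -/
abbrev Graph (v e : ℕ) := Fin e → Fin v × Fin v

/-- The symmetry group `Γ`: relabelling of vertices, relabelling of edges, and reversal of
the orientations of the individual edges. -/
abbrev Gamma (v e : ℕ) :=
  Equiv.Perm (Fin v) × Equiv.Perm (Fin e) × (Fin e → Equiv.Perm (Fin 2))

/-- Reversal of an ordered pair governed by a permutation of `Fin 2`. -/
def flipPair {V : Type*} (τ : Equiv.Perm (Fin 2)) (p : V × V) : V × V :=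
  if τ 0 = 0 then p else p.swap

/-- The action of `Γ` on graphs: relabel the vertices by `γ.1`, the edges by `γ.2.1` and
reverse the orientation of the edges as prescribed by `γ.2.2`. -/
def act {v e : ℕ} (γ : Gamma v e) (g : Graph v e) : Graph v e :=
  fun i => Prod.map γ.1 γ.1 (flipPair (γ.2.2 (γ.2.1⁻¹ i)) (g (γ.2.1⁻¹ i)))

/-- The character `χ : Γ → {1, -1}`, `(ρ, μ, ν) ↦ sgn ρ · ∏ᵢ sgn νᵢ`. -/
def chi {v e : ℕ} (γ : Gamma v e) : ℤ :=
  (Equiv.Perm.sign γ.1 : ℤ) * ∏ i : Fin e, (Equiv.Perm.sign (γ.2.2 i) : ℤ)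

/-- The valence of the vertex `x`: the number of pairs `(i, c)` with the `c`-th component of
`g i` equal to `x` (a loop at `x` contributes `2`). -/
def valence {v e : ℕ} (g : Graph v e) (x : Fin v) : ℕ :=
  ∑ i : Fin e, ((if (g i).1 = x then 1 else 0) + (if (g i).2 = x then 1 else 0))

/-- The adjacency relation determined by a graph: `a` and `b` are the two endpoints of some
edge. -/
def adj {v e : ℕ} (g : Graph v e) (a b : Fin v) : Prop :=
  ∃ i : Fin e, g i = (a, b) ∨ g i = (b, a)

/-- Membership in `X(v,e)`: all vertices have valence at least `3`, and the graph is
connected, i.e. the equivalence relation generated by adjacency has exactly one class. -/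
def IsX {v e : ℕ} (g : Graph v e) : Prop :=
  (∀ x : Fin v, 3 ≤ valence g x) ∧ (∀ a b : Fin v, Relation.EqvGen (adj g) a b)

/-- The graph has no multiple edges: no two distinct edges have the same pair of endpoints,
in either order. -/
def NoMultiple {v e : ℕ} (g : Graph v e) : Prop :=
  ∀ i i' : Fin e, i ≠ i' → g i' ≠ g i ∧ g i' ≠ (g i).swap

/-- `ñ^{odd}(v,e)`: the number of `Γ`-orbits on `X(v,e)` on which every stabilizer element
has character `1` (i.e. the dimension of the degree-`(v,e)` part of the connected odd graph
complex). -/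
noncomputable def nOdd (v e : ℕ) : ℕ :=
  Nat.card {S : Set (Graph v e) //
    ∃ g : Graph v e, IsX g ∧ S = {g' | ∃ γ : Gamma v e, g' = act γ g} ∧
      ∀ g' ∈ S, ∀ γ : Gamma v e, act γ g' = g' → chi γ = 1}

/-- `ñ^{odd*}(v,e)`: the same count for graphs without multiple edges. -/
noncomputable def nOddStar (v e : ℕ) : ℕ :=
  Nat.card {S : Set (Graph v e) //
    ∃ g : Graph v e, (IsX g ∧ NoMultiple g) ∧
      S = {g' | ∃ γ : Gamma v e, g' = act γ g} ∧
      ∀ g' ∈ S, ∀ γ : Gamma v e, act γ g' = g' → chi γ = 1}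

/-!
Graphs are made into a groupoid in which every automorphism carries a sign, and Euler
characteristics count the isomorphism classes without automorphisms of negative sign. If an object
carries a nonempty set of slots that may be marked or not, and marks are odd, then the Euler
characteristic of the marked objects vanishes: written as a sum of traces over automorphisms, it
cancels under toggling the marks on a cycle of the automorphism.

Marking bundles of multiple edges, this shows that the graphs with multiple edges contribute
minus the graphs with a nonempty set of marked bundles. Replacing two edges of every marked bundle
by a pair of legs with an odd marker turns the latter into graphs with paired legs. These are the
expansions of graphs with marked legs, so toggling cancels all of them except those in which each
leg ends at the same vertex as its partner. There exactly one leg of each pair is marked, since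
exchanging two marked legs is odd, so that each pair amounts to a single odd leg; and graphs
with such legs cancel once more by toggling.
-/

open CategoryTheory
open scoped symmDiff Pointwise

universe u u'

/-! ### Bijections and finite sums -/

theorem exists_equiv_comp_eq {α α' β β' : Type*} {c : α → β} {d : α' → β'}
    (hc : Function.Surjective c) (hd : Function.Surjective d) (g : α ≃ α')
    (h : ∀ a b, c a = c b ↔ d (g a) = d (g b)) : ∃ e : β ≃ β', ∀ a, e (c a) = d (g a) := by
  refine ⟨(Setoid.quotientKerEquivOfSurjective c hc).symm.trans
    ((Quotient.congr g h).trans (Setoid.quotientKerEquivOfSurjective d hd)), fun a => ?_⟩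
  have ha : (Setoid.quotientKerEquivOfSurjective c hc).symm (c a) = ⟦a⟧ :=
    (Equiv.symm_apply_eq _).2 rfl
  rw [Equiv.trans_apply, ha]
  rfl

theorem exists_equiv_of_card_fiber_eq {ι κ β : Type*} [Finite ι] [Finite κ] {h : ι → β} {h' : κ → β}
    (hcard : ∀ s, Nat.card {i // h i = s} = Nat.card {i // h' i = s}) :
    ∃ μ : ι ≃ κ, ∀ i, h' (μ i) = h i := by
  have hE (s : β) : Nonempty ({i // h i = s} ≃ {i // h' i = s}) := Finite.card_eq.1 (hcard s)
  let E (s : β) := (hE s).some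
  exact ⟨(Equiv.sigmaFiberEquiv h).symm.trans ((Equiv.sigmaCongrRight fun s => E s).trans
    (Equiv.sigmaFiberEquiv h')), fun i => (E (h i) ⟨i, rfl⟩).2⟩

theorem exists_prod_bool_equiv_ordered_pairs {ι V : Type*} {r : ι → V × V} {T : Set (Sym2 V)}
    (hne : ∀ i, (r i).1 ≠ (r i).2) (hinj : Function.Injective fun i => s((r i).1, (r i).2))
    (hT : T = Set.range fun i => s((r i).1, (r i).2)) :
    ∃ e : ι × Bool ≃ {a : V × V // s(a.1, a.2) ∈ T},
      ∀ i, (e (i, false)).1 = r i ∧ (e (i, true)).1 = (r i).swap := by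
  subst hT
  let F : ι × Bool → {a : V × V // s(a.1, a.2) ∈ Set.range fun i => s((r i).1, (r i).2)} := fun a =>
    ⟨bif a.2 then (r a.1).swap else r a.1, a.1, by cases a.2 <;> simp [Sym2.eq_swap]⟩
  refine ⟨.ofBijective F ⟨?_, ?_⟩, fun i => ⟨rfl, rfl⟩⟩
  · rintro ⟨i, j⟩ ⟨i', j'⟩ h
    have hval : (F (i, j)).1 = (F (i', j')).1 := congrArg Subtype.val h
    obtain rfl : i = i' := hinj <| by
      have := congrArg (fun a : V × V => s(a.1, a.2)) hval
      cases j <;> cases j' <;> simpa [F, Sym2.eq_swap] using this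
    cases j <;> cases j'
    · rfl
    · exact (hne i (congrArg Prod.fst hval)).elim
    · exact (hne i (congrArg Prod.fst hval).symm).elim
    · rfl
  · rintro ⟨⟨x, y⟩, i, h⟩
    rcases Sym2.eq_iff.1 h with ⟨hx, hy⟩ | ⟨hx, hy⟩
    · exact ⟨(i, false), Subtype.ext (Prod.ext hx hy)⟩
    · exact ⟨(i, true), Subtype.ext (Prod.ext hy hx)⟩

theorem finsum_mem_comp_eq_finsum_mem_mul_ncard {α β R : Type*} [NonAssocSemiring R]
    {C : Set α} (hC : C.Finite) {D : Set β} {n : α → β} (hn : Set.MapsTo n C D) (f : β → R) :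
    ∑ᶠ c ∈ C, f (n c) = ∑ᶠ d ∈ D, f d * {c | c ∈ C ∧ n c = d}.ncard := by
  classical
  have hcard (d : β) : {c | c ∈ C ∧ n c = d}.ncard = (hC.toFinset.filter (n · = d)).card := by
    rw [← Set.ncard_coe_finset]
    simp
  have hsupport : (Function.support fun d => f d * ({c | c ∈ C ∧ n c = d}.ncard : R)) ⊆ n '' C := by
    intro d hd
    obtain ⟨c, hc, rfl⟩ := Set.nonempty_of_ncard_ne_zero
      (s := {c | c ∈ C ∧ n c = d}) fun h => hd (by simp [h])
    exact ⟨c, hc, rfl⟩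
  rw [finsum_mem_eq_finite_toFinset_sum _ hC, Finset.sum_comp,
    finsum_mem_eq_sum_of_inter_support_eq (t := hC.toFinset.image n)]
  · exact Finset.sum_congr rfl fun d _ => by rw [hcard, nsmul_eq_mul, Nat.cast_comm]
  · rw [Finset.coe_image, hC.coe_toFinset, Set.inter_eq_self_of_subset_right hsupport,
      Set.inter_eq_self_of_subset_right]
    exact hsupport.trans hn.image_subset

/-! ### Signed groupoids -/

section PermSign

variable {α : Type*} {β : Type*} [Finite α] [Finite β]

/-- The sign of a permutation of a finite type, for types that carry no `Fintype` or
`DecidableEq` instance. -/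
noncomputable def permSign : Equiv.Perm α →* ℤˣ :=
  open Classical in
  letI := Fintype.ofFinite α
  Equiv.Perm.sign

theorem permSign_eq_sign [Fintype α] [DecidableEq α] (f : Equiv.Perm α) :
    permSign f = Equiv.Perm.sign f := by
  unfold permSign
  congr!

theorem permSign_trans (f g : Equiv.Perm α) :
    permSign (f.trans g : Equiv.Perm α) = permSign f * permSign g :=
  (map_mul permSign g f).trans (mul_comm _ _)

theorem permSign_congr (e : α ≃ β) (f : Equiv.Perm α) (g : Equiv.Perm β)
    (h : ∀ a, e (f a) = g (e a)) : permSign f = permSign g := by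
  classical
  have := Fintype.ofFinite α
  have := Fintype.ofFinite β
  rw [permSign_eq_sign, permSign_eq_sign, Equiv.Perm.sign_eq_sign_of_equiv f g e h]

theorem permSign_sumCongr (f : Equiv.Perm α) (g : Equiv.Perm β) :
    permSign (Equiv.sumCongr f g) = permSign f * permSign g := by
  classical
  have := Fintype.ofFinite α
  have := Fintype.ofFinite β
  simp only [permSign_eq_sign]
  exact Equiv.Perm.sign_sumCongr f g

theorem permSign_subtypePerm_mul_compl (f : Equiv.Perm α) (p : α → Prop)
    (h : ∀ a, p (f a) ↔ p a) :
    permSign (f.subtypePerm h) * permSign (f.subtypePerm (p := fun a => ¬ p a)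
      fun a => not_congr (h a)) = permSign f := by
  classical
  rw [← permSign_sumCongr]
  refine permSign_congr (Equiv.sumCompl p) _ _ ?_
  rintro (a | a) <;> simp

theorem permSign_of_commute_not {ι : Type*} [Fintype ι] (π : Equiv.Perm (ι × Bool))
    (h : ∀ i c, π (i, !c) = ((π (i, c)).1, !(π (i, c)).2)) :
    permSign π = ∏ i, if (π (i, false)).2 then -1 else 1 := by
  classical
  have hval (i c) : π (i, c) = ((π (i, false)).1, xor c (π (i, false)).2) := by
    cases c
    · simp
    · simpa using h i false
  have hbij : Function.Bijective fun i => (π (i, false)).1 := by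
    refine Finite.injective_iff_bijective.1 fun i i' hi => ?_
    have h₁ := hval i (π (i, false)).2
    have h₂ := hval i' (π (i', false)).2
    rw [Bool.xor_self] at h₁ h₂
    exact congrArg Prod.fst (π.injective (h₁.trans ((congrArg (·, false) hi).trans h₂.symm)))
  let flip (i : ι) : Equiv.Perm Bool := if (π (i, false)).2 then Equiv.boolNot else 1
  let base : Equiv.Perm ι := .ofBijective _ hbij
  have hπ : π = (Equiv.prodCongrRight flip).trans (Equiv.prodCongrLeft fun _ => base) := by
    refine Equiv.ext fun ⟨i, c⟩ => ?_
    rw [hval]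
    cases hc : (π (i, false)).2 <;> simp [flip, base, hc]
  have hflip : permSign (Equiv.prodCongrRight flip) = ∏ i, if (π (i, false)).2 then -1 else 1 := by
    rw [permSign_eq_sign, Equiv.Perm.sign_prodCongrRight]
    refine Finset.prod_congr rfl fun i _ => ?_
    simp only [flip]
    split_ifs
    · decide
    · rfl
  have hbase : permSign (Equiv.prodCongrLeft fun _ : Bool => base) = 1 := by
    rw [permSign_eq_sign, Equiv.Perm.sign_prodCongrLeft, Fintype.prod_bool, Int.units_mul_self]
  conv_lhs => rw [hπ]
  rw [permSign_trans, hflip, hbase, mul_one]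

end PermSign

/-- A groupoid with finite hom-sets in which every automorphism carries a sign, multiplicatively
and invariantly under conjugation by arbitrary morphisms. -/
class SignedGroupoid (A : Type u) extends Groupoid.{0} A where
  finite_hom : ∀ x y : A, Finite (x ⟶ y)
  sign : ∀ {x : A}, (x ⟶ x) → ℤˣ
  sign_comp : ∀ {x : A} (f g : x ⟶ x), sign (f ≫ g) = sign f * sign g
  sign_conj : ∀ {x y : A} (f : x ⟶ y) (g : x ⟶ x) (g' : y ⟶ y), g ≫ f = f ≫ g' → sign g = sign g'

namespace SignedGroupoid

variable {A : Type u} [SignedGroupoid A] {B : Type u'} [SignedGroupoid B]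

instance (x y : A) : Finite (x ⟶ y) := finite_hom x y

variable (A) in
/-- The isomorphism classes of a signed groupoid. -/
abbrev IsoClass := Quotient (isIsomorphicSetoid A)

/-- The isomorphism class of an object. -/
abbrev isoClass (x : A) : IsoClass A := Quotient.mk _ x

theorem isoClass_eq_iff {x y : A} : isoClass x = isoClass y ↔ Nonempty (x ⟶ y) :=
  Quotient.eq.trans (Groupoid.isoEquivHom x y).nonempty_congr

theorem isoClass_eq {x y : A} (f : x ⟶ y) : isoClass x = isoClass y :=
  isoClass_eq_iff.2 ⟨f⟩

theorem isoClass_out (c : IsoClass A) : isoClass c.out = c := Quotient.out_eq _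

theorem nonempty_out_hom (x : A) : Nonempty ((isoClass x).out ⟶ x) :=
  isoClass_eq_iff.1 (isoClass_out _)

/-- An object none of whose automorphisms has sign `-1`; only these survive in the graded vector
space spanned by the objects modulo the signed automorphisms. -/
def Orientable (x : A) : Prop := ∀ f : x ⟶ x, sign f = 1

theorem Orientable.of_hom {x y : A} (h : Orientable x) (f : x ⟶ y) : Orientable y := fun g =>
  (sign_conj f (f ≫ g ≫ Groupoid.inv f) g (by simp)).symm.trans (h _)

/-- A function on objects that only depends on the isomorphism class. -/
def IsoInvariant {X : Sort*} (d : A → X) : Prop := ∀ ⦃x y : A⦄, (x ⟶ y) → d x = d y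

theorem IsoInvariant.of_imp {P : A → Prop} (h : ∀ ⦃x y : A⦄, (x ⟶ y) → P x → P y) :
    IsoInvariant P := fun _ _ f => propext ⟨h f, h (Groupoid.inv f)⟩

theorem IsoInvariant.and {P Q : A → Prop} (hP : IsoInvariant P) (hQ : IsoInvariant Q) :
    IsoInvariant fun x => P x ∧ Q x := fun _ _ f => congrArg₂ And (hP f) (hQ f)

theorem IsoInvariant.not {P : A → Prop} (hP : IsoInvariant P) :
    IsoInvariant fun x => ¬ P x := fun _ _ f => congrArg Not (hP f)

open Classical in
/-- The contribution `(-1) ^ d x` of an orientable object satisfying `P` to the Euler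
characteristic, and `0` for all other objects. -/
noncomputable def signedWeight (P : A → Prop) (d : A → ℕ) (x : A) : ℤ :=
  if P x ∧ Orientable x then (-1) ^ d x else 0

theorem signedWeight_of_not {P : A → Prop} (d : A → ℕ) {x : A} (h : ¬ P x) :
    signedWeight P d x = 0 := if_neg fun h' => h h'.1

theorem isoInvariant_signedWeight {P : A → Prop} {d : A → ℕ} (hP : IsoInvariant P)
    (hd : IsoInvariant d) : IsoInvariant (signedWeight P d) := by
  classical
  intro x y f
  have horient : Orientable x ↔ Orientable y :=
    ⟨fun h => h.of_hom f, fun h => h.of_hom (Groupoid.inv f)⟩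
  simp only [signedWeight, hP f, hd f, horient]

/-- The Euler characteristic of the complex spanned by the isomorphism classes of orientable
objects satisfying `P`, graded by `d`. -/
noncomputable def eulerChar (P : A → Prop) (d : A → ℕ) : ℤ :=
  ∑ᶠ c : IsoClass A, signedWeight P d c.out

theorem eulerChar_eq_finsum_mem (P : A → Prop) (d : A → ℕ) :
    eulerChar P d = ∑ᶠ c ∈ {c : IsoClass A | P c.out ∧ Orientable c.out}, (-1 : ℤ) ^ d c.out :=
  finsum_congr fun c => by
    classical
    exact (finsum_eq_if (p := P c.out ∧ Orientable c.out)).symm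

theorem eulerChar_congr {P Q : A → Prop} {d : A → ℕ} (h : ∀ x, Orientable x → (P x ↔ Q x)) :
    eulerChar P d = eulerChar Q d :=
  finsum_congr fun c => by
    classical
    by_cases hc : Orientable c.out <;> simp only [signedWeight, hc, h, and_false, if_false]

theorem eulerChar_eq_zero {P : A → Prop} {d : A → ℕ} (h : ∀ x, Orientable x → ¬ P x) :
    eulerChar P d = 0 :=
  (finsum_congr fun _ => if_neg fun hc => h _ hc.2 hc.1).trans finsum_zero

/-- The objects satisfying `P` fall into finitely many isomorphism classes. -/
def FiniteUpToIso (P : A → Prop) : Prop := {c : IsoClass A | P c.out}.Finite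

theorem FiniteUpToIso.mono {P Q : A → Prop} (hQ : FiniteUpToIso Q) (h : ∀ x, P x → Q x) :
    FiniteUpToIso P := hQ.subset fun _ => h _

theorem support_signedWeight_subset (P : A → Prop) (d : A → ℕ) :
    (Function.support fun c : IsoClass A => signedWeight P d c.out) ⊆ {c | P c.out} :=
  fun _ hc => by_contra fun h => hc (signedWeight_of_not d h)

theorem eulerChar_add_compl {P : A → Prop} (hP : FiniteUpToIso P) (R : A → Prop) (d : A → ℕ) :
    eulerChar (fun x => P x ∧ R x) d + eulerChar (fun x => P x ∧ ¬ R x) d = eulerChar P d := by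
  classical
  have hfin (Q : A → Prop) := (hP.mono fun x (h : P x ∧ Q x) => h.1).subset
    (support_signedWeight_subset (fun x => P x ∧ Q x) d)
  unfold eulerChar
  rw [← finsum_add_distrib (hfin R) (hfin fun x => ¬ R x)]
  refine finsum_congr fun c => ?_
  by_cases h1 : P c.out <;> by_cases h2 : R c.out <;> simp [signedWeight, h1, h2]

theorem eulerChar_eq_of_full_of_surjective {P : A → Prop} {Q : B → Prop} {dA : A → ℕ}
    {dB : B → ℕ} (F : A → B) (map : ∀ {x y : A}, (x ⟶ y) → (F x ⟶ F y))
    (hP : IsoInvariant P) (hQ : IsoInvariant Q) (hd : IsoInvariant dB)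
    (hPQ : ∀ x, P x → Q (F x)) (hdeg : ∀ x, P x → (-1 : ℤ) ^ dB (F x) = (-1) ^ dA x)
    (hsign : ∀ x, P x → ∀ f : x ⟶ x, sign (map f) = sign f)
    (hfull : ∀ x y, P x → P y → ∀ g : F x ⟶ F y, ∃ f : x ⟶ y, map f = g)
    (hsurj : ∀ y, Q y → Orientable y → ∃ x, P x ∧ Nonempty (F x ⟶ y)) :
    eulerChar P dA = eulerChar Q dB := by
  have hF {x : A} (hx : P x) : Orientable (F x) ↔ Orientable x := by
    refine ⟨fun h f => by rw [← hsign x hx, h], fun h g => ?_⟩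
    obtain ⟨f, rfl⟩ := hfull x x hx hx g
    rw [hsign x hx, h]
  rw [eulerChar_eq_finsum_mem, eulerChar_eq_finsum_mem]
  refine finsum_mem_eq_of_bijOn (fun c => isoClass (F c.out)) ⟨?_, ?_, ?_⟩ ?_
  · rintro c ⟨hPc, hc⟩
    obtain ⟨g⟩ := nonempty_out_hom (F c.out)
    exact ⟨by rw [hQ g]; exact hPQ _ hPc, ((hF hPc).2 hc).of_hom (Groupoid.inv g)⟩
  · rintro c ⟨hPc, -⟩ c' ⟨hPc', -⟩ h
    obtain ⟨g⟩ := isoClass_eq_iff.1 h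
    obtain ⟨f, -⟩ := hfull _ _ hPc hPc' g
    rw [← isoClass_out c, ← isoClass_out c', isoClass_eq f]
  · rintro c ⟨hQc, hc⟩
    obtain ⟨x, hx, ⟨f⟩⟩ := hsurj _ hQc hc
    obtain ⟨g⟩ := nonempty_out_hom x
    refine ⟨isoClass x, ⟨by rw [hP g]; exact hx, ?_⟩, ?_⟩
    · exact ((hF hx).1 (hc.of_hom (Groupoid.inv f))).of_hom (Groupoid.inv g)
    · exact (isoClass_eq (map g ≫ f)).trans (isoClass_out c)
  · rintro c ⟨hPc, -⟩
    obtain ⟨g⟩ := nonempty_out_hom (F c.out)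
    rw [hd g, hdeg _ hPc]

open Classical in
theorem finsum_sign_eq (x : A) :
    ∑ᶠ f : x ⟶ x, ((sign f : ℤˣ) : ℤ) = if Orientable x then (Nat.card (x ⟶ x) : ℤ) else 0 := by
  have := Fintype.ofFinite (x ⟶ x)
  rw [finsum_eq_sum_of_fintype]
  split_ifs with h
  · simp [h _]
  · simp only [Orientable, not_forall] at h
    obtain ⟨f, hf⟩ := h
    have hf' : sign f = -1 := (Int.units_eq_one_or _).resolve_left hf
    have hsum : ∑ k : x ⟶ x, ((sign (f ≫ k) : ℤˣ) : ℤ) = ∑ k : x ⟶ x, ((sign k : ℤˣ) : ℤ) :=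
      Fintype.sum_bijective (f ≫ ·) ⟨fun k k' h => (cancel_epi f).1 h,
        fun k => ⟨Groupoid.inv f ≫ k, by simp⟩⟩ _ _ fun _ => rfl
    simp only [sign_comp, hf', neg_mul, one_mul, Units.val_neg,
      Finset.sum_neg_distrib] at hsum
    lia

end SignedGroupoid

open SignedGroupoid

/-! ### Marked slots -/

section ToggleSign

variable {α : Type*}

theorem mem_iff_mem_of_sameCycle {k : Equiv.Perm α} {T : Set α} (hT : ∀ s, k s ∈ T ↔ s ∈ T)
    {s t : α} (hst : k.SameCycle s t) : t ∈ T ↔ s ∈ T := by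
  obtain ⟨i, rfl⟩ := hst
  have hk : k ∈ MulAction.stabilizer (Equiv.Perm α) T := MulAction.mem_stabilizer_set.2 hT
  exact MulAction.mem_stabilizer_set.1 (zpow_mem hk i) s

theorem apply_mem_cycle_iff (k : Equiv.Perm α) (s t : α) :
    k t ∈ {t | k.SameCycle s t} ↔ t ∈ {t | k.SameCycle s t} := Equiv.Perm.sameCycle_apply_right

variable [Finite α]

open Classical in
/-- The trace of `k` on the line spanned by the set `T` with an ordering of its elements, up to
the sign of reorderings, in degree `|T|`. -/
noncomputable def toggleSign (k : Equiv.Perm α) (T : Set α) : ℤ :=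
  if h : ∀ s, k s ∈ T ↔ s ∈ T then (-1) ^ T.ncard * (permSign (k.subtypePerm h) : ℤ) else 0

theorem toggleSign_union {k : Equiv.Perm α} {T U : Set α} (hd : Disjoint T U)
    (hT : ∀ s, k s ∈ T ↔ s ∈ T) (hU : ∀ s, k s ∈ U ↔ s ∈ U) :
    toggleSign k (T ∪ U) = toggleSign k T * toggleSign k U := by
  classical
  have hTU : ∀ s, k s ∈ T ∪ U ↔ s ∈ T ∪ U := fun s => or_congr (hT s) (hU s)
  have hsign : permSign (k.subtypePerm hTU) =
      permSign (k.subtypePerm hT) * permSign (k.subtypePerm hU) := by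
    rw [← permSign_sumCongr]
    refine (permSign_congr (Equiv.Set.union hd).symm _ _ ?_).symm
    rintro (a | a) <;> rfl
  rw [toggleSign, toggleSign, toggleSign, dif_pos hT, dif_pos hU, dif_pos hTU,
    Set.ncard_union_eq hd, hsign, pow_add, Units.val_mul, mul_mul_mul_comm]

theorem toggleSign_cycle (k : Equiv.Perm α) (s : α) :
    toggleSign k {t | k.SameCycle s t} = -1 := by
  classical
  have := Fintype.ofFinite α
  have hsign : permSign (k.subtypePerm (apply_mem_cycle_iff k s)) =
      Equiv.Perm.sign (k.cycleOf s) := by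
    rw [Equiv.Perm.cycleOf, Equiv.Perm.sign_ofSubtype, ← permSign_eq_sign]
  rw [toggleSign, dif_pos (apply_mem_cycle_iff k s), hsign]
  by_cases hs : k s = s
  · have hcycle : {t | k.SameCycle s t} = {s} := by
      ext t
      refine ⟨?_, fun h => h ▸ Equiv.Perm.SameCycle.refl _ _⟩
      rintro ⟨i, rfl⟩
      exact Equiv.Perm.zpow_apply_eq_self_of_apply_eq_self hs i
    rw [hcycle, (Equiv.Perm.cycleOf_eq_one_iff k).2 hs]
    simp
  · have hcard : {t | k.SameCycle s t}.ncard = (k.cycleOf s).support.card := by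
      rw [← Set.ncard_coe_finset]
      congr 1
      ext t
      rw [Finset.mem_coe, Equiv.Perm.mem_support_cycleOf_iff' hs, Set.mem_ofPred_eq]
    rw [(Equiv.Perm.isCycle_cycleOf k hs).sign, hcard]
    push_cast
    rw [mul_neg, ← mul_pow, neg_one_mul, neg_neg, one_pow]

theorem toggleSign_symmDiff_cycle (k : Equiv.Perm α) (s : α) (T : Set α) :
    toggleSign k (T ∆ {t | k.SameCycle s t}) = -toggleSign k T := by
  have hC := apply_mem_cycle_iff k s
  by_cases hT : ∀ t, k t ∈ T ↔ t ∈ T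
  · by_cases hs : s ∈ T
    · have hsub : {t | k.SameCycle s t} ⊆ T := fun t ht => (mem_iff_mem_of_sameCycle hT ht).2 hs
      have hunion := toggleSign_union (Set.disjoint_sdiff_left
        (s := {t | k.SameCycle s t}) (t := T)) (fun t => and_congr (hT t) (not_congr (hC t))) hC
      rw [Set.sdiff_union_of_subset hsub, toggleSign_cycle] at hunion
      rw [symmDiff_of_ge hsub, hunion]
      ring
    · have hdisj : Disjoint T {t | k.SameCycle s t} :=
        Set.disjoint_left.2 fun t ht ht' => hs ((mem_iff_mem_of_sameCycle hT ht').1 ht)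
      have hunion : T ∆ {t | k.SameCycle s t} = T ∪ {t | k.SameCycle s t} := hdisj.symmDiff_eq_sup
      rw [hunion, toggleSign_union hdisj hT hC, toggleSign_cycle]
      ring
  · have hT' : ¬ ∀ t, k t ∈ T ∆ {t | k.SameCycle s t} ↔ t ∈ T ∆ {t | k.SameCycle s t} := by
      refine fun h => hT fun t => ?_
      have h1 := h t
      have h2 := hC t
      simp only [Set.mem_symmDiff] at h1
      tauto
    rw [toggleSign, toggleSign, dif_neg hT', dif_neg hT, neg_zero]

end ToggleSign

/-- A functor from a signed groupoid to finite sets and bijections: the slots of an object, a set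
of which can be marked. -/
structure SlotFunctor (A : Type u) [SignedGroupoid A] where
  slots : A → Type
  finite_slots : ∀ x, Finite (slots x)
  map : ∀ {x y : A}, (x ⟶ y) → (slots x ≃ slots y)
  map_id : ∀ x s, map (𝟙 x) s = s
  map_comp : ∀ {x y z : A} (f : x ⟶ y) (g : y ⟶ z) (s), map (f ≫ g) s = map g (map f s)

namespace SlotFunctor

variable {A : Type u} [SignedGroupoid A]

instance (S : SlotFunctor A) (x : A) : Finite (S.slots x) := S.finite_slots x

theorem map_map_inv (S : SlotFunctor A) {x y : A} (f : x ⟶ y) (s) :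
    S.map f (S.map (Groupoid.inv f) s) = s := by
  rw [← S.map_comp, Groupoid.inv_comp, S.map_id]

/-- An object together with a set of marked slots. -/
structure Marked (S : SlotFunctor A) where
  obj : A
  marks : Set (S.slots obj)

variable {S : SlotFunctor A}

namespace Marked

/-- The morphisms of marked objects: the morphisms that match the marked slots. -/
@[ext] structure Hom (p q : Marked S) where
  hom : p.obj ⟶ q.obj
  mem_marks_iff : ∀ s, s ∈ p.marks ↔ S.map hom s ∈ q.marks

/-- The bijection between the marked slots induced by a morphism. -/
def Hom.marksEquiv {p q : Marked S} (f : Hom p q) : p.marks ≃ q.marks :=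
  (S.map f.hom).subtypeEquiv f.mem_marks_iff

/-- The marked slots are odd: the sign of an automorphism is multiplied by the sign of the induced
permutation of the marked slots. -/
noncomputable instance : SignedGroupoid (Marked S) where
  Hom := Hom
  id p := ⟨𝟙 _, fun s => by rw [S.map_id]⟩
  comp f g := ⟨f.hom ≫ g.hom, fun s => by rw [S.map_comp, f.mem_marks_iff, g.mem_marks_iff]⟩
  inv f := ⟨Groupoid.inv f.hom, fun s => by rw [f.mem_marks_iff, S.map_map_inv]⟩
  id_comp f := by ext; simp
  comp_id f := by ext; simp
  assoc f g h := by ext; simp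
  inv_comp f := by ext; simp
  comp_inv f := by ext; simp
  finite_hom p q := Finite.of_injective Hom.hom fun f g h => Hom.ext h
  sign f := sign f.hom * permSign f.marksEquiv
  sign_comp {p} f g := by
    rw [sign_comp, mul_mul_mul_comm, ← permSign_trans]
    congr 2
    ext s
    simp [Hom.marksEquiv, S.map_comp]
  sign_conj {p q} f g g' h := by
    have h' : g.hom ≫ f.hom = f.hom ≫ g'.hom := congrArg Hom.hom h
    rw [sign_conj f.hom _ _ h', permSign_congr f.marksEquiv _ g'.marksEquiv]
    intro s
    ext
    simp [Hom.marksEquiv, ← S.map_comp, h']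

theorem sign_eq {p : Marked S} (f : p ⟶ p) : sign f = sign f.hom * permSign f.marksEquiv := rfl

theorem hom_ext {p q : Marked S} {f g : p ⟶ q} (h : f.hom = g.hom) : f = g := Hom.ext h

/-- A morphism to the underlying object of `p` lifts to a morphism to `p`. -/
def liftHom {x : A} (p : Marked S) (f : x ⟶ p.obj) : (⟨x, S.map f ⁻¹' p.marks⟩ : Marked S) ⟶ p :=
  ⟨f, fun _ => Iff.rfl⟩

/-- The degree in which every marked slot counts `1`. -/
noncomputable def degree (d : A → ℕ) (p : Marked S) : ℕ := d p.obj + p.marks.ncard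

theorem isoInvariant_degree {d : A → ℕ} (hd : IsoInvariant d) :
    IsoInvariant (degree d : Marked S → ℕ) := fun _ _ f => congrArg₂ (· + ·) (hd f.hom) <| by
  rw [← Nat.card_coe_set_eq, ← Nat.card_coe_set_eq, Nat.card_congr f.marksEquiv]

theorem finiteUpToIso {P : Marked S → Prop} (hP : IsoInvariant P)
    (hfin : FiniteUpToIso fun x : A => ∃ T, P ⟨x, T⟩) : FiniteUpToIso P := by
  have := Set.Finite.to_subtype hfin
  refine (Set.finite_range (fun r : (Σ c : {c : IsoClass A | ∃ T, P ⟨c.out, T⟩},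
    Set (S.slots c.1.out)) => isoClass (⟨r.1.1.out, r.2⟩ : Marked S))).subset fun c hc => ?_
  obtain ⟨f⟩ := nonempty_out_hom c.out.obj
  have hPc : P ⟨_, S.map f ⁻¹' c.out.marks⟩ := by rwa [hP (liftHom _ f)]
  exact ⟨⟨⟨_, _, hPc⟩, _⟩, (isoClass_eq (liftHom c.out f)).trans (isoClass_out c)⟩

theorem finsum_sign_mul_toggleSign (x : A) (T : Set (S.slots x)) :
    ∑ᶠ k : x ⟶ x, (sign k : ℤ) * toggleSign (S.map k) T =
      (-1) ^ T.ncard * ∑ᶠ k : (⟨x, T⟩ : Marked S) ⟶ ⟨x, T⟩, (sign k : ℤ) := by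
  have := Fintype.ofFinite (x ⟶ x)
  have := Fintype.ofFinite ((⟨x, T⟩ : Marked S) ⟶ ⟨x, T⟩)
  rw [finsum_eq_sum_of_fintype, finsum_eq_sum_of_fintype, Finset.mul_sum]
  symm
  refine Finset.sum_of_injOn Hom.hom (fun _ _ _ _ h => hom_ext h) (by simp) ?_ ?_
  · intro k _ hk
    rw [toggleSign, dif_neg, mul_zero]
    exact fun h => hk ⟨⟨k, fun s => (h s).symm⟩, by simp, rfl⟩
  · intro k _
    rw [toggleSign, dif_pos fun s => (k.mem_marks_iff s).symm, sign_eq, Units.val_mul,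
      mul_left_comm]
    rfl

theorem finsum_card_hom (p : Marked S) :
    ∑ᶠ T : Set (S.slots p.obj), Nat.card ((⟨p.obj, T⟩ : Marked S) ⟶ p) =
      Nat.card (p.obj ⟶ p.obj) := by
  have := Fintype.ofFinite (Set (S.slots p.obj))
  rw [finsum_eq_sum_of_fintype, ← Nat.card_sigma]
  refine Nat.card_congr ⟨fun k => k.2.hom, fun k => ⟨_, p.liftHom k⟩, ?_, fun k => rfl⟩
  rintro ⟨T, ⟨f, hf⟩⟩
  change p.obj ⟶ p.obj at f
  change ∀ s, s ∈ T ↔ S.map f s ∈ p.marks at hf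
  obtain rfl : T = S.map f ⁻¹' p.marks := Set.ext hf
  rfl

theorem isoClass_obj_eq_iff_mem_range (x : A) (c : IsoClass (Marked S)) :
    isoClass c.out.obj = isoClass x ↔
      c ∈ Set.range fun T => isoClass (⟨x, T⟩ : Marked S) := by
  constructor
  · intro h
    obtain ⟨f⟩ := isoClass_eq_iff.1 h.symm
    exact ⟨_, (isoClass_eq (liftHom c.out f)).trans (isoClass_out c)⟩
  · rintro ⟨T, rfl⟩
    obtain ⟨f⟩ := nonempty_out_hom (⟨x, T⟩ : Marked S)
    exact isoClass_eq f.hom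

open Classical in
theorem finsum_ite_isoClass_eq (p : Marked S) :
    ∑ᶠ T : Set (S.slots p.obj), (if isoClass (⟨p.obj, T⟩ : Marked S) = isoClass p then
      Nat.card ((⟨p.obj, T⟩ : Marked S) ⟶ ⟨p.obj, T⟩) else 0) = Nat.card (p.obj ⟶ p.obj) := by
  rw [← finsum_card_hom]
  refine finsum_congr fun T => ?_
  split_ifs with h
  · obtain ⟨f⟩ := isoClass_eq_iff.1 h
    exact Nat.card_congr ((Groupoid.isoEquivHom _ _).symm f).homToEquiv
  · rw [isoClass_eq_iff, not_nonempty_iff] at h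
    exact Nat.card_of_isEmpty.symm

theorem finsum_mul_card_hom (x : A) {w : Marked S → ℤ} (hw : IsoInvariant w) :
    ∑ᶠ T : Set (S.slots x), w ⟨x, T⟩ * Nat.card ((⟨x, T⟩ : Marked S) ⟶ ⟨x, T⟩) =
      (∑ᶠ c ∈ {c : IsoClass (Marked S) | isoClass c.out.obj = isoClass x}, w c.out) *
        Nat.card (x ⟶ x) := by
  classical
  have := Fintype.ofFinite (Set (S.slots x))
  have hfiber : {c : IsoClass (Marked S) | isoClass c.out.obj = isoClass x} =
      (Finset.univ.image fun T => isoClass (⟨x, T⟩ : Marked S) : Finset _) := by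
    ext c
    simpa using isoClass_obj_eq_iff_mem_range x c
  rw [hfiber, finsum_mem_coe_finset, finsum_eq_sum_of_fintype, Finset.sum_mul,
    ← Finset.sum_fiberwise_of_maps_to fun T _ =>
      Finset.mem_image_of_mem (fun T => isoClass (⟨x, T⟩ : Marked S)) (Finset.mem_univ T)]
  refine Finset.sum_congr rfl fun c hc => ?_
  obtain ⟨T₀, -, rfl⟩ := Finset.mem_image.1 hc
  rw [← finsum_ite_isoClass_eq ⟨x, T₀⟩, finsum_eq_sum_of_fintype, ← Finset.sum_filter,
    Nat.cast_sum, Finset.mul_sum]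
  refine Finset.sum_congr rfl fun T hT => ?_
  obtain ⟨f⟩ := isoClass_eq_iff.1 ((Finset.mem_filter.1 hT).2.trans (isoClass_out _).symm)
  rw [hw f]

theorem finsum_ite_toggleSign_eq_zero {α : Type*} [Finite α] (k : Equiv.Perm α)
    {Q : Set α → Prop} {U : Set α} (hU : ∀ s, k s ∈ U ↔ s ∈ U)
    (hQ : ∀ T T', (∀ s ∉ U, s ∈ T ↔ s ∈ T') → Q T → Q T') (hne : ∀ T, Q T → U.Nonempty) :
    ∑ᶠ T ∈ {T | Q T}, toggleSign k T = 0 := by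
  classical
  have := Fintype.ofFinite (Set α)
  rcases U.eq_empty_or_nonempty with rfl | ⟨s₀, hs₀⟩
  · exact finsum_mem_of_eqOn_zero fun T hT => (Set.not_nonempty_empty (hne T hT)).elim
  have htoggle : ∀ T, Q T → Q (T ∆ {t | k.SameCycle s₀ t}) := fun T => hQ T _ fun s hs => by
    have : ¬ k.SameCycle s₀ s := fun h => hs ((mem_iff_mem_of_sameCycle hU h).2 hs₀)
    simp [Set.mem_symmDiff, this]
  have hfilter : {T | Q T} = (Finset.univ.filter Q : Finset (Set α)) := by simp
  rw [hfilter, finsum_mem_coe_finset]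
  refine Finset.sum_involution (fun T _ => T ∆ {t | k.SameCycle s₀ t}) ?_ ?_ ?_ ?_
  · intro T _
    rw [toggleSign_symmDiff_cycle, add_neg_cancel]
  · intro T _ _ h
    have : s₀ ∈ T ∆ {t | k.SameCycle s₀ t} ↔ s₀ ∈ T := by rw [h]
    simp [Set.mem_symmDiff, Equiv.Perm.SameCycle.refl] at this
  · simpa using htoggle
  · simp

theorem finsum_signedWeight_mul_card_hom (P : Marked S → Prop) (d : A → ℕ) (x : A) :
    ∑ᶠ T : Set (S.slots x), signedWeight P (degree d) ⟨x, T⟩ *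
        (Nat.card ((⟨x, T⟩ : Marked S) ⟶ ⟨x, T⟩) : ℤ) =
      (-1) ^ d x * ∑ᶠ k : x ⟶ x, (sign k : ℤ) * ∑ᶠ T ∈ {T | P ⟨x, T⟩}, toggleSign (S.map k) T := by
  classical
  have := Fintype.ofFinite (Set (S.slots x))
  have := Fintype.ofFinite (x ⟶ x)
  have hterm (T : Set (S.slots x)) : signedWeight P (degree d) ⟨x, T⟩ *
      (Nat.card ((⟨x, T⟩ : Marked S) ⟶ ⟨x, T⟩) : ℤ) =
      if P ⟨x, T⟩ then (-1) ^ d x * ∑ k : x ⟶ x, (sign k : ℤ) * toggleSign (S.map k) T else 0 := by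
    rw [← finsum_eq_sum_of_fintype, finsum_sign_mul_toggleSign, finsum_sign_eq, ← mul_assoc,
      ← pow_add]
    by_cases hP : P ⟨x, T⟩ <;> by_cases hT : Orientable (⟨x, T⟩ : Marked S) <;>
      simp [signedWeight, degree, hP, hT]
  have hmem (k : x ⟶ x) : ∑ᶠ T ∈ {T | P ⟨x, T⟩}, toggleSign (S.map k) T =
      ∑ T with P ⟨x, T⟩, toggleSign (S.map k) T := by
    rw [← finsum_mem_coe_finset]
    simp
  simp only [hterm, hmem, finsum_eq_sum_of_fintype, Finset.mul_sum]
  rw [← Finset.sum_filter, Finset.sum_comm]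

/-- Summed over all `T`, the weights of the classes of `(x, T)` are, up to the factor `|Aut x|`,
a sum over `k : Aut x` of traces of `k`, in which `T` and `T ∆ C` cancel for a cycle `C` of `k` on
the slots that may be toggled. -/
theorem eulerChar_eq_zero_of_toggle {P : Marked S → Prop} {d : A → ℕ} (U : ∀ x, Set (S.slots x))
    (hP : IsoInvariant P) (hd : IsoInvariant d)
    (hU : ∀ ⦃x y : A⦄ (f : x ⟶ y) s, S.map f s ∈ U y ↔ s ∈ U x)
    (hPU : ∀ x (T T' : Set (S.slots x)), (∀ s ∉ U x, s ∈ T ↔ s ∈ T') → P ⟨x, T⟩ → P ⟨x, T'⟩)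
    (hne : ∀ x T, P ⟨x, T⟩ → (U x).Nonempty)
    (hfin : FiniteUpToIso fun x : A => ∃ T, P ⟨x, T⟩) : eulerChar P (degree d) = 0 := by
  classical
  have hPfin : {c : IsoClass (Marked S) | P c.out}.Finite := finiteUpToIso hP hfin
  have hsupp := support_signedWeight_subset P (degree d)
  have hw := isoInvariant_signedWeight hP (isoInvariant_degree hd)
  have hfiber (x : A) : ∑ᶠ c ∈ {c : IsoClass (Marked S) | isoClass c.out.obj = isoClass x},
      signedWeight P (degree d) c.out = 0 := by
    have hcard : (Nat.card (x ⟶ x) : ℤ) ≠ 0 := by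
      have : Nonempty (x ⟶ x) := ⟨𝟙 x⟩
      exact_mod_cast Nat.card_pos.ne'
    refine (mul_eq_zero.1 ?_).resolve_right hcard
    rw [← finsum_mul_card_hom x hw, finsum_signedWeight_mul_card_hom]
    simp only [finsum_ite_toggleSign_eq_zero _ (hU _) (hPU x) (hne x), mul_zero, finsum_zero]
  rw [eulerChar, finsum_eq_sum_of_support_subset _ (s := hPfin.toFinset) (by simpa using hsupp),
    ← Finset.sum_fiberwise_of_maps_to
      fun c hc => Finset.mem_image_of_mem (fun c => isoClass c.out.obj) hc]
  refine Finset.sum_eq_zero fun a _ => ?_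
  rw [← hfiber a.out, isoClass_out]
  refine (finsum_mem_eq_sum_of_inter_support_eq _ ?_).symm
  ext c
  simp only [Set.mem_inter_iff, Set.mem_ofPred_eq, Finset.coe_filter, Set.Finite.mem_toFinset]
  exact ⟨fun h => ⟨⟨hsupp h.2, h.1⟩, h.2⟩, fun h => ⟨h.1.2, h.2⟩⟩

theorem notMem_marks_of_map_eq_swap {p : S.Marked} [DecidableEq (S.slots p.obj)] (h : Orientable p)
    {s t : S.slots p.obj} (hne : s ≠ t) (f : p.obj ⟶ p.obj) (hf : sign f = 1)
    (hmap : S.map f = .swap s t) (hs : s ∈ p.marks) : t ∉ p.marks := fun ht => by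
  classical
  have := Fintype.ofFinite p.marks
  let g : p ⟶ p := ⟨f, fun a => by
    rw [hmap, Equiv.swap_apply_def]
    split_ifs with h₁ h₂
    · exact iff_of_true (h₁ ▸ hs) ht
    · exact iff_of_true (h₂ ▸ ht) hs
    · rfl⟩
  have hmarks : g.marksEquiv = .swap ⟨s, hs⟩ ⟨t, ht⟩ := by
    refine Equiv.ext fun a => Subtype.ext ((DFunLike.congr_fun hmap a.1).trans ?_)
    simp only [Equiv.swap_apply_def, Subtype.ext_iff, apply_ite Subtype.val]
  have hsign := h g
  rw [sign_eq, hmarks, hf, permSign_eq_sign,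
    Equiv.Perm.sign_swap fun h => hne (congrArg Subtype.val h)] at hsign
  exact absurd hsign (by decide)

end Marked

end SlotFunctor

/-! ### Decorated graphs -/

/-- A loopless multigraph, given by its vertices and edge multiplicities, with legs attached to the
vertices and an incidence relation between the legs and a further finite set of markers. -/
structure DecoratedGraph : Type 1 where
  Vert : Type
  Leg : Type
  Marker : Type
  [finite_vert : Finite Vert]
  [finite_leg : Finite Leg]
  [finite_marker : Finite Marker]
  mult : Vert → Vert → ℕ
  foot : Leg → Vert
  inc : Leg → Marker → Prop
  mult_comm : ∀ x y, mult x y = mult y x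
  mult_self : ∀ x, mult x x = 0

namespace DecoratedGraph

attribute [instance] finite_vert finite_leg finite_marker

/-- An isomorphism of decorated graphs. -/
@[ext] structure Hom (G H : DecoratedGraph) where
  vert : G.Vert ≃ H.Vert
  leg : G.Leg ≃ H.Leg
  marker : G.Marker ≃ H.Marker
  mult_map : ∀ x y, H.mult (vert x) (vert y) = G.mult x y
  foot_map : ∀ o, H.foot (leg o) = vert (G.foot o)
  inc_map : ∀ o δ, H.inc (leg o) (marker δ) ↔ G.inc o δ

/-- The ordered pairs of vertices joined by an odd number of edges: permuting the edges of a bundle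
never changes the orientation, reversing a bundle of `m` edges changes it by `(-1) ^ m`. -/
abbrev OddPair (G : DecoratedGraph) := {p : G.Vert × G.Vert // Odd (G.mult p.1 p.2)}

/-- The bijection between odd pairs induced by an isomorphism. -/
def Hom.oddPair {G H : DecoratedGraph} (f : Hom G H) : G.OddPair ≃ H.OddPair :=
  (Equiv.prodCongr f.vert f.vert).subtypeEquiv fun p => by simp [f.mult_map]

/-- Vertices, half-edges and markers are odd; legs are even. The half-edges of even bundles and the
internal permutations of bundles contribute nothing to the sign. -/
noncomputable instance : SignedGroupoid DecoratedGraph where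
  Hom := Hom
  id G := ⟨.refl _, .refl _, .refl _, by simp, by simp, by simp⟩
  comp f g := ⟨f.vert.trans g.vert, f.leg.trans g.leg, f.marker.trans g.marker,
    by simp [f.mult_map, g.mult_map], by simp [f.foot_map, g.foot_map],
    by simp [f.inc_map, g.inc_map]⟩
  inv f := ⟨f.vert.symm, f.leg.symm, f.marker.symm, by simp [← f.mult_map],
    fun o => f.vert.injective (by simp [← f.foot_map]), by simp [← f.inc_map]⟩
  id_comp f := by ext <;> rfl
  comp_id f := by ext <;> rfl
  assoc f g h := by ext <;> rfl
  inv_comp f := by ext <;> simp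
  comp_inv f := by ext <;> simp
  finite_hom G H := Finite.of_injective (fun f : Hom G H => (f.vert, f.leg, f.marker))
    fun f g h => by simpa [Hom.ext_iff] using h
  sign f := permSign f.vert * permSign f.oddPair * permSign f.marker
  sign_comp f g := by
    change permSign (f.vert.trans g.vert) * permSign (f.oddPair.trans g.oddPair) *
      permSign (f.marker.trans g.marker) = _
    rw [permSign_trans, permSign_trans, permSign_trans, mul_mul_mul_comm (permSign f.vert),
      mul_mul_mul_comm]
  sign_conj f g g' h := by
    have hvert (x) : f.vert (g.vert x) = g'.vert (f.vert x) :=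
      DFunLike.congr_fun (congrArg Hom.vert h) x
    have hmarker (δ) : f.marker (g.marker δ) = g'.marker (f.marker δ) :=
      DFunLike.congr_fun (congrArg Hom.marker h) δ
    rw [permSign_congr f.vert g.vert g'.vert hvert,
      permSign_congr f.marker g.marker g'.marker hmarker,
      permSign_congr f.oddPair g.oddPair g'.oddPair]
    exact fun p => Subtype.ext (Prod.ext (hvert p.1.1) (hvert p.1.2))

variable {G H : DecoratedGraph}

theorem sign_eq (f : G ⟶ G) :
    sign f = permSign f.vert * permSign f.oddPair * permSign f.marker := rfl

theorem mult_pos_symm {x y : G.Vert} (h : 0 < G.mult x y) : 0 < G.mult y x := by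
  rwa [G.mult_comm]

/-- The number of edge ends at a vertex. -/
noncomputable def degree (G : DecoratedGraph) (x : G.Vert) : ℕ := ∑ᶠ y, G.mult x y

/-- The number of legs at a vertex. -/
noncomputable def legCount (G : DecoratedGraph) (x : G.Vert) : ℕ := Nat.card {o // G.foot o = x}

/-- Twice the number of edges. -/
noncomputable def totalDegree (G : DecoratedGraph) : ℕ := ∑ᶠ x, G.degree x

theorem degree_map (f : G ⟶ H) (x : G.Vert) : H.degree (f.vert x) = G.degree x :=
  (finsum_comp_equiv f.vert).symm.trans (finsum_congr (f.mult_map x))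

theorem legCount_map (f : G ⟶ H) (x : G.Vert) : H.legCount (f.vert x) = G.legCount x :=
  (Nat.card_congr (f.leg.subtypeEquiv fun o => by rw [f.foot_map]; simp)).symm

theorem totalDegree_map (f : G ⟶ H) : H.totalDegree = G.totalDegree :=
  (finsum_comp_equiv f.vert).symm.trans (finsum_congr (degree_map f))

theorem mult_le_degree (G : DecoratedGraph) (x y : G.Vert) : G.mult x y ≤ G.degree x :=
  single_le_finsum y (Set.toFinite _) fun _ => Nat.zero_le _

theorem mult_le_totalDegree (G : DecoratedGraph) (x y : G.Vert) : G.mult x y ≤ G.totalDegree :=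
  (G.mult_le_degree x y).trans (single_le_finsum x (Set.toFinite _) fun _ => Nat.zero_le _)

theorem finsum_legCount (G : DecoratedGraph) : ∑ᶠ x, G.legCount x = Nat.card G.Leg := by
  have := Fintype.ofFinite G.Vert
  rw [finsum_eq_sum_of_fintype, ← Nat.card_congr (Equiv.sigmaFiberEquiv G.foot), Nat.card_sigma]
  rfl

/-- Connectedness, where the legs of a marker are considered as joined to each other: a property of
vertices that propagates along edges and markers and holds somewhere holds everywhere. -/
def Connected (G : DecoratedGraph) : Prop :=
  ∀ p : G.Vert → Prop, (∀ x y, 0 < G.mult x y → p x → p y) →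
    (∀ o o' δ, G.inc o δ → G.inc o' δ → p (G.foot o) → p (G.foot o')) → ∀ x y, p x → p y

theorem isoInvariant_connected : IsoInvariant Connected :=
  .of_imp fun G H f h p hedge hmarker x y hx => by
    have := h (fun x => p (f.vert x)) (fun x y hxy => hedge _ _ (by rwa [f.mult_map]))
      (fun o o' δ ho ho' => by
        rw [← f.foot_map, ← f.foot_map]
        exact hmarker _ _ _ ((f.inc_map _ _).2 ho) ((f.inc_map _ _).2 ho'))
      (f.vert.symm x) (f.vert.symm y)
    simpa [hx] using this

/-- No two legs of a marker are attached to the same vertex. -/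
def NoMarkerLoop (G : DecoratedGraph) : Prop :=
  ∀ o o' δ, o ≠ o' → G.inc o δ → G.inc o' δ → G.foot o ≠ G.foot o'

theorem isoInvariant_noMarkerLoop : IsoInvariant NoMarkerLoop :=
  .of_imp fun G H f h o o' δ hne ho ho' => by
    obtain ⟨o, rfl⟩ := f.leg.surjective o
    obtain ⟨o', rfl⟩ := f.leg.surjective o'
    obtain ⟨δ, rfl⟩ := f.marker.surjective δ
    rw [f.foot_map, f.foot_map, f.vert.injective.ne_iff]
    exact h o o' δ (ne_of_apply_ne _ hne) ((f.inc_map _ _).1 ho) ((f.inc_map _ _).1 ho')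

/-- The two kinds of legs that occur: those without markers, and those grouped in pairs by
markers. -/
inductive LegKind
  | unmarked
  | paired

/-- The legs of the graph are of the given kind. -/
def HasLegKind (G : DecoratedGraph) : LegKind → Prop
  | .unmarked => IsEmpty G.Marker
  | .paired => ∃ e : G.Marker × Bool ≃ G.Leg, ∀ δ i δ', G.inc (e (δ, i)) δ' ↔ δ = δ'

theorem isoInvariant_hasLegKind (k : LegKind) : IsoInvariant fun G => HasLegKind G k :=
  .of_imp fun G H f h => by
    cases k with
    | unmarked => exact f.marker.symm.isEmpty_congr.2 h
    | paired =>
      obtain ⟨e, he⟩ := h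
      refine ⟨((f.marker.symm.prodCongr (.refl _)).trans e).trans f.leg, fun δ i δ' => ?_⟩
      obtain ⟨δ, rfl⟩ := f.marker.surjective δ
      obtain ⟨δ', rfl⟩ := f.marker.surjective δ'
      simp [f.inc_map, he]

theorem HasLegKind.card_marker_le {k : LegKind} (h : HasLegKind G k) :
    Nat.card G.Marker ≤ Nat.card G.Leg := by
  cases k with
  | unmarked =>
    have : IsEmpty G.Marker := h
    simp
  | paired =>
    obtain ⟨e, -⟩ := h
    rw [← Nat.card_congr e, Nat.card_prod]
    exact Nat.le_mul_of_pos_right _ Nat.card_pos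

/-- The first Betti number is `b` if every leg counts as `s` edge ends. -/
def HasGenus (s b : ℕ) (G : DecoratedGraph) : Prop :=
  G.totalDegree + s * Nat.card G.Leg = 2 * (Nat.card G.Vert + b)

theorem isoInvariant_hasGenus (s b : ℕ) : IsoInvariant (HasGenus s b) := fun G H f => by
  unfold HasGenus
  rw [totalDegree_map f, Nat.card_congr f.leg, Nat.card_congr f.vert]

/-- Every vertex has valence at least `3`, where a leg counts twice. -/
def Trivalent (G : DecoratedGraph) : Prop := ∀ x, 3 ≤ G.degree x + 2 * G.legCount x

theorem isoInvariant_trivalent : IsoInvariant Trivalent := .of_imp fun G H f h x => by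
  obtain ⟨x, rfl⟩ := f.vert.surjective x
  rw [degree_map, legCount_map]
  exact h x

/-- The degree of a decorated graph: vertices and markers count `1`. -/
noncomputable def grade (G : DecoratedGraph) : ℕ := Nat.card G.Vert + Nat.card G.Marker

theorem isoInvariant_grade : IsoInvariant grade := fun G H f => by
  rw [grade, grade, Nat.card_congr f.vert, Nat.card_congr f.marker]

theorem Trivalent.card_vert_le {s b : ℕ} (h : G.Trivalent) (hs : 2 ≤ s) (hG : G.HasGenus s b) :
    Nat.card G.Vert ≤ 2 * b := by
  have := Fintype.ofFinite G.Vert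
  have hsum : ∑ _x : G.Vert, 3 ≤ ∑ x, (G.degree x + 2 * G.legCount x) :=
    Finset.sum_le_sum fun x _ => h x
  rw [Finset.sum_add_distrib, ← Finset.mul_sum, ← finsum_eq_sum_of_fintype,
    ← finsum_eq_sum_of_fintype, ← finsum_eq_sum_of_fintype, finsum_legCount] at hsum
  simp only [finsum_eq_sum_of_fintype, Finset.sum_const, Finset.card_univ, smul_eq_mul,
    ← Nat.card_eq_fintype_card] at hsum
  unfold HasGenus totalDegree at hG
  rw [finsum_eq_sum_of_fintype] at hG
  have := Nat.mul_le_mul_right (Nat.card G.Leg) hs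
  lia

/-- A bound on the size of a decorated graph. -/
def SizeLE (N : ℕ) (G : DecoratedGraph) : Prop :=
  Nat.card G.Vert ≤ N ∧ Nat.card G.Leg ≤ N ∧ Nat.card G.Marker ≤ N ∧ G.totalDegree ≤ N

/-- The data of a decorated graph of size at most `N` on initial segments of `ℕ`. -/
abbrev Code (N : ℕ) := Σ n k l : Fin (N + 1),
  {m : Fin n → Fin n → Fin (N + 1) // (∀ x y, m x y = m y x) ∧ ∀ x, m x x = 0} ×
    (Fin k → Fin n) × (Fin k → Fin l → Prop)

/-- The decorated graph described by a code. -/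
def Code.toGraph {N : ℕ} (c : Code N) : DecoratedGraph where
  Vert := Fin c.1
  Leg := Fin c.2.1
  Marker := Fin c.2.2.1
  mult x y := c.2.2.2.1.1 x y
  foot := c.2.2.2.2.1
  inc := c.2.2.2.2.2
  mult_comm x y := by rw [c.2.2.2.1.2.1]
  mult_self x := by rw [c.2.2.2.1.2.2]; rfl

theorem SizeLE.exists_code {N : ℕ} (h : G.SizeLE N) :
    ∃ c : Code N, Nonempty (c.toGraph ⟶ G) := by
  obtain ⟨hv, hl, hm, hd⟩ := h
  let ev := Finite.equivFin G.Vert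
  let el := Finite.equivFin G.Leg
  let em := Finite.equivFin G.Marker
  exact ⟨⟨⟨_, Nat.lt_succ_of_le hv⟩, ⟨_, Nat.lt_succ_of_le hl⟩, ⟨_, Nat.lt_succ_of_le hm⟩,
    ⟨fun x y => ⟨G.mult (ev.symm x) (ev.symm y),
      Nat.lt_succ_of_le ((G.mult_le_totalDegree _ _).trans hd)⟩,
      fun x y => Fin.ext (G.mult_comm _ _), fun x => Fin.ext (G.mult_self _)⟩,
    fun o => ev (G.foot (el.symm o)), fun o δ => G.inc (el.symm o) (em.symm δ)⟩,
    ⟨⟨ev.symm, el.symm, em.symm, fun _ _ => rfl, fun o => (ev.symm_apply_apply _).symm,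
      fun _ _ => Iff.rfl⟩⟩⟩

theorem finiteUpToIso_sizeLE (N : ℕ) : FiniteUpToIso (SizeLE N) := by
  have : Finite (Code N) := inferInstance
  refine (Set.finite_range fun c : Code N => isoClass c.toGraph).subset fun c hc => ?_
  obtain ⟨code, ⟨f⟩⟩ := SizeLE.exists_code hc
  exact ⟨code, (isoClass_eq f).trans (isoClass_out c)⟩

theorem finiteUpToIso_of_genus {P : DecoratedGraph → Prop} {k : LegKind} {s b : ℕ} (hs : 2 ≤ s)
    (h : ∀ G, P G → HasLegKind G k ∧ HasGenus s b G ∧ Trivalent G) : FiniteUpToIso P := by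
  refine (finiteUpToIso_sizeLE (6 * b)).mono fun G hG => ?_
  obtain ⟨hk, hgenus, htri⟩ := h G hG
  have hvert := htri.card_vert_le hs hgenus
  have hmarker := hk.card_marker_le
  have := Nat.mul_le_mul_right (Nat.card G.Leg) hs
  unfold HasGenus at hgenus
  refine ⟨?_, ?_, ?_, ?_⟩ <;> lia

end DecoratedGraph

/-! ### Expansion -/

namespace DecoratedGraph

/-- The graphs with legs, the basis of a complex in which legs are expanded: connected, of first
Betti number `b` if every leg counts as `s` edge ends, and with at least one leg. -/
structure IsLegged (k : LegKind) (s b : ℕ) (G : DecoratedGraph) : Prop where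
  hasLegKind : HasLegKind G k
  hasGenus : HasGenus s b G
  nonempty_leg : Nonempty G.Leg
  connected : Connected G
  trivalent : Trivalent G
  noMarkerLoop : NoMarkerLoop G

theorem isoInvariant_isLegged (k : LegKind) (s b : ℕ) : IsoInvariant (IsLegged k s b) :=
  .of_imp fun _ _ f h =>
    { hasLegKind := (isoInvariant_hasLegKind k f).mp h.hasLegKind
      hasGenus := (isoInvariant_hasGenus s b f).mp h.hasGenus
      nonempty_leg := h.nonempty_leg.map f.leg
      connected := (isoInvariant_connected f).mp h.connected
      trivalent := (isoInvariant_trivalent f).mp h.trivalent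
      noMarkerLoop := (isoInvariant_noMarkerLoop f).mp h.noMarkerLoop }

/-- A vertex without edges and with exactly two legs. -/
def IsLegPair (G : DecoratedGraph) (x : G.Vert) : Prop := G.degree x = 0 ∧ G.legCount x = 2

/-- A vertex with one edge and one leg. -/
def IsThin (G : DecoratedGraph) (x : G.Vert) : Prop := G.degree x = 1 ∧ G.legCount x = 1

variable {G H : DecoratedGraph}

theorem isLegPair_map (f : G ⟶ H) {x : G.Vert} : H.IsLegPair (f.vert x) ↔ G.IsLegPair x := by
  rw [IsLegPair, IsLegPair, degree_map, legCount_map]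

theorem isThin_map (f : G ⟶ H) {x : G.Vert} : H.IsThin (f.vert x) ↔ G.IsThin x := by
  rw [IsThin, IsThin, degree_map, legCount_map]

theorem mult_eq_zero_of_degree_eq_zero {x : G.Vert} (h : G.degree x = 0) (y : G.Vert) :
    G.mult x y = 0 :=
  Nat.eq_zero_of_le_zero (h ▸ G.mult_le_degree x y)

theorem IsLegPair.existsUnique_leg_ne {o : G.Leg} (h : G.IsLegPair (G.foot o)) :
    ∃! o', o' ≠ o ∧ G.foot o' = G.foot o := by
  obtain ⟨⟨o', ho'⟩, hne, huniq⟩ := (Nat.card_eq_two_iff' ⟨o, rfl⟩).1 h.2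
  exact ⟨o', ⟨fun h => hne (Subtype.ext h), ho'⟩,
    fun o'' h => congrArg Subtype.val (huniq ⟨o'', h.2⟩ fun h' => h.1 (congrArg Subtype.val h'))⟩

theorem IsLegPair.exists_leg {x : G.Vert} (h : G.IsLegPair x) : ∃ o, G.foot o = x := by
  have : Nonempty {o // G.foot o = x} :=
    (Nat.card_pos_iff.1 (Nat.two_pos.trans_eq h.2.symm)).1
  exact this.elim fun o => ⟨o.1, o.2⟩

/-- The places where a graph can be expanded: splitting a vertex, or lengthening a leg. -/
def expansionSites : SlotFunctor DecoratedGraph where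
  slots G := G.Vert ⊕ G.Leg
  finite_slots _ := inferInstance
  map f := f.vert.sumCongr f.leg
  map_id _ s := by rcases s with s | s <;> rfl
  map_comp _ _ s := by rcases s with s | s <;> rfl

/-- A graph with a set of marked expansion sites. -/
abbrev Expandable := expansionSites.Marked

namespace Expandable

/-- The vertex `x` is to be split. -/
def IsSplit (p : Expandable) (x : p.obj.Vert) : Prop := Sum.inl x ∈ p.marks

/-- The leg `o` is to be lengthened by an edge. -/
def IsLengthened (p : Expandable) (o : p.obj.Leg) : Prop := Sum.inr o ∈ p.marks

/-- The leg `o` ends up on a vertex of its own in the expansion. -/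
def IsTip (p : Expandable) (o : p.obj.Leg) : Prop := p.IsLengthened o ∨ p.IsSplit (p.obj.foot o)

/-- Only vertices with two legs and no edges are split, and the legs at these vertices are not
lengthened. -/
structure IsAdmissible (p : Expandable) : Prop where
  isLegPair : ∀ x, p.IsSplit x → p.obj.IsLegPair x
  not_isLegPair : ∀ o, p.IsLengthened o → ¬ p.obj.IsLegPair (p.obj.foot o)

variable {p q : Expandable}

theorem isSplit_map (f : p ⟶ q) (x : p.obj.Vert) : q.IsSplit (f.hom.vert x) ↔ p.IsSplit x :=
  (f.mem_marks_iff (Sum.inl x)).symm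

theorem isLengthened_map (f : p ⟶ q) (o : p.obj.Leg) :
    q.IsLengthened (f.hom.leg o) ↔ p.IsLengthened o :=
  (f.mem_marks_iff (Sum.inr o)).symm

theorem isTip_map (f : p ⟶ q) (o : p.obj.Leg) : q.IsTip (f.hom.leg o) ↔ p.IsTip o := by
  rw [IsTip, IsTip, isLengthened_map, f.hom.foot_map, isSplit_map]

theorem isoInvariant_isAdmissible : IsoInvariant IsAdmissible := .of_imp fun p q f h => by
  refine ⟨fun x hx => ?_, fun o ho => ?_⟩
  · obtain ⟨x, rfl⟩ := f.hom.vert.surjective x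
    exact (isLegPair_map f.hom).2 (h.isLegPair x ((isSplit_map f x).1 hx))
  · obtain ⟨o, rfl⟩ := f.hom.leg.surjective o
    rw [f.hom.foot_map, isLegPair_map]
    exact h.not_isLegPair o ((isLengthened_map f o).1 ho)

/-- The vertices of the expansion: those that are not split, and one vertex for every tip. -/
abbrev ExpandVert (p : Expandable) := {x // ¬ p.IsSplit x} ⊕ {o // p.IsTip o}

open Classical in
/-- The edge multiplicities of the expansion: a tip is joined to the vertex of its leg if that
vertex is not split, and to the other tips at that vertex if it is. -/
noncomputable def expandMult (p : Expandable) : p.ExpandVert → p.ExpandVert → ℕ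
  | .inl x, .inl y => p.obj.mult x y
  | .inl x, .inr o => if p.obj.foot o = x then 1 else 0
  | .inr o, .inl x => if p.obj.foot o = x then 1 else 0
  | .inr o, .inr o' =>
    if o ≠ o' ∧ p.obj.foot o = p.obj.foot o' ∧ p.IsSplit (p.obj.foot o) then 1 else 0

theorem expandMult_inr_inl_pos_iff {p : Expandable} {o : {o // p.IsTip o}}
    {x : {x // ¬ p.IsSplit x}} :
    0 < p.expandMult (.inr o) (.inl x) ↔ p.obj.foot o = x := by
  rw [expandMult]
  split_ifs with h <;> simp [h]

theorem expandMult_inr_inr_pos_iff {p : Expandable} {o o' : {o // p.IsTip o}} :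
    0 < p.expandMult (.inr o) (.inr o') ↔
      o ≠ o' ∧ p.obj.foot o = p.obj.foot o' ∧ p.IsSplit (p.obj.foot o) := by
  rw [expandMult]
  split_ifs with h
  · exact iff_of_true one_pos h
  · exact iff_of_false (lt_irrefl 0) h

theorem expandMult_comm (p : Expandable) (a a' : p.ExpandVert) :
    p.expandMult a a' = p.expandMult a' a := by
  classical
  rcases a with x | o <;> rcases a' with y | o'
  · exact p.obj.mult_comm _ _
  · rfl
  · rfl
  · refine if_congr ?_ rfl rfl
    exact and_congr ne_comm (and_congr_right_iff.2 fun h => by rw [h] : _ ∧ _ ↔ _ ∧ _) |>.trans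
      (and_congr_right_iff.2 fun _ => and_congr_left_iff.2 fun _ => eq_comm)

open Classical in
/-- The vertices of the legs in the expansion. -/
noncomputable def expandFoot (p : Expandable) (o : p.obj.Leg) : p.ExpandVert :=
  if h : p.IsTip o then .inr ⟨o, h⟩ else .inl ⟨p.obj.foot o, fun h' => h (.inr h')⟩

/-- The graph obtained by lengthening the marked legs by an edge with a new vertex at its end, and
by replacing the marked vertices, with their two legs, by an edge with a leg at either end. -/
noncomputable abbrev expand (p : Expandable) : DecoratedGraph where
  Vert := p.ExpandVert
  Leg := p.obj.Leg
  Marker := p.obj.Marker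
  mult := p.expandMult
  foot := p.expandFoot
  inc := p.obj.inc
  mult_comm := p.expandMult_comm
  mult_self := by
    rintro (x | o)
    · exact p.obj.mult_self _
    · exact if_neg fun h => h.1 rfl

theorem expandFoot_of_isTip {o : p.obj.Leg} (h : p.IsTip o) :
    p.expandFoot o = .inr ⟨o, h⟩ := dif_pos h

theorem expandFoot_of_not_isTip {o : p.obj.Leg} (h : ¬ p.IsTip o) :
    p.expandFoot o = .inl ⟨p.obj.foot o, fun h' => h (.inr h')⟩ := dif_neg h

theorem expandFoot_eq_inr_iff {o : p.obj.Leg} {o' : {o // p.IsTip o}} :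
    p.expandFoot o = .inr o' ↔ o = o' := by
  by_cases h : p.IsTip o
  · rw [expandFoot_of_isTip h]
    exact Sum.inr_injective.eq_iff.trans Subtype.ext_iff
  · rw [expandFoot_of_not_isTip h]
    exact ⟨fun h => (Sum.inl_ne_inr h).elim, fun h' => (h (h' ▸ o'.2)).elim⟩

theorem expandFoot_eq_inl_iff {o : p.obj.Leg} {x : {x // ¬ p.IsSplit x}} :
    p.expandFoot o = .inl x ↔ ¬ p.IsTip o ∧ p.obj.foot o = x := by
  by_cases h : p.IsTip o
  · rw [expandFoot_of_isTip h]
    exact ⟨fun h => (Sum.inr_ne_inl h).elim, fun h' => (h'.1 h).elim⟩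
  · rw [expandFoot_of_not_isTip h]
    exact (Sum.inl_injective.eq_iff.trans Subtype.ext_iff).trans (and_iff_right h).symm

/-- The vertex of the original graph from which a vertex of the expansion arises. -/
def contract (p : Expandable) : p.expand.Vert → p.obj.Vert
  | .inl x => x
  | .inr o => p.obj.foot o

theorem contract_expandFoot (o : p.obj.Leg) : p.contract (p.expandFoot o) = p.obj.foot o := by
  by_cases h : p.IsTip o
  · rw [expandFoot_of_isTip h]; rfl
  · rw [expandFoot_of_not_isTip h]; rfl

theorem IsAdmissible.contract_surjective (h : p.IsAdmissible) :
    Function.Surjective p.contract := fun x => by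
  by_cases hx : p.IsSplit x
  · obtain ⟨o, rfl⟩ := (h.isLegPair x hx).exists_leg
    exact ⟨.inr ⟨o, .inr hx⟩, rfl⟩
  · exact ⟨.inl ⟨x, hx⟩, rfl⟩

/-- The isomorphism of expansions induced by an isomorphism. -/
def expandMap (f : p ⟶ q) : p.expand ⟶ q.expand where
  vert := (f.hom.vert.subtypeEquiv fun x => (not_congr (isSplit_map f x)).symm).sumCongr
    (f.hom.leg.subtypeEquiv fun o => (isTip_map f o).symm)
  leg := f.hom.leg
  marker := f.hom.marker
  mult_map := by
    classical
    have hfoot (o x) : q.obj.foot (f.hom.leg o) = f.hom.vert x ↔ p.obj.foot o = x := by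
      rw [f.hom.foot_map, f.hom.vert.injective.eq_iff]
    rintro (x | o) (y | o')
    · exact f.hom.mult_map _ _
    · exact if_congr (hfoot _ _) rfl rfl
    · exact if_congr (hfoot _ _) rfl rfl
    · refine if_congr (and_congr (Equiv.injective _).ne_iff (and_congr ?_ ?_)) rfl rfl
      · exact (f.hom.foot_map o'.1).symm ▸ hfoot _ _
      · exact (f.hom.foot_map o.1).symm ▸ isSplit_map f _
  foot_map o := by
    change q.expandFoot _ = Sum.map _ _ (p.expandFoot o)
    by_cases h : p.IsTip o
    · rw [expandFoot_of_isTip h]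
      exact expandFoot_of_isTip ((isTip_map f o).2 h)
    · rw [expandFoot_of_not_isTip h]
      exact (expandFoot_of_not_isTip (mt (isTip_map f o).1 h)).trans
        (congrArg Sum.inl (Subtype.ext (f.hom.foot_map o)))
  inc_map := f.hom.inc_map

theorem legCount_expand_inr (o : {o // p.IsTip o}) : p.expand.legCount (.inr o) = 1 := by
  change Nat.card {o' // p.expandFoot o' = .inr o} = 1
  simp only [expandFoot_eq_inr_iff]
  exact Nat.card_eq_one_iff_unique.2 ⟨⟨fun a b => Subtype.ext (a.2.trans b.2.symm)⟩, ⟨⟨o, rfl⟩⟩⟩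

theorem degree_expand_inr (h : p.IsAdmissible) (o : {o // p.IsTip o}) :
    p.expand.degree (.inr o) = 1 := by
  classical
  unfold degree
  by_cases hs : p.IsSplit (p.obj.foot o)
  · obtain ⟨o', ⟨hne, ho'⟩, huniq⟩ := (h.isLegPair _ hs).existsUnique_leg_ne
    have htip : p.IsTip o' := .inr (ho' ▸ hs)
    refine (finsum_eq_single _ (Sum.inr ⟨o', htip⟩) ?_).trans (if_pos ⟨?_, ho'.symm, hs⟩)
    · rintro (x | o'') ha
      · exact if_neg fun (hx : p.obj.foot o = x) => x.2 (hx ▸ hs)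
      · refine if_neg fun ⟨hne', ho'', _⟩ => ha (congrArg Sum.inr (Subtype.ext ?_))
        exact huniq _ ⟨fun h => hne' (Subtype.ext h.symm), ho''.symm⟩
    · exact fun h => hne (congrArg Subtype.val h).symm
  · refine (finsum_eq_single _ (Sum.inl ⟨p.obj.foot o, hs⟩) ?_).trans ?_
    · rintro (x | o') ha
      · exact if_neg fun hx => ha (congrArg Sum.inl (Subtype.ext hx.symm))
      · exact if_neg fun h => hs h.2.2
    · exact if_pos rfl

theorem isThin_expand_inr (h : p.IsAdmissible) (o : {o // p.IsTip o}) :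
    p.expand.IsThin (.inr o) :=
  ⟨degree_expand_inr h o, legCount_expand_inr o⟩

theorem degree_expand_inl (h : ∀ x, p.IsSplit x → p.obj.degree x = 0) (x : {x // ¬ p.IsSplit x}) :
    p.expand.degree (.inl x) =
      p.obj.degree x + Nat.card {o // p.IsTip o ∧ p.obj.foot o = x} := by
  classical
  have := Fintype.ofFinite p.obj.Vert
  have := Fintype.ofFinite p.obj.Leg
  have hvert : ∑ y : {y // ¬ p.IsSplit y}, p.obj.mult x y = ∑ y, p.obj.mult x y := by
    refine Finset.sum_of_injOn Subtype.val Subtype.val_injective.injOn (by simp) ?_ fun _ _ => rfl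
    intro y _ hy
    have hsplit : p.IsSplit y := by_contra fun h => hy ⟨⟨y, h⟩, by simp, rfl⟩
    rw [p.obj.mult_comm, mult_eq_zero_of_degree_eq_zero (h y hsplit)]
  have hleg : ∑ o : {o // p.IsTip o}, (if p.obj.foot o = x then 1 else 0) =
      Nat.card {o // p.IsTip o ∧ p.obj.foot o = x} := by
    rw [Finset.sum_boole, Nat.cast_id, ← Fintype.card_subtype, ← Nat.card_eq_fintype_card]
    exact Nat.card_congr
      (Equiv.subtypeSubtypeEquivSubtypeInter p.IsTip fun o => p.obj.foot o = x)
  unfold degree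
  rw [finsum_eq_sum_of_fintype, finsum_eq_sum_of_fintype, ← hvert, ← hleg]
  exact Fintype.sum_sum_type _

theorem legCount_expand_inl (x : {x // ¬ p.IsSplit x}) :
    p.expand.legCount (.inl x) = Nat.card {o // ¬ p.IsTip o ∧ p.obj.foot o = x} := by
  change Nat.card {o // p.expandFoot o = .inl x} = _
  simp only [expandFoot_eq_inl_iff]

theorem degree_add_legCount_expand_inl (h : ∀ x, p.IsSplit x → p.obj.degree x = 0)
    (x : {x // ¬ p.IsSplit x}) :
    p.expand.degree (.inl x) + p.expand.legCount (.inl x) =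
      p.obj.degree x + p.obj.legCount x := by
  classical
  have hcard := Nat.card_congr (Equiv.sumCompl fun o : {o // p.obj.foot o = x} => p.IsTip o)
  rw [Nat.card_sum,
    Nat.card_congr (Equiv.subtypeSubtypeEquivSubtypeInter (fun o => p.obj.foot o = x) p.IsTip),
    Nat.card_congr
      (Equiv.subtypeSubtypeEquivSubtypeInter (fun o => p.obj.foot o = x) (¬ p.IsTip ·))] at hcard
  rw [degree_expand_inl h, legCount_expand_inl, add_assoc, legCount, ← hcard]
  simp only [and_comm]

end Expandable

end DecoratedGraph

namespace DecoratedGraph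

variable {G : DecoratedGraph}

theorem existsUnique_mult_pos_of_degree_eq_one {x : G.Vert} (h : G.degree x = 1) :
    ∃! y, 0 < G.mult x y := by
  classical
  have := Fintype.ofFinite G.Vert
  rw [degree, finsum_eq_sum_of_fintype] at h
  obtain ⟨y, -, hy⟩ := Finset.exists_ne_zero_of_sum_ne_zero (h ▸ one_ne_zero)
  refine ⟨y, Nat.pos_of_ne_zero hy, fun z hz => by_contra fun hne => ?_⟩
  have := Finset.add_le_sum (fun _ _ => Nat.zero_le _) (Finset.mem_univ y) (Finset.mem_univ z)
    (Ne.symm hne) (f := G.mult x)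
  lia

theorem finsum_degree_add_legCount (G : DecoratedGraph) :
    ∑ᶠ x, (G.degree x + G.legCount x) = G.totalDegree + Nat.card G.Leg := by
  rw [finsum_add_distrib (Set.toFinite _) (Set.toFinite _), finsum_legCount, totalDegree]

theorem card_sum_card_compl {α : Type*} [Finite α] (p : α → Prop) :
    Nat.card {a // p a} + Nat.card {a // ¬ p a} = Nat.card α := by
  classical
  rw [← Nat.card_sum, Nat.card_congr (Equiv.sumCompl p)]

namespace Expandable

variable {p q : Expandable}

theorem IsAdmissible.not_isSplit_foot (h : p.IsAdmissible) {o : p.obj.Leg} (ho : p.IsLengthened o) :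
    ¬ p.IsSplit (p.obj.foot o) :=
  fun hs => h.not_isLegPair o ho (h.isLegPair _ hs)

theorem ncard_marks (p : Expandable) :
    p.marks.ncard = Nat.card {x // p.IsSplit x} + Nat.card {o // p.IsLengthened o} := by
  rw [← Nat.card_coe_set_eq, ← Nat.card_sum]
  exact Nat.card_congr Equiv.subtypeSum

theorem IsAdmissible.card_isTip (h : p.IsAdmissible) :
    Nat.card {o // p.IsTip o} =
      Nat.card {o // p.IsLengthened o} + 2 * Nat.card {x // p.IsSplit x} := by
  classical
  have := Fintype.ofFinite {x // p.IsSplit x}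
  have hsplit : Nat.card {o // p.IsSplit (p.obj.foot o)} = 2 * Nat.card {x // p.IsSplit x} := by
    have hfiber (x : {x // p.IsSplit x}) : Nat.card {o // p.obj.foot o = x} = 2 :=
      (h.isLegPair x x.2).2
    rw [← Nat.card_congr (Equiv.sigmaSubtypeFiberEquivSubtype p.obj.foot
      (q := p.IsSplit) fun _ => Iff.rfl), Nat.card_sigma]
    simp [hfiber, mul_comm]
  have hdisj : Disjoint p.IsLengthened fun o : p.obj.Leg => p.IsSplit (p.obj.foot o) :=
    Pi.disjoint_iff.2 fun _ => Prop.disjoint_iff.2 (not_and.2 h.not_isSplit_foot)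
  rw [← hsplit, ← Nat.card_sum, Nat.card_congr (subtypeOrEquiv _ _ hdisj).symm]
  rfl

theorem IsAdmissible.card_expandVert (h : p.IsAdmissible) :
    Nat.card p.ExpandVert = Nat.card p.obj.Vert + p.marks.ncard := by
  rw [Nat.card_sum, h.card_isTip, ncard_marks, ← card_sum_card_compl p.IsSplit]
  lia

theorem IsAdmissible.totalDegree_expand (h : p.IsAdmissible) :
    p.expand.totalDegree = p.obj.totalDegree + 2 * p.marks.ncard := by
  classical
  have := Fintype.ofFinite p.obj.Vert
  have := Fintype.ofFinite p.obj.Leg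
  have hdeg : ∀ x, p.IsSplit x → p.obj.degree x = 0 := fun x hx => (h.isLegPair x hx).1
  have hinl : ∑ x : {x // ¬ p.IsSplit x}, (p.expand.degree (.inl x) + p.expand.legCount (.inl x)) =
      ∑ x : {x // ¬ p.IsSplit x}, (p.obj.degree x + p.obj.legCount x) :=
    Finset.sum_congr rfl fun x _ => degree_add_legCount_expand_inl hdeg x
  have hinr : ∑ o : {o // p.IsTip o}, (p.expand.degree (.inr o) + p.expand.legCount (.inr o)) =
      ∑ _o : {o // p.IsTip o}, 2 :=
    Finset.sum_congr rfl fun o _ => by rw [degree_expand_inr h, legCount_expand_inr]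
  have hsplit : ∑ x : {x // p.IsSplit x}, (p.obj.degree x + p.obj.legCount x) =
      ∑ _x : {x // p.IsSplit x}, 2 :=
    Finset.sum_congr rfl fun x _ => by rw [(h.isLegPair x x.2).1, (h.isLegPair x x.2).2]
  have hobj : ∑ x, (p.obj.degree x + p.obj.legCount x) = _ :=
    (finsum_eq_sum_of_fintype _).symm.trans p.obj.finsum_degree_add_legCount
  have hexpand : ∑ a : p.ExpandVert, (p.expand.degree a + p.expand.legCount a) = _ :=
    (finsum_eq_sum_of_fintype _).symm.trans p.expand.finsum_degree_add_legCount
  rw [← Fintype.sum_subtype_add_sum_subtype p.IsSplit, hsplit] at hobj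
  rw [Fintype.sum_sum_type, hinl, hinr] at hexpand
  simp only [Finset.sum_const, Finset.card_univ, ← Nat.card_eq_fintype_card, smul_eq_mul,
    h.card_isTip] at hobj hexpand
  rw [ncard_marks]
  omega

theorem IsAdmissible.grade_expand (h : p.IsAdmissible) :
    p.expand.grade = SlotFunctor.Marked.degree grade p := by
  change Nat.card p.ExpandVert + _ = Nat.card _ + _ + _
  rw [h.card_expandVert, add_right_comm]

theorem IsAdmissible.hasGenus_expand (h : p.IsAdmissible) {s b : ℕ} :
    p.expand.HasGenus s b ↔ p.obj.HasGenus s b := by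
  change _ + s * Nat.card p.obj.Leg = 2 * (Nat.card p.ExpandVert + b) ↔
    _ + s * Nat.card p.obj.Leg = _
  rw [h.totalDegree_expand, h.card_expandVert]
  omega

theorem noMarkerLoop_expand : p.expand.NoMarkerLoop ↔
    ∀ o o' δ, o ≠ o' → p.obj.inc o δ → p.obj.inc o' δ → p.obj.foot o = p.obj.foot o' →
      p.IsTip o ∨ p.IsTip o' := by
  refine forall₄_congr fun o o' δ hne => forall₂_congr fun _ _ => ?_
  change p.expandFoot o ≠ p.expandFoot o' ↔ _
  by_cases ho : p.IsTip o
  · rw [expandFoot_of_isTip ho, ne_comm, Ne, expandFoot_eq_inr_iff]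
    simp [ho, hne.symm]
  · rw [expandFoot_of_not_isTip ho, ne_comm, Ne, expandFoot_eq_inl_iff]
    simp only [ho, false_or, eq_comm]
    exact not_and'.trans (imp_congr_right fun _ => not_not)

theorem of_contract_eq {P : p.expand.Vert → Prop}
    (hP : ∀ a b, 0 < p.expand.mult a b → p.contract a = p.contract b → P a → P b)
    {a b : p.expand.Vert} (hab : p.contract a = p.contract b) (ha : P a) : P b := by
  have hinr {o o' : {o // p.IsTip o}} (h : p.obj.foot o = p.obj.foot o') (ho : P (.inr o)) :
      P (.inr o') := by
    by_cases hs : p.IsSplit (p.obj.foot o)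
    · rcases eq_or_ne o o' with rfl | hne
      · exact ho
      · exact hP (.inr o) _ (expandMult_inr_inr_pos_iff.2 ⟨hne, h, hs⟩) h ho
    · have hx : P (.inl ⟨_, hs⟩) :=
        hP (.inr o) _ (expandMult_inr_inl_pos_iff.2 rfl) rfl ho
      exact hP (.inl ⟨_, hs⟩) (.inr o')
        (mult_pos_symm (G := p.expand) (expandMult_inr_inl_pos_iff.2 h.symm)) h hx
  rcases a with x | o <;> rcases b with y | o'
  · exact Subtype.ext hab ▸ ha
  · exact hP _ _ (mult_pos_symm (G := p.expand) (expandMult_inr_inl_pos_iff.2 hab.symm)) hab ha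
  · exact hP _ _ (expandMult_inr_inl_pos_iff.2 hab) hab ha
  · exact hinr hab ha

theorem contract_mult_pos_or_eq {a b : p.expand.Vert} (h : 0 < p.expand.mult a b) :
    0 < p.obj.mult (p.contract a) (p.contract b) ∨ p.contract a = p.contract b := by
  rcases a with x | o <;> rcases b with y | o'
  · exact .inl h
  · exact .inr (expandMult_inr_inl_pos_iff.1 (mult_pos_symm (G := p.expand) h)).symm
  · exact .inr (expandMult_inr_inl_pos_iff.1 h)
  · exact .inr (expandMult_inr_inr_pos_iff.1 h).2.1

theorem IsAdmissible.not_isSplit_of_mult_pos (h : p.IsAdmissible) {x y : p.obj.Vert}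
    (hxy : 0 < p.obj.mult x y) : ¬ p.IsSplit x :=
  fun hx => hxy.ne' (mult_eq_zero_of_degree_eq_zero (h.isLegPair x hx).1 y)

theorem IsAdmissible.connected_expand (h : p.IsAdmissible) :
    p.expand.Connected ↔ p.obj.Connected := by
  constructor <;> intro hconn P hedge hmarker
  · intro x y
    obtain ⟨a, rfl⟩ := h.contract_surjective x
    obtain ⟨b, rfl⟩ := h.contract_surjective y
    refine hconn (fun a => P (p.contract a)) (fun a b hab ha => ?_) (fun o o' δ ho ho' => ?_) a b
    · exact (contract_mult_pos_or_eq hab).elim (hedge _ _ · ha) (· ▸ ha)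
    · rw [contract_expandFoot, contract_expandFoot]
      exact hmarker o o' δ ho ho'
  · have hfiber (a b) (hab : 0 < p.expand.mult a b) (_ : p.contract a = p.contract b) :=
      hedge a b hab
    intro a b ha
    suffices ∃ b', p.contract b' = p.contract b ∧ P b' from
      this.elim fun b' hb' => of_contract_eq hfiber hb'.1 hb'.2
    refine hconn (fun x => ∃ a, p.contract a = x ∧ P a) ?_ ?_ _ _ ⟨a, rfl, ha⟩
    · rintro x y hxy ⟨a, hax, ha⟩
      let x' : p.expand.Vert := .inl ⟨x, h.not_isSplit_of_mult_pos hxy⟩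
      let y' : p.expand.Vert := .inl ⟨y, h.not_isSplit_of_mult_pos (mult_pos_symm hxy)⟩
      exact ⟨y', rfl, hedge x' y' hxy (of_contract_eq (b := x') hfiber hax ha)⟩
    · rintro o o' δ ho ho' ⟨a, ha, hPa⟩
      exact ⟨_, contract_expandFoot o', hmarker o o' δ ho ho'
        (of_contract_eq hfiber (ha.trans (contract_expandFoot o).symm) hPa)⟩

/-- The marked graphs whose expansion is a graph with legs in which no vertex outside the expanded
places has one edge and one leg. -/
structure IsReduced (k : LegKind) (s b : ℕ) (p : Expandable) : Prop where
  isAdmissible : p.IsAdmissible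
  hasLegKind : HasLegKind p.obj k
  hasGenus : HasGenus s b p.obj
  nonempty_leg : Nonempty p.obj.Leg
  connected : Connected p.obj
  valence : ∀ x, 3 ≤ p.obj.degree x + p.obj.legCount x ∨ p.obj.IsLegPair x
  isTip_or_isTip : ∀ o o' δ, o ≠ o' → p.obj.inc o δ → p.obj.inc o' δ →
    p.obj.foot o = p.obj.foot o' → p.IsTip o ∨ p.IsTip o'

theorem IsAdmissible.degree_expand_inl_of_isLegPair (h : p.IsAdmissible)
    {x : {x // ¬ p.IsSplit x}} (hx : p.obj.IsLegPair x) : p.expand.degree (.inl x) = 0 := by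
  rw [degree_expand_inl fun x hx => (h.isLegPair x hx).1, hx.1, zero_add]
  refine (Nat.card_eq_zero.2 (.inl ⟨fun o => ?_⟩))
  obtain ⟨o, ho, hox⟩ := o
  exact ho.elim (fun ho => h.not_isLegPair o ho (hox ▸ hx)) (fun ho => x.2 (hox ▸ ho))

variable {k : LegKind} {s b : ℕ}

theorem isoInvariant_isReduced : IsoInvariant (IsReduced k s b) := .of_imp fun p q f h => by
  refine ⟨(isoInvariant_isAdmissible f).mp h.isAdmissible,
    (isoInvariant_hasLegKind k f.hom).mp h.hasLegKind,
    (isoInvariant_hasGenus s b f.hom).mp h.hasGenus, h.nonempty_leg.map f.hom.leg,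
    (isoInvariant_connected f.hom).mp h.connected, fun x => ?_, fun o o' δ hne ho ho' hfoot => ?_⟩
  · obtain ⟨x, rfl⟩ := f.hom.vert.surjective x
    rw [degree_map, legCount_map, isLegPair_map]
    exact h.valence x
  · obtain ⟨o, rfl⟩ := f.hom.leg.surjective o
    obtain ⟨o', rfl⟩ := f.hom.leg.surjective o'
    obtain ⟨δ, rfl⟩ := f.hom.marker.surjective δ
    rw [f.hom.foot_map, f.hom.foot_map] at hfoot
    rw [isTip_map, isTip_map]
    exact h.isTip_or_isTip o o' δ (ne_of_apply_ne _ hne) ((f.hom.inc_map _ _).1 ho)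
      ((f.hom.inc_map _ _).1 ho') (f.hom.vert.injective hfoot)

theorem IsReduced.not_isThin_inl (h : p.IsReduced k s b) (x : {x // ¬ p.IsSplit x}) :
    ¬ p.expand.IsThin (.inl x) := fun hx => by
  have hsum := degree_add_legCount_expand_inl (fun x hx => (h.isAdmissible.isLegPair x hx).1) x
  rw [hx.1, hx.2] at hsum
  rcases h.valence x with hval | hpair
  · omega
  · exact zero_ne_one ((h.isAdmissible.degree_expand_inl_of_isLegPair hpair).symm.trans hx.1)

theorem IsReduced.trivalent_expand (h : p.IsReduced k s b) : p.expand.Trivalent := by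
  rintro (x | o)
  · have hsum := degree_add_legCount_expand_inl (fun x hx => (h.isAdmissible.isLegPair x hx).1) x
    rcases h.valence x with hval | hpair
    · omega
    · rw [h.isAdmissible.degree_expand_inl_of_isLegPair hpair, hpair.1, hpair.2] at hsum
      omega
  · rw [degree_expand_inr h.isAdmissible, legCount_expand_inr]

theorem IsReduced.isLegged_expand (h : p.IsReduced k s b) : p.expand.IsLegged k s b where
  hasLegKind := by
    have := h.hasLegKind
    cases k <;> exact this
  hasGenus := h.isAdmissible.hasGenus_expand.2 h.hasGenus
  nonempty_leg := h.nonempty_leg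
  connected := h.isAdmissible.connected_expand.2 h.connected
  trivalent := h.trivalent_expand
  noMarkerLoop := noMarkerLoop_expand.2 h.isTip_or_isTip

theorem IsAdmissible.isReduced (h : p.IsAdmissible) (hp : p.expand.IsLegged k s b)
    (hthin : ∀ x, ¬ p.expand.IsThin (.inl x)) : p.IsReduced k s b where
  isAdmissible := h
  hasLegKind := by
    have := hp.hasLegKind
    cases k <;> exact this
  hasGenus := h.hasGenus_expand.1 hp.hasGenus
  nonempty_leg := hp.nonempty_leg
  connected := h.connected_expand.1 hp.connected
  isTip_or_isTip := noMarkerLoop_expand.1 hp.noMarkerLoop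
  valence x := by
    by_cases hx : p.IsSplit x
    · exact .inr (h.isLegPair x hx)
    · have hdeg := fun x hx => (h.isLegPair x hx).1
      have htri := hp.trivalent (.inl ⟨x, hx⟩)
      have hsum := degree_add_legCount_expand_inl hdeg ⟨x, hx⟩
      have hle := degree_expand_inl hdeg ⟨x, hx⟩
      have hnot := not_and.1 (hthin ⟨x, hx⟩)
      unfold IsLegPair
      dsimp only at hsum hle
      omega

end Expandable

end DecoratedGraph

/-! ### The sign of an expansion -/

namespace DecoratedGraph

namespace Expandable

variable {p q : Expandable}

theorem IsAdmissible.existsUnique_odd_expandMult_inr (h : p.IsAdmissible)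
    (o : {o // p.IsTip o}) : ∃! a, Odd (p.expandMult (.inr o) a) := by
  have hodd (a) : Odd (p.expandMult (.inr o) a) ↔ 0 < p.expandMult (.inr o) a := by
    refine ⟨Odd.pos, fun hpos => Nat.odd_iff.2 ?_⟩
    have := (p.expand.mult_le_degree (.inr o) a).trans_eq (degree_expand_inr h o)
    change p.expandMult _ _ ≤ 1 at this
    omega
  simp only [hodd]
  exact existsUnique_mult_pos_of_degree_eq_one (degree_expand_inr h o)

theorem odd_expandMult_inl_inr_iff {x : {x // ¬ p.IsSplit x}} {o : {o // p.IsTip o}} :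
    Odd (p.expandMult (.inl x) (.inr o)) ↔ p.obj.foot o = x := by
  rw [expandMult]
  split_ifs with h <;> simp [h]

/-- The odd pairs of the expansion: those of the graph, one beginning at every tip, and one ending
at every lengthened leg. -/
def expandOddPair (p : Expandable) : p.expand.OddPair →
    p.obj.OddPair ⊕ {o // p.IsTip o} ⊕ {o // p.IsLengthened o}
  | ⟨(.inl x, .inl y), h⟩ => .inl ⟨(x, y), h⟩
  | ⟨(.inl x, .inr o), h⟩ => .inr <| .inr
    ⟨o, o.2.resolve_right fun ho => x.2 (odd_expandMult_inl_inr_iff.1 h ▸ ho)⟩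
  | ⟨(.inr o, _), _⟩ => .inr (.inl o)

theorem IsAdmissible.bijective_expandOddPair (h : p.IsAdmissible) :
    Function.Bijective p.expandOddPair := by
  constructor
  · rintro ⟨⟨x | o, a | a⟩, ha⟩ ⟨⟨x' | o', a' | a'⟩, ha'⟩ heq
    all_goals simp only [expandOddPair, reduceCtorEq, Sum.inl.injEq, Sum.inr.injEq] at heq
    · simpa [Subtype.ext_iff] using heq
    · obtain rfl : a = a' := Subtype.ext (congrArg (fun o => o.1) heq)
      obtain rfl : x = x' := Subtype.ext ((odd_expandMult_inl_inr_iff.1 ha).symm.trans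
        (odd_expandMult_inl_inr_iff.1 ha'))
      rfl
    all_goals
      subst heq
      exact Subtype.ext (congrArg (Prod.mk (Sum.inr o : p.ExpandVert))
        ((h.existsUnique_odd_expandMult_inr o).unique (y₁ := _) (y₂ := _) ha ha'))
  · rintro (⟨⟨x, y⟩, hxy⟩ | o | o)
    · have hx : ¬ p.IsSplit x := h.not_isSplit_of_mult_pos hxy.pos
      have hy : ¬ p.IsSplit y := h.not_isSplit_of_mult_pos (mult_pos_symm hxy.pos)
      exact ⟨⟨(.inl ⟨x, hx⟩, .inl ⟨y, hy⟩), hxy⟩, rfl⟩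
    · obtain ⟨a, ha, -⟩ := h.existsUnique_odd_expandMult_inr o
      exact ⟨⟨(.inr o, a), ha⟩, rfl⟩
    · exact ⟨⟨(.inl ⟨_, h.not_isSplit_foot o.2⟩, .inr ⟨o, .inl o.2⟩),
        odd_expandMult_inl_inr_iff.2 rfl⟩, rfl⟩

/-- The action of an automorphism on the split vertices. -/
def splitPerm (f : p ⟶ p) : Equiv.Perm {x // p.IsSplit x} :=
  f.hom.vert.subtypeEquiv fun x => (isSplit_map f x).symm

/-- The action of an automorphism on the vertices that are not split. -/
def unsplitPerm (f : p ⟶ p) : Equiv.Perm {x // ¬ p.IsSplit x} :=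
  f.hom.vert.subtypeEquiv fun x => (not_congr (isSplit_map f x)).symm

/-- The action of an automorphism on the tips of the legs. -/
def tipPerm (f : p ⟶ p) : Equiv.Perm {o // p.IsTip o} :=
  f.hom.leg.subtypeEquiv fun o => (isTip_map f o).symm

/-- The action of an automorphism on the lengthened legs. -/
def lengthenedPerm (f : p ⟶ p) : Equiv.Perm {o // p.IsLengthened o} :=
  f.hom.leg.subtypeEquiv fun o => (isLengthened_map f o).symm

theorem IsAdmissible.permSign_oddPair_expandMap (h : p.IsAdmissible) (f : p ⟶ p) :
    permSign (expandMap f).oddPair =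
      permSign f.hom.oddPair * (permSign (tipPerm f) * permSign (lengthenedPerm f)) := by
  rw [← permSign_sumCongr, ← permSign_sumCongr]
  refine permSign_congr (Equiv.ofBijective _ h.bijective_expandOddPair) _ _ ?_
  rintro ⟨⟨x | o, y | o'⟩, ha⟩ <;> rfl

theorem permSign_marksEquiv (f : p ⟶ p) :
    permSign f.marksEquiv = permSign (splitPerm f) * permSign (lengthenedPerm f) := by
  let e : p.marks ≃ {x // p.IsSplit x} ⊕ {o // p.IsLengthened o} := Equiv.subtypeSum
  rw [← permSign_sumCongr]
  refine permSign_congr e _ _ ?_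
  rintro ⟨x | o, hs⟩ <;> rfl

theorem permSign_vert (f : p ⟶ p) :
    permSign f.hom.vert = permSign (splitPerm f) * permSign (unsplitPerm f) :=
  (permSign_subtypePerm_mul_compl f.hom.vert p.IsSplit (isSplit_map f)).symm

theorem permSign_vert_expandMap (f : p ⟶ p) :
    permSign (expandMap f).vert = permSign (unsplitPerm f) * permSign (tipPerm f) :=
  permSign_sumCongr (unsplitPerm f) (tipPerm f)

theorem IsAdmissible.sign_expandMap (h : p.IsAdmissible) (f : p ⟶ p) :
    sign (expandMap f) = sign f := by
  rw [DecoratedGraph.sign_eq, h.permSign_oddPair_expandMap, permSign_vert_expandMap,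
    SlotFunctor.Marked.sign_eq, DecoratedGraph.sign_eq, permSign_marksEquiv, permSign_vert]
  change _ * permSign f.hom.marker = _
  calc
    _ = permSign (unsplitPerm f) * permSign f.hom.oddPair * permSign f.hom.marker *
        permSign (lengthenedPerm f) * (permSign (tipPerm f) * permSign (tipPerm f)) := by
      ac_rfl
    _ = permSign (unsplitPerm f) * permSign f.hom.oddPair * permSign f.hom.marker *
        permSign (lengthenedPerm f) * (permSign (splitPerm f) * permSign (splitPerm f)) := by
      rw [Int.units_mul_self, Int.units_mul_self]
    _ = _ := by ac_rfl

end Expandable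

end DecoratedGraph

/-! ### Morphisms between expansions -/

namespace DecoratedGraph

variable {G H : DecoratedGraph}

/-- A thin vertex next to a vertex that is thin as well. -/
def IsThinEdgeEnd (G : DecoratedGraph) (x : G.Vert) : Prop :=
  G.IsThin x ∧ ∃ y, 0 < G.mult x y ∧ G.IsThin y

theorem isThinEdgeEnd_map (f : G ⟶ H) {x : G.Vert} :
    H.IsThinEdgeEnd (f.vert x) ↔ G.IsThinEdgeEnd x :=
  and_congr (isThin_map f) (f.vert.exists_congr fun y => by
    rw [f.mult_map, isThin_map]).symm

namespace Expandable

variable {p q : Expandable} {k : LegKind} {s b : ℕ}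

theorem IsReduced.isThin_iff (h : p.IsReduced k s b) {a : p.expand.Vert} :
    p.expand.IsThin a ↔ a.isRight := by
  rcases a with x | o
  · exact iff_of_false (h.not_isThin_inl x) Bool.false_ne_true
  · exact iff_of_true (isThin_expand_inr h.isAdmissible o) rfl

theorem IsReduced.contract_eq_iff_of_mult_pos (h : p.IsReduced k s b) {a a' : p.expand.Vert}
    (ha : 0 < p.expand.mult a a') :
    p.contract a = p.contract a' ↔ p.expand.IsThin a ∨ p.expand.IsThin a' := by
  rw [h.isThin_iff, h.isThin_iff]
  rcases a with x | o <;> rcases a' with x' | o'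
  · refine iff_of_false (fun heq => ?_) (by simp)
    obtain rfl : x = x' := Subtype.ext heq
    exact ha.ne' (p.obj.mult_self x)
  · exact iff_of_true
      (expandMult_inr_inl_pos_iff.1 (mult_pos_symm (G := p.expand) ha)).symm (by simp)
  · exact iff_of_true (expandMult_inr_inl_pos_iff.1 ha) (by simp)
  · exact iff_of_true (expandMult_inr_inr_pos_iff.1 ha).2.1 (by simp)

theorem IsReduced.isSplit_contract_iff (h : p.IsReduced k s b) {a : p.expand.Vert} :
    p.IsSplit (p.contract a) ↔ p.expand.IsThinEdgeEnd a := by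
  simp only [IsThinEdgeEnd, h.isThin_iff]
  rcases a with x | o
  · exact iff_of_false x.2 (by simp)
  · refine ⟨fun hs => ⟨rfl, ?_⟩, ?_⟩
    · obtain ⟨o', ⟨hne, ho'⟩, -⟩ := (h.isAdmissible.isLegPair _ hs).existsUnique_leg_ne
      refine ⟨.inr ⟨o', .inr (ho' ▸ hs)⟩, expandMult_inr_inr_pos_iff.2 ⟨?_, ho'.symm, hs⟩, rfl⟩
      exact fun heq => hne (congrArg Subtype.val heq).symm
    · rintro ⟨-, x | o', hpos, ha⟩
      · exact (Bool.false_ne_true ha).elim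
      · exact (expandMult_inr_inr_pos_iff.1 hpos).2.2

theorem IsReduced.isTip_iff (h : p.IsReduced k s b) {o : p.obj.Leg} :
    p.IsTip o ↔ p.expand.IsThin (p.expandFoot o) := by
  rw [h.isThin_iff]
  by_cases ho : p.IsTip o
  · simp [expandFoot_of_isTip ho, ho]
  · simp [expandFoot_of_not_isTip ho, ho]

theorem IsAdmissible.isLengthened_iff (h : p.IsAdmissible) {o : p.obj.Leg} :
    p.IsLengthened o ↔ p.IsTip o ∧ ¬ p.IsSplit (p.obj.foot o) :=
  ⟨fun ho => ⟨.inl ho, h.not_isSplit_foot ho⟩, fun ho => ho.1.resolve_right ho.2⟩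

theorem contract_map_eq (hp : p.IsReduced k s b) (hq : q.IsReduced k s b)
    (g : p.expand ⟶ q.expand) {a a' : p.expand.Vert} (h : p.contract a = p.contract a') :
    q.contract (g.vert a) = q.contract (g.vert a') := by
  refine of_contract_eq (P := fun a' => q.contract (g.vert a) = q.contract (g.vert a')) ?_ h rfl
  intro a₁ a₂ hmult hcontract ha₁
  refine ha₁.trans ((hq.contract_eq_iff_of_mult_pos ((g.mult_map a₁ a₂).symm ▸ hmult)).2 ?_)
  rw [isThin_map, isThin_map]
  exact (hp.contract_eq_iff_of_mult_pos hmult).1 hcontract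

theorem contract_map_eq_iff (hp : p.IsReduced k s b) (hq : q.IsReduced k s b)
    (g : p.expand ⟶ q.expand) {a a' : p.expand.Vert} :
    p.contract a = p.contract a' ↔ q.contract (g.vert a) = q.contract (g.vert a') := by
  refine ⟨contract_map_eq hp hq g, fun h => ?_⟩
  have := contract_map_eq hq hp (Groupoid.inv g) h
  change p.contract (g.vert.symm _) = p.contract (g.vert.symm _) at this
  rwa [g.vert.symm_apply_apply, g.vert.symm_apply_apply] at this

theorem exists_map_inl_eq (hp : p.IsReduced k s b) (hq : q.IsReduced k s b)
    (g : p.expand ⟶ q.expand) (x : {x // ¬ p.IsSplit x}) : ∃ y, g.vert (.inl x) = .inl y := by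
  have hthin : ¬ q.expand.IsThin (g.vert (.inl x)) := (isThin_map g).not.2 (hp.not_isThin_inl x)
  rw [hq.isThin_iff, Bool.not_eq_true, Sum.isRight_eq_false, Sum.isLeft_iff] at hthin
  exact hthin

theorem isTip_leg_iff (hp : p.IsReduced k s b) (hq : q.IsReduced k s b) (g : p.expand ⟶ q.expand)
    (o : p.obj.Leg) : q.IsTip (g.leg o) ↔ p.IsTip o := by
  have hfoot : q.expandFoot (g.leg o) = g.vert (p.expandFoot o) := g.foot_map o
  rw [hq.isTip_iff, hp.isTip_iff, hfoot, isThin_map]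

theorem map_inr_eq (hp : p.IsReduced k s b) (hq : q.IsReduced k s b) (g : p.expand ⟶ q.expand)
    (o : {o // p.IsTip o}) : g.vert (.inr o) = .inr ⟨g.leg o, (isTip_leg_iff hp hq g o).2 o.2⟩ := by
  rw [← expandFoot_of_isTip o.2, ← expandFoot_of_isTip]
  exact (g.foot_map o.1).symm

theorem IsAdmissible.mult_eq_zero_of_isSplit (h : p.IsAdmissible) {x y : p.obj.Vert}
    (hxy : p.IsSplit x ∨ p.IsSplit y) : p.obj.mult x y = 0 := by
  rcases hxy with hx | hy
  · exact mult_eq_zero_of_degree_eq_zero (h.isLegPair x hx).1 y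
  · rw [p.obj.mult_comm, mult_eq_zero_of_degree_eq_zero (h.isLegPair y hy).1]

theorem mult_map_of_contract (hp : p.IsReduced k s b) (hq : q.IsReduced k s b)
    (g : p.expand ⟶ q.expand) (e : p.obj.Vert → q.obj.Vert)
    (he : ∀ a, e (p.contract a) = q.contract (g.vert a))
    (hsplit : ∀ x, q.IsSplit (e x) ↔ p.IsSplit x) (x y : p.obj.Vert) :
    q.obj.mult (e x) (e y) = p.obj.mult x y := by
  by_cases h : p.IsSplit x ∨ p.IsSplit y
  · rw [hp.isAdmissible.mult_eq_zero_of_isSplit h, hq.isAdmissible.mult_eq_zero_of_isSplit]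
    rwa [hsplit, hsplit]
  · rw [not_or] at h
    obtain ⟨x', hx'⟩ := exists_map_inl_eq hp hq g ⟨x, h.1⟩
    obtain ⟨y', hy'⟩ := exists_map_inl_eq hp hq g ⟨y, h.2⟩
    have hg := g.mult_map (.inl ⟨x, h.1⟩) (.inl ⟨y, h.2⟩)
    rw [hx', hy'] at hg
    have hex : e x = x' := (he (.inl ⟨x, h.1⟩)).trans (congrArg q.contract hx')
    have hey : e y = y' := (he (.inl ⟨y, h.2⟩)).trans (congrArg q.contract hy')
    exact hex ▸ hey ▸ hg

theorem exists_expandMap_eq (hp : p.IsReduced k s b) (hq : q.IsReduced k s b)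
    (g : p.expand ⟶ q.expand) : ∃ f : p ⟶ q, expandMap f = g := by
  obtain ⟨e, he⟩ := exists_equiv_comp_eq hp.isAdmissible.contract_surjective
    hq.isAdmissible.contract_surjective g.vert fun a a' => contract_map_eq_iff hp hq g
  have hfoot (o) : q.obj.foot (g.leg o) = e (p.obj.foot o) := by
    rw [← contract_expandFoot, ← contract_expandFoot, he]
    exact congrArg q.contract (g.foot_map o)
  have hsplit (x) : q.IsSplit (e x) ↔ p.IsSplit x := by
    obtain ⟨a, rfl⟩ := hp.isAdmissible.contract_surjective x
    rw [he, hq.isSplit_contract_iff, hp.isSplit_contract_iff, isThinEdgeEnd_map]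
  have hmult := mult_map_of_contract hp hq g e he hsplit
  refine ⟨⟨⟨e, g.leg, g.marker, hmult, hfoot, g.inc_map⟩, ?_⟩, ?_⟩
  · rintro (x | o)
    · exact (hsplit x).symm
    · change p.IsLengthened o ↔ q.IsLengthened (g.leg o)
      rw [hp.isAdmissible.isLengthened_iff, hq.isAdmissible.isLengthened_iff,
        isTip_leg_iff hp hq g, hfoot, hsplit]
  · refine Hom.ext (Equiv.ext ?_) rfl rfl
    rintro (x | o)
    · obtain ⟨x', hx'⟩ := exists_map_inl_eq hp hq g x
      exact (congrArg Sum.inl (Subtype.ext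
        ((he (.inl x)).trans (congrArg q.contract hx')))).trans hx'.symm
    · exact (map_inr_eq hp hq g o).symm

end Expandable

end DecoratedGraph

/-! ### Reduction -/

namespace DecoratedGraph

variable {G : DecoratedGraph} {x y : G.Vert}

open Classical in
/-- The neighbour of a thin vertex, and the vertex itself if it is not thin. -/
noncomputable def thinNeighbour (G : DecoratedGraph) (x : G.Vert) : G.Vert :=
  if h : G.IsThin x then (existsUnique_mult_pos_of_degree_eq_one h.1).choose else x

theorem IsThin.mult_pos_iff (h : G.IsThin x) : 0 < G.mult x y ↔ y = G.thinNeighbour x := by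
  have hex := existsUnique_mult_pos_of_degree_eq_one h.1
  rw [thinNeighbour, dif_pos h]
  exact ⟨hex.choose_spec.2 y, fun hy => hy ▸ hex.choose_spec.1⟩

theorem IsThin.mult_eq_one_iff (h : G.IsThin x) : G.mult x y = 1 ↔ y = G.thinNeighbour x := by
  rw [← h.mult_pos_iff]
  have := (G.mult_le_degree x y).trans_eq h.1
  omega

theorem IsThin.mult_eq_zero_iff (h : G.IsThin x) : G.mult x y = 0 ↔ y ≠ G.thinNeighbour x := by
  rw [Ne, ← h.mult_pos_iff, Nat.pos_iff_ne_zero, not_not]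

theorem IsThin.thinNeighbour_ne (h : G.IsThin x) : G.thinNeighbour x ≠ x := fun heq => by
  have := (h.mult_pos_iff (y := x)).2 heq.symm
  rw [G.mult_self] at this
  exact lt_irrefl 0 this

theorem IsThin.exists_leg (h : G.IsThin x) : ∃ o, G.foot o = x := by
  have : Nonempty {o // G.foot o = x} := (Nat.card_pos_iff.1 (one_pos.trans_eq h.2.symm)).1
  exact this.elim fun o => ⟨o.1, o.2⟩

theorem IsThin.leg_eq (h : G.IsThin x) {o o' : G.Leg} (ho : G.foot o = x) (ho' : G.foot o' = x) :
    o = o' := by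
  have := (Nat.card_eq_one_iff_unique.1 h.2).1
  exact congrArg Subtype.val (Subsingleton.elim (⟨o, ho⟩ : {o // G.foot o = x}) ⟨o', ho'⟩)

theorem isThinEdgeEnd_iff : G.IsThinEdgeEnd x ↔ G.IsThin x ∧ G.IsThin (G.thinNeighbour x) :=
  and_congr_right fun h => by simp only [h.mult_pos_iff, exists_eq_left]

theorem IsThinEdgeEnd.thinNeighbour_thinNeighbour (h : G.IsThinEdgeEnd x) :
    G.thinNeighbour (G.thinNeighbour x) = x := by
  obtain ⟨hx, hy⟩ := isThinEdgeEnd_iff.1 h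
  exact (hy.mult_pos_iff.1 (mult_pos_symm (hx.mult_pos_iff.2 rfl))).symm

theorem IsThinEdgeEnd.thinNeighbour (h : G.IsThinEdgeEnd x) :
    G.IsThinEdgeEnd (G.thinNeighbour x) := by
  obtain ⟨hx, hy⟩ := isThinEdgeEnd_iff.1 h
  exact isThinEdgeEnd_iff.2 ⟨hy, h.thinNeighbour_thinNeighbour.symm ▸ hx⟩

/-- The vertices of the reduction of a graph: the vertices that are not thin, and one vertex for
every edge between two thin vertices. -/
abbrev ReduceVert (G : DecoratedGraph) :=
  {x // ¬ G.IsThin x} ⊕ {z : Sym2 G.Vert // ∃ x, G.IsThinEdgeEnd x ∧ s(x, G.thinNeighbour x) = z}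

open Classical in
/-- The map contracting the edges at thin vertices. -/
noncomputable def collapse (G : DecoratedGraph) (x : G.Vert) : G.ReduceVert :=
  if h : G.IsThinEdgeEnd x then .inr ⟨_, x, h, rfl⟩
  else .inl ⟨if G.IsThin x then G.thinNeighbour x else x, by
    split_ifs with hx
    · exact fun hy => h (isThinEdgeEnd_iff.2 ⟨hx, hy⟩)
    · exact hx⟩

theorem collapse_of_not_isThin (h : ¬ G.IsThin x) : G.collapse x = .inl ⟨x, h⟩ := by
  rw [collapse, dif_neg fun h' => h h'.1]
  simp [h]

theorem IsThinEdgeEnd.collapse_eq (h : G.IsThinEdgeEnd x) :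
    G.collapse x = .inr ⟨_, x, h, rfl⟩ := dif_pos h

theorem isRight_collapse : (G.collapse x).isRight ↔ G.IsThinEdgeEnd x := by
  rw [collapse]
  split_ifs with h <;> simp [h]

theorem IsThin.collapse_eq_inl_iff (h : G.IsThin x) {y : {y // ¬ G.IsThin y}} :
    G.collapse x = .inl y ↔ y = G.thinNeighbour x := by
  by_cases hx : G.IsThinEdgeEnd x
  · rw [hx.collapse_eq]
    exact iff_of_false Sum.inr_ne_inl fun hy => y.2 (hy ▸ (isThinEdgeEnd_iff.1 hx).2)
  · rw [collapse, dif_neg hx]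
    simp [h, Subtype.ext_iff, eq_comm]

theorem IsThinEdgeEnd.collapse_eq_iff (h : G.IsThinEdgeEnd x) :
    G.collapse y = G.collapse x ↔ y = x ∨ y = G.thinNeighbour x := by
  constructor <;> intro hxy
  · have hy : G.IsThinEdgeEnd y := isRight_collapse.1 (hxy ▸ isRight_collapse.2 h)
    rw [h.collapse_eq, hy.collapse_eq, Sum.inr.injEq, Subtype.mk.injEq, Sym2.eq_iff] at hxy
    exact hxy.imp And.left And.left
  · rcases hxy with rfl | rfl
    · rfl
    · rw [h.collapse_eq, h.thinNeighbour.collapse_eq, Sum.inr.injEq, Subtype.mk.injEq,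
        h.thinNeighbour_thinNeighbour, Sym2.eq_swap]

/-- The graph obtained by contracting the edges at thin vertices, in which the resulting vertices
and the legs that have lost an edge are marked. -/
noncomputable abbrev reduce (G : DecoratedGraph) : Expandable where
  obj :=
    { Vert := G.ReduceVert
      Leg := G.Leg
      Marker := G.Marker
      mult
        | .inl x, .inl y => G.mult x y
        | _, _ => 0
      foot o := G.collapse (G.foot o)
      inc := G.inc
      mult_comm := by rintro (x | x) (y | y) <;> first | exact G.mult_comm _ _ | rfl
      mult_self := by rintro (x | x) <;> first | exact G.mult_self _ | rfl }
  marks := {s | s.elim (fun x => x.isRight)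
    fun o => G.IsThin (G.foot o) ∧ ¬ G.IsThinEdgeEnd (G.foot o)}

theorem isSplit_reduce {x : G.ReduceVert} : G.reduce.IsSplit x ↔ x.isRight := Iff.rfl

theorem isLengthened_reduce {o : G.Leg} :
    G.reduce.IsLengthened o ↔ G.IsThin (G.foot o) ∧ ¬ G.IsThinEdgeEnd (G.foot o) := Iff.rfl

theorem isTip_reduce {o : G.Leg} : G.reduce.IsTip o ↔ G.IsThin (G.foot o) := by
  rw [Expandable.IsTip, isLengthened_reduce, isSplit_reduce, isRight_collapse]
  have : G.IsThinEdgeEnd (G.foot o) → G.IsThin (G.foot o) := And.left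
  tauto

theorem not_isSplit_reduce_inl (x : {x // ¬ G.IsThin x}) : ¬ G.reduce.IsSplit (.inl x) :=
  Bool.false_ne_true

@[elab_as_elim]
theorem reduce_expandVert_cases {motive : G.reduce.ExpandVert → Prop}
    (inl : ∀ x, motive (.inl ⟨.inl x, not_isSplit_reduce_inl x⟩)) (inr : ∀ o, motive (.inr o))
    (a : G.reduce.ExpandVert) : motive a := by
  rcases a with ⟨x | z, hx⟩ | o
  · exact inl x
  · exact (hx rfl).elim
  · exact inr o

/-- The vertex of a graph that corresponds to a vertex of the expansion of its reduction. -/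
noncomputable def expandReduceVert (G : DecoratedGraph) : G.reduce.ExpandVert → G.Vert
  | .inl ⟨.inl x, _⟩ => x
  | .inl ⟨.inr _, h⟩ => (h rfl).elim
  | .inr o => G.foot o

theorem bijective_expandReduceVert (G : DecoratedGraph) :
    Function.Bijective G.expandReduceVert := by
  refine ⟨fun a a' heq => ?_, fun x => ?_⟩
  · induction a using reduce_expandVert_cases with
    | inl x =>
      induction a' using reduce_expandVert_cases with
      | inl x' => simpa [expandReduceVert, Subtype.ext_iff] using heq
      | inr o => exact (x.2 ((congrArg G.IsThin heq).mpr (isTip_reduce.1 o.2))).elim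
    | inr o =>
      induction a' using reduce_expandVert_cases with
      | inl x => exact (x.2 ((congrArg G.IsThin heq).mp (isTip_reduce.1 o.2))).elim
      | inr o' => exact congrArg Sum.inr (Subtype.ext ((isTip_reduce.1 o.2).leg_eq rfl heq.symm))
  · by_cases hx : G.IsThin x
    · obtain ⟨o, rfl⟩ := hx.exists_leg
      exact ⟨.inr ⟨o, isTip_reduce.2 hx⟩, rfl⟩
    · exact ⟨.inl ⟨.inl ⟨x, hx⟩, not_isSplit_reduce_inl _⟩, rfl⟩

theorem expandMult_reduce_inr_inl (o : {o // G.reduce.IsTip o}) (x : {x // ¬ G.IsThin x}) :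
    G.mult (G.foot o) x =
      G.reduce.expandMult (.inr o) (.inl ⟨.inl x, not_isSplit_reduce_inl x⟩) := by
  have hthin := isTip_reduce.1 o.2
  rw [Expandable.expandMult]
  split_ifs with h
  · exact hthin.mult_eq_one_iff.2 (hthin.collapse_eq_inl_iff.1 h)
  · exact hthin.mult_eq_zero_iff.2 (hthin.collapse_eq_inl_iff.not.1 h)

theorem expandMult_reduce_inr_inr (o o' : {o // G.reduce.IsTip o}) :
    G.mult (G.foot o) (G.foot o') = G.reduce.expandMult (.inr o) (.inr o') := by
  have hthin := isTip_reduce.1 o.2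
  rw [Expandable.expandMult]
  split_ifs with h
  · obtain ⟨hne, hfoot, hsplit⟩ := h
    have hend := isRight_collapse.1 hsplit
    refine hthin.mult_eq_one_iff.2 ((hend.collapse_eq_iff.1 hfoot.symm).resolve_left fun h' => ?_)
    exact hne (Subtype.ext (hthin.leg_eq rfl h'))
  · refine hthin.mult_eq_zero_iff.2 fun hfoot => h ?_
    have hend : G.IsThinEdgeEnd (G.foot o) :=
      isThinEdgeEnd_iff.2 ⟨hthin, hfoot ▸ isTip_reduce.1 o'.2⟩
    refine ⟨fun h' => hthin.thinNeighbour_ne ?_, (hend.collapse_eq_iff.2 (.inr hfoot)).symm,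
      isRight_collapse.2 hend⟩
    rw [← hfoot, h']

theorem mult_expandReduceVert (G : DecoratedGraph) (a a' : G.reduce.ExpandVert) :
    G.mult (G.expandReduceVert a) (G.expandReduceVert a') = G.reduce.expandMult a a' := by
  induction a using reduce_expandVert_cases with
  | inl x =>
    induction a' using reduce_expandVert_cases with
    | inl x' => rfl
    | inr o =>
      exact (G.mult_comm _ _).trans ((expandMult_reduce_inr_inl o x).trans
        (G.reduce.expandMult_comm (.inr o) _))
  | inr o =>
    induction a' using reduce_expandVert_cases with
    | inl x => exact expandMult_reduce_inr_inl o x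
    | inr o' => exact expandMult_reduce_inr_inr o o'

theorem foot_expandReduceVert (o : G.Leg) :
    G.foot o = G.expandReduceVert (G.reduce.expandFoot o) := by
  by_cases h : G.reduce.IsTip o
  · rw [Expandable.expandFoot_of_isTip h]
    rfl
  · have hthin := isTip_reduce.not.1 h
    have hfoot : G.reduce.expandFoot o =
        .inl ⟨.inl ⟨G.foot o, hthin⟩, not_isSplit_reduce_inl _⟩ := by
      rw [Expandable.expandFoot_of_not_isTip h]
      exact congrArg Sum.inl (Subtype.ext (collapse_of_not_isThin hthin))
    rw [hfoot]
    rfl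

/-- Expanding the reduction of a graph gives back the graph. -/
noncomputable def expandReduce (G : DecoratedGraph) : G.reduce.expand ⟶ G where
  vert := .ofBijective _ G.bijective_expandReduceVert
  leg := .refl _
  marker := .refl _
  mult_map := G.mult_expandReduceVert
  foot_map o := G.foot_expandReduceVert o
  inc_map _ _ := Iff.rfl

end DecoratedGraph

namespace DecoratedGraph

variable {G : DecoratedGraph} {k : LegKind} {s b : ℕ}

theorem IsThinEdgeEnd.isLegPair_collapse {x : G.Vert} (h : G.IsThinEdgeEnd x) :
    G.reduce.obj.IsLegPair (G.collapse x) := by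
  constructor
  · rw [h.collapse_eq]
    exact (finsum_congr fun y => by cases y <;> rfl).trans finsum_zero
  · obtain ⟨hx, hy⟩ := isThinEdgeEnd_iff.1 h
    obtain ⟨o, ho⟩ := hx.exists_leg
    obtain ⟨o', ho'⟩ := hy.exists_leg
    have hmem {o : G.Leg} : G.collapse (G.foot o) = G.collapse x ↔
        G.foot o = x ∨ G.foot o = G.thinNeighbour x := h.collapse_eq_iff
    refine Nat.card_eq_two_iff.2 ⟨⟨o, hmem.2 (.inl ho)⟩, ⟨o', hmem.2 (.inr ho')⟩, ?_, ?_⟩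
    · intro heq
      obtain rfl : o = o' := congrArg Subtype.val heq
      exact hx.thinNeighbour_ne (ho'.symm.trans ho)
    · refine Set.eq_univ_of_forall fun o'' => ?_
      exact (hmem.1 o''.2).imp (fun h => Subtype.ext (hx.leg_eq h ho))
        fun h => Subtype.ext (hy.leg_eq h ho')

theorem isLegPair_of_isSplit_reduce (x : G.ReduceVert) (h : G.reduce.IsSplit x) :
    G.reduce.obj.IsLegPair x := by
  obtain ⟨z, rfl⟩ := Sum.isRight_iff.1 h
  obtain ⟨_, x, hx, rfl⟩ := z
  exact hx.collapse_eq ▸ hx.isLegPair_collapse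

theorem isAdmissible_reduce (hG : G.Trivalent) : G.reduce.IsAdmissible := by
  refine ⟨isLegPair_of_isSplit_reduce, fun o ho hpair => ?_⟩
  obtain ⟨hthin, hend⟩ := isLengthened_reduce.1 ho
  obtain ⟨x, hx⟩ : ∃ x, G.collapse (G.foot o) = .inl x := by
    rwa [← Sum.isLeft_iff, ← Sum.isRight_eq_false, ← Bool.not_eq_true, isRight_collapse]
  change G.reduce.obj.IsLegPair (G.collapse (G.foot o)) at hpair
  have hsum := Expandable.degree_add_legCount_expand_inl (p := G.reduce)
    (fun y hy => (isLegPair_of_isSplit_reduce y hy).1) ⟨.inl x, not_isSplit_reduce_inl x⟩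
  rw [hx] at hpair
  rw [hpair.1, hpair.2, ← degree_map G.expandReduce, ← legCount_map G.expandReduce] at hsum
  change G.degree x + G.legCount x = 2 at hsum
  have hmult : 0 < G.mult x (G.foot o) :=
    mult_pos_symm (hthin.mult_pos_iff.2 (hthin.collapse_eq_inl_iff.1 hx))
  have hle := hmult.trans_le (G.mult_le_degree _ _)
  have htri := hG x
  exact x.2 ⟨by omega, by omega⟩

theorem IsLegged.isReduced_reduce (h : G.IsLegged k s b) : G.reduce.IsReduced k s b := by
  refine (isAdmissible_reduce h.trivalent).isReduced
    ((isoInvariant_isLegged k s b G.expandReduce).mpr h) fun x => ?_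
  rw [← isThin_map G.expandReduce]
  obtain ⟨x | z, hx⟩ := x
  · exact x.2
  · exact (hx rfl).elim

theorem eulerChar_isLegged_eq_eulerChar_isReduced (k : LegKind) (s b : ℕ) :
    eulerChar (IsLegged k s b) grade =
      eulerChar (Expandable.IsReduced k s b) (SlotFunctor.Marked.degree grade) :=
  .symm <| eulerChar_eq_of_full_of_surjective Expandable.expand Expandable.expandMap
    Expandable.isoInvariant_isReduced (isoInvariant_isLegged k s b) isoInvariant_grade
    (fun _ h => h.isLegged_expand) (fun _ h => by rw [h.isAdmissible.grade_expand])
    (fun _ h => h.isAdmissible.sign_expandMap) (fun _ _ => Expandable.exists_expandMap_eq)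
    fun G h _ => ⟨G.reduce, h.isReduced_reduce, ⟨G.expandReduce⟩⟩

end DecoratedGraph

/-! ### Free legs -/

namespace DecoratedGraph

/-- A leg that shares no marker with another leg at the same vertex. -/
def IsFree (G : DecoratedGraph) (o : G.Leg) : Prop :=
  ∀ o' δ, o ≠ o' → G.inc o δ → G.inc o' δ → G.foot o ≠ G.foot o'

variable {G H : DecoratedGraph} {k : LegKind} {s b : ℕ}

theorem isFree_map (f : G ⟶ H) (o : G.Leg) : H.IsFree (f.leg o) ↔ G.IsFree o := by
  unfold IsFree
  rw [f.leg.surjective.forall]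
  refine forall_congr' fun o' => ?_
  rw [f.marker.surjective.forall]
  simp only [f.leg.injective.ne_iff, f.inc_map, f.foot_map, f.vert.injective.ne_iff]

theorem isoInvariant_exists_isFree : IsoInvariant fun G : DecoratedGraph => ∃ o, G.IsFree o :=
  .of_imp fun _ _ f ⟨o, ho⟩ => ⟨f.leg o, (isFree_map f o).2 ho⟩

theorem IsFree.of_isLegPair {o o' : G.Leg} (h : G.IsFree o) (hpair : G.IsLegPair (G.foot o))
    (ho' : G.foot o' = G.foot o) : G.IsFree o' := by
  intro o'' δ hne hinc hinc' hfoot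
  by_cases heq : o' = o
  · subst heq
    exact h o'' δ hne hinc hinc' hfoot
  · obtain rfl : o'' = o := by_contra fun h'' =>
      hne (hpair.existsUnique_leg_ne.unique ⟨heq, ho'⟩ ⟨h'', hfoot.symm.trans ho'⟩)
    exact h o' δ hne.symm hinc' hinc hfoot.symm

/-- The expansion sites at free legs: the two legs of a split vertex count as one site. -/
def freeSites (G : DecoratedGraph) : Set (expansionSites.slots G) :=
  {t | Sum.elim (fun x => G.IsLegPair x ∧ ∀ o, G.foot o = x → G.IsFree o)
    (fun o => ¬ G.IsLegPair (G.foot o) ∧ G.IsFree o) t}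

theorem map_mem_freeSites_iff (f : G ⟶ H) (t : expansionSites.slots G) :
    expansionSites.map f t ∈ H.freeSites ↔ t ∈ G.freeSites := by
  obtain x | o := t
  · refine and_congr (isLegPair_map f) ?_
    rw [f.leg.surjective.forall]
    simp only [f.foot_map, f.vert.injective.eq_iff, isFree_map]
  · refine and_congr (not_congr ?_) (isFree_map f o)
    rw [f.foot_map, isLegPair_map]

theorem IsFree.nonempty_freeSites {o : G.Leg} (h : G.IsFree o) : G.freeSites.Nonempty := by
  by_cases hpair : G.IsLegPair (G.foot o)
  · exact ⟨.inl (G.foot o), hpair, fun o' ho' => h.of_isLegPair hpair ho'⟩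
  · exact ⟨.inr o, hpair, h⟩

namespace Expandable

theorem IsReduced.of_eqOn_compl_freeSites {T T' : Set (expansionSites.slots G)}
    (hT : ∀ t ∉ G.freeSites, t ∈ T ↔ t ∈ T') (h : IsReduced k s b ⟨G, T⟩) :
    IsReduced k s b ⟨G, T'⟩ where
  isAdmissible := by
    refine ⟨fun x hx => ?_, fun o ho => ?_⟩
    · by_cases hfree : Sum.inl x ∈ G.freeSites
      · exact hfree.1
      · exact h.isAdmissible.isLegPair x ((hT _ hfree).2 hx)
    · by_cases hfree : Sum.inr o ∈ G.freeSites
      · exact hfree.1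
      · exact h.isAdmissible.not_isLegPair o ((hT _ hfree).2 ho)
  hasLegKind := h.hasLegKind
  hasGenus := h.hasGenus
  nonempty_leg := h.nonempty_leg
  connected := h.connected
  valence := h.valence
  isTip_or_isTip o o' δ hne ho ho' hfoot := by
    have htip (o : G.Leg) (hfree : ¬ G.IsFree o) (htip : IsTip ⟨G, T⟩ o) : IsTip ⟨G, T'⟩ o :=
      htip.imp (hT (.inr o) fun h => hfree h.2).1
        (hT (.inl (G.foot o)) fun h => hfree (h.2 o rfl)).1
    exact (h.isTip_or_isTip o o' δ hne ho ho' hfoot).imp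
      (htip o fun hfree => hfree o' δ hne ho ho' hfoot)
      (htip o' fun hfree => hfree o δ hne.symm ho' ho hfoot.symm)

theorem finiteUpToIso_isReduced (hs : 2 ≤ s) :
    FiniteUpToIso fun G => ∃ T, IsReduced k s b ⟨G, T⟩ :=
  finiteUpToIso_of_genus hs fun G ⟨_, h⟩ => ⟨h.hasLegKind, h.hasGenus, fun x => by
    have hval : 3 ≤ G.degree x + G.legCount x ∨ G.IsLegPair x := h.valence x
    unfold IsLegPair at hval
    omega⟩

theorem eulerChar_isReduced_and_exists_isFree (hs : 2 ≤ s) :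
    eulerChar (fun p => IsReduced k s b p ∧ ∃ o, p.obj.IsFree o)
      (SlotFunctor.Marked.degree grade) = 0 :=
  SlotFunctor.Marked.eulerChar_eq_zero_of_toggle freeSites
    (isoInvariant_isReduced.and fun _ _ f => isoInvariant_exists_isFree f.hom) isoInvariant_grade
    (fun _ _ => map_mem_freeSites_iff) (fun _ _ _ hT h => ⟨h.1.of_eqOn_compl_freeSites hT, h.2⟩)
    (fun _ _ ⟨_, _, ho⟩ => ho.nonempty_freeSites)
    ((finiteUpToIso_isReduced hs).mono fun _ ⟨T, h⟩ => ⟨T, h.1⟩)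

end Expandable

theorem eulerChar_isLegged_eq_of_not_isFree (hs : 2 ≤ s) :
    eulerChar (IsLegged k s b) grade =
      eulerChar (fun p => Expandable.IsReduced k s b p ∧ ∀ o, ¬ p.obj.IsFree o)
        (SlotFunctor.Marked.degree grade) := by
  rw [eulerChar_isLegged_eq_eulerChar_isReduced, ← eulerChar_add_compl
    (SlotFunctor.Marked.finiteUpToIso Expandable.isoInvariant_isReduced
      (Expandable.finiteUpToIso_isReduced hs)) fun p => ∃ o, p.obj.IsFree o,
    Expandable.eulerChar_isReduced_and_exists_isFree hs, zero_add]
  simp only [not_exists]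

theorem eulerChar_isLegged_unmarked (hs : 2 ≤ s) :
    eulerChar (IsLegged .unmarked s b) grade = 0 := by
  rw [eulerChar_isLegged_eq_of_not_isFree hs]
  refine eulerChar_eq_zero fun p _ ⟨hp, hfree⟩ => ?_
  have hmarker : IsEmpty p.obj.Marker := hp.hasLegKind
  exact hp.nonempty_leg.elim fun o => hfree o fun _ δ => hmarker.elim δ

end DecoratedGraph

/-! ### Doubled legs -/

namespace DecoratedGraph

variable {G H : DecoratedGraph} {s b : ℕ}

theorem HasLegKind.existsUnique_inc (h : HasLegKind G .paired) (o : G.Leg) : ∃! δ, G.inc o δ := by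
  obtain ⟨e, he⟩ := h
  obtain ⟨⟨δ, i⟩, rfl⟩ := e.surjective o
  exact ⟨δ, (he _ _ _).2 rfl, fun _ h => ((he _ _ _).1 h).symm⟩

theorem HasLegKind.eq_or_eq_of_inc (h : HasLegKind G .paired) {o o' o'' : G.Leg} {δ : G.Marker}
    (hne : o ≠ o') (ho : G.inc o δ) (ho' : G.inc o' δ) (ho'' : G.inc o'' δ) :
    o'' = o ∨ o'' = o' := by
  obtain ⟨e, he⟩ := h
  obtain ⟨⟨δ, i⟩, rfl⟩ := e.surjective o
  obtain ⟨⟨δ', i'⟩, rfl⟩ := e.surjective o'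
  obtain ⟨⟨δ'', i''⟩, rfl⟩ := e.surjective o''
  obtain rfl := (he _ _ _).1 ho
  obtain rfl := (he _ _ _).1 ho'
  obtain rfl := (he _ _ _).1 ho''
  cases i <;> cases i' <;> cases i'' <;> simp_all

theorem HasLegKind.card_leg (h : HasLegKind G .paired) :
    Nat.card G.Leg = 2 * Nat.card G.Marker := by
  obtain ⟨e, -⟩ := h
  rw [← Nat.card_congr e, Nat.card_prod, Nat.card_eq_fintype_card (α := Bool), Fintype.card_bool,
    mul_comm]

/-- A marker whose two legs form a vertex of their own is a whole component. -/
theorem eq_add_one_of_isLegPair_of_not_isFree (hk : HasLegKind G .paired)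
    (hconn : G.Connected) (hgenus : G.HasGenus s b) {o : G.Leg} (hpair : G.IsLegPair (G.foot o))
    (hfree : ¬ G.IsFree o) : s = b + 1 := by
  unfold IsFree at hfree
  push Not at hfree
  obtain ⟨o', δ, hne, ho, ho', hfoot⟩ := hfree
  have hleg {o'' : G.Leg} (h'' : G.foot o'' = G.foot o) : G.inc o'' δ := by
    by_cases heq : o'' = o
    · rwa [heq]
    · rwa [hpair.existsUnique_leg_ne.unique ⟨heq, h''⟩ ⟨hne.symm, hfoot.symm⟩]
  have hvert (x : G.Vert) : x = G.foot o := by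
    refine hconn (· = G.foot o) ?_ ?_ _ x rfl
    · rintro _ y hxy rfl
      exact absurd hxy (mult_eq_zero_of_degree_eq_zero hpair.1 y).not_gt
    · intro o₁ o₂ δ' h₁ h₂ hfoot₁
      obtain rfl := (hk.existsUnique_inc o₁).unique h₁ (hleg hfoot₁)
      rcases hk.eq_or_eq_of_inc hne ho ho' h₂ with rfl | rfl
      · rfl
      · exact hfoot.symm
  have hdeg : G.totalDegree = G.degree (G.foot o) :=
    finsum_eq_single _ _ fun x hx => (hx (hvert x)).elim
  have hleg : Nat.card G.Leg = G.legCount (G.foot o) :=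
    (finsum_legCount G).symm.trans (finsum_eq_single _ _ fun x hx => (hx (hvert x)).elim)
  have hcard : Nat.card G.Vert = 1 :=
    Nat.card_eq_one_iff_exists.2 ⟨G.foot o, hvert⟩
  unfold HasGenus at hgenus
  rw [hdeg, hleg, hpair.1, hpair.2, hcard] at hgenus
  omega

/-- Every leg is replaced by a pair of legs with a marker, one of which is to be lengthened. -/
abbrev double (G : DecoratedGraph) : Expandable where
  obj :=
    { Vert := G.Vert
      Leg := G.Leg × Bool
      Marker := G.Leg
      mult := G.mult
      foot o := G.foot o.1
      inc o o' := o.1 = o'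
      mult_comm := G.mult_comm
      mult_self := G.mult_self }
  marks := Set.range fun o => .inr (o, true)

theorem hasLegKind_double (G : DecoratedGraph) : HasLegKind G.double.obj .paired :=
  ⟨.refl _, fun _ _ _ => Iff.rfl⟩

theorem hasGenus_double : HasGenus 2 b G.double.obj ↔ HasGenus 4 b G := by
  have hdeg : G.double.obj.totalDegree = G.totalDegree := rfl
  have hcard : Nat.card (G.Leg × Bool) = 2 * Nat.card G.Leg := (hasLegKind_double G).card_leg
  unfold HasGenus
  rw [hdeg, hcard, ← mul_assoc]
  rfl

theorem legCount_double (x : G.Vert) : G.double.obj.legCount x = 2 * G.legCount x := by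
  refine (Nat.card_congr (Equiv.prodSubtypeFstEquivSubtypeProd
    (p := fun o : G.Leg => G.foot o = x))).trans ?_
  rw [Nat.card_prod, Nat.card_eq_fintype_card (α := Bool), Fintype.card_bool, mul_comm]
  rfl

theorem connected_double (h : IsEmpty G.Marker) : G.double.obj.Connected ↔ G.Connected := by
  refine ⟨fun hG p hedge _ => hG p hedge ?_, fun hG p hedge _ => hG p hedge ?_⟩
  · rintro ⟨o, i⟩ ⟨o', i'⟩ _ rfl (rfl : o' = o)
    exact id
  · exact fun _ _ δ => h.elim δ

theorem not_isFree_double (o : G.Leg × Bool) : ¬ G.double.obj.IsFree o := fun h =>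
  h (o.1, !o.2) o.1 (fun h => Bool.not_ne_self o.2 (congrArg Prod.snd h.symm)) rfl rfl rfl

theorem mem_marks_double {o : G.Leg} {i : Bool} :
    Sum.inr (o, i) ∈ G.double.marks ↔ i = true := by
  refine ⟨?_, fun h => ⟨o, h ▸ rfl⟩⟩
  rintro ⟨o', h⟩
  exact (congrArg Prod.snd (Sum.inr_injective h)).symm

theorem not_isSplit_double (x : G.double.obj.Vert) : ¬ G.double.IsSplit x := by
  rintro ⟨o, h⟩
  exact Sum.inr_ne_inl h

theorem IsLegged.isReduced_double (hb : 2 ≤ b) (h : G.IsLegged .unmarked 4 b) :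
    G.double.IsReduced .paired 2 b where
  isAdmissible := by
    refine ⟨fun x hx => (not_isSplit_double x hx).elim, fun o _ hpair => ?_⟩
    have := eq_add_one_of_isLegPair_of_not_isFree (hasLegKind_double G)
      ((connected_double h.hasLegKind).2 h.connected) (hasGenus_double.2 h.hasGenus) hpair
      (not_isFree_double o)
    omega
  hasLegKind := hasLegKind_double G
  hasGenus := hasGenus_double.2 h.hasGenus
  nonempty_leg := h.nonempty_leg.map fun o => (o, true)
  connected := (connected_double h.hasLegKind).2 h.connected
  valence x := .inl (by rw [legCount_double]; exact h.trivalent x)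
  isTip_or_isTip := by
    rintro ⟨o, i⟩ ⟨o', i'⟩ _ hne rfl (rfl : o' = o) -
    cases i
    · cases i'
      · exact (hne rfl).elim
      · exact .inr (.inl (mem_marks_double.2 rfl))
    · exact .inl (.inl (mem_marks_double.2 rfl))

/-- The isomorphism of doubled graphs induced by an isomorphism. -/
def doubleMap (f : G ⟶ H) : G.double ⟶ H.double where
  hom := ⟨f.vert, f.leg.prodCongr (.refl _), f.leg, f.mult_map, fun o => f.foot_map o.1,
    fun _ _ => f.leg.injective.eq_iff⟩
  mem_marks_iff := by
    rintro (x | ⟨o, i⟩)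
    · exact iff_of_false (not_isSplit_double (G := G) x) (not_isSplit_double (G := H) _)
    · exact mem_marks_double.trans mem_marks_double.symm

/-- The legs of a graph correspond to the marked legs of the doubled graph. -/
noncomputable def doubleMarksEquiv (G : DecoratedGraph) : G.Leg ≃ G.double.marks :=
  .ofInjective _ fun _ _ h => congrArg Prod.fst (Sum.inr_injective h)

theorem sign_doubleMap (h : IsEmpty G.Marker) (f : G ⟶ G) : sign (doubleMap f) = sign f := by
  have hmarks : permSign (doubleMap f).marksEquiv = permSign f.leg :=
    .symm <| permSign_congr G.doubleMarksEquiv _ _ fun _ => rfl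
  have hmarker : permSign f.marker = 1 := by
    rw [Subsingleton.elim f.marker 1, map_one]
  rw [SlotFunctor.Marked.sign_eq, hmarks, sign_eq f, hmarker, mul_one, sign_eq]
  change permSign f.vert * permSign f.oddPair * permSign f.leg * permSign f.leg = _
  rw [mul_assoc _ (permSign f.leg), Int.units_mul_self, mul_one]

theorem degree_double (h : IsEmpty G.Marker) :
    (-1 : ℤ) ^ SlotFunctor.Marked.degree grade G.double = (-1) ^ grade G := by
  have hgrade : G.double.obj.grade = Nat.card G.Vert + Nat.card G.Leg := rfl
  rw [SlotFunctor.Marked.degree, hgrade, grade, Nat.card_of_isEmpty (α := G.Marker),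
    ← Nat.card_coe_set_eq, ← Nat.card_congr G.doubleMarksEquiv, add_assoc, ← two_mul, pow_add,
    (even_two_mul _).neg_one_pow, mul_one, add_zero]

theorem exists_doubleMap_eq (hG : IsEmpty G.Marker) (hH : IsEmpty H.Marker)
    (g : G.double ⟶ H.double) : ∃ f, doubleMap f = g := by
  have hfst (o i) : (g.hom.leg (o, i)).1 = g.hom.marker o := (g.hom.inc_map (o, i) o).2 rfl
  have hsnd (o i) : (g.hom.leg (o, i)).2 = i := by
    have := g.mem_marks_iff (.inr (o, i))
    exact Bool.eq_iff_iff.2 (mem_marks_double.symm.trans (this.symm.trans mem_marks_double))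
  refine ⟨⟨g.hom.vert, g.hom.marker, .equivOfIsEmpty _ _, g.hom.mult_map, fun o => ?_,
    fun _ δ => hG.elim δ⟩, SlotFunctor.Marked.hom_ext (Hom.ext rfl ?_ rfl)⟩
  · rw [← hfst o true]
    exact g.hom.foot_map (o, true)
  · exact Equiv.ext fun o => (Prod.ext (hfst _ _) (hsnd _ _)).symm

open Classical in
/-- The automorphism exchanging two legs with the same foot and the same markers. -/
noncomputable def swapLegs {o o' : G.Leg} (hfoot : G.foot o = G.foot o')
    (hinc : ∀ δ, G.inc o δ ↔ G.inc o' δ) : G ⟶ G where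
  vert := .refl _
  leg := .swap o o'
  marker := .refl _
  mult_map _ _ := rfl
  foot_map a := by
    rw [Equiv.swap_apply_def]
    split_ifs <;> simp_all
  inc_map a δ := by
    rw [Equiv.swap_apply_def]
    split_ifs <;> simp_all

theorem sign_swapLegs {o o' : G.Leg} (hfoot : G.foot o = G.foot o')
    (hinc : ∀ δ, G.inc o δ ↔ G.inc o' δ) : sign (swapLegs hfoot hinc) = 1 := by
  have hodd : (swapLegs hfoot hinc).oddPair = 1 := rfl
  rw [sign_eq, hodd]
  exact (congrArg₂ (· * ·) (congrArg₂ (· * ·) (map_one _) (map_one _)) (map_one _)).trans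
    (by simp)

theorem Expandable.not_isLengthened_of_orientable {p : Expandable} (h : Orientable p)
    {o o' : p.obj.Leg} (hne : o ≠ o') (hfoot : p.obj.foot o = p.obj.foot o')
    (hinc : ∀ δ, p.obj.inc o δ ↔ p.obj.inc o' δ) (ho : p.IsLengthened o) :
    ¬ p.IsLengthened o' := by
  classical
  let : DecidableEq (expansionSites.slots p.obj) :=
    (instDecidableEqSum : DecidableEq (p.obj.Vert ⊕ p.obj.Leg))
  exact SlotFunctor.Marked.notMem_marks_of_map_eq_swap h (Sum.inr_injective.ne hne)
    (swapLegs hfoot hinc) (sign_swapLegs hfoot hinc) (Equiv.Perm.sumCongr_refl_swap o o') ho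

namespace Expandable

variable {p : Expandable}

theorem IsReduced.not_isLegPair_foot (hb : 2 ≤ b) (h : p.IsReduced .paired 2 b)
    (hfree : ∀ o, ¬ p.obj.IsFree o) (o : p.obj.Leg) : ¬ p.obj.IsLegPair (p.obj.foot o) :=
  fun hpair => by
    have := eq_add_one_of_isLegPair_of_not_isFree h.hasLegKind h.connected h.hasGenus hpair
      (hfree o)
    omega

theorem IsReduced.not_isSplit (hb : 2 ≤ b) (h : p.IsReduced .paired 2 b)
    (hfree : ∀ o, ¬ p.obj.IsFree o) (x : p.obj.Vert) : ¬ p.IsSplit x := fun hx => by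
  have hpair := h.isAdmissible.isLegPair x hx
  obtain ⟨o, rfl⟩ := hpair.exists_leg
  exact h.not_isLegPair_foot hb hfree o hpair

theorem IsReduced.exists_pairing (h : p.IsReduced .paired s b) (hfree : ∀ o, ¬ p.obj.IsFree o)
    (hsplit : ∀ x, ¬ p.IsSplit x) (horient : Orientable p) :
    ∃ e : p.obj.Marker × Bool ≃ p.obj.Leg, (∀ δ i δ', p.obj.inc (e (δ, i)) δ' ↔ δ = δ') ∧
      (∀ δ i, p.obj.foot (e (δ, i)) = p.obj.foot (e (δ, true))) ∧
      ∀ δ i, p.IsLengthened (e (δ, i)) ↔ i = true := by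
  classical
  obtain ⟨e, he⟩ := h.hasLegKind
  have hne (δ) : e (δ, true) ≠ e (δ, false) := e.injective.ne (by simp)
  have hinc (δ i) : p.obj.inc (e (δ, i)) δ := (he _ _ _).2 rfl
  have hfoot (δ) : p.obj.foot (e (δ, true)) = p.obj.foot (e (δ, false)) := by
    have := hfree (e (δ, true))
    unfold IsFree at this
    push Not at this
    obtain ⟨o, δ', hne', hδ, ho, hfoot⟩ := this
    obtain rfl := (he _ _ _).1 hδ
    rcases h.hasLegKind.eq_or_eq_of_inc (hne δ) (hinc δ _) (hinc δ _) ho with rfl | rfl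
    · exact (hne' rfl).elim
    · exact hfoot
  have htip (δ) := h.isTip_or_isTip _ _ δ (hne δ) (hinc δ _) (hinc δ _) (hfoot δ)
  simp only [IsTip, hsplit, or_false] at htip
  have hnot (δ) : p.IsLengthened (e (δ, true)) → ¬ p.IsLengthened (e (δ, false)) :=
    not_isLengthened_of_orientable horient (hne δ) (hfoot δ) fun δ' => by rw [he, he]
  let flip (δ) : Bool ≃ Bool := if p.IsLengthened (e (δ, true)) then .refl _ else Equiv.boolNot
  have hflip (δ i) : p.IsLengthened (e (δ, flip δ i)) ↔ i = true := by
    by_cases hδ : p.IsLengthened (e (δ, true))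
    · cases i <;> simp [flip, hδ, hnot]
    · cases i <;> simp [flip, hδ, (htip δ).resolve_left hδ]
  refine ⟨(Equiv.prodShear (.refl _) flip).trans e, fun δ i δ' => he _ _ _, fun δ i => ?_, hflip⟩
  have hfoot' (i) : p.obj.foot (e (δ, i)) = p.obj.foot (e (δ, true)) := by
    cases i
    · exact (hfoot δ).symm
    · rfl
  exact (hfoot' _).trans (hfoot' _).symm

theorem IsReduced.exists_hom_double (hb : 2 ≤ b) (h : p.IsReduced .paired 2 b)
    (hfree : ∀ o, ¬ p.obj.IsFree o) (horient : Orientable p) :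
    ∃ G : DecoratedGraph, G.IsLegged .unmarked 4 b ∧ Nonempty (G.double ⟶ p) := by
  have hsplit := h.not_isSplit hb hfree
  obtain ⟨e, he, hfoot, hlength⟩ := h.exists_pairing hfree hsplit horient
  let G : DecoratedGraph :=
    { Vert := p.obj.Vert
      Leg := p.obj.Marker
      Marker := Empty
      mult := p.obj.mult
      foot δ := p.obj.foot (e (δ, true))
      inc _ _ := False
      mult_comm := p.obj.mult_comm
      mult_self := p.obj.mult_self }
  let f : G.double ⟶ p :=
    { hom := ⟨.refl _, e, .refl _, fun _ _ => rfl, fun o => hfoot o.1 o.2, fun o δ => he o.1 o.2 δ⟩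
      mem_marks_iff := by
        rintro (x | ⟨δ, i⟩)
        · exact iff_of_false (not_isSplit_double (G := G) x) (hsplit x)
        · exact mem_marks_double.trans (hlength δ i).symm }
  have hred : G.double.IsReduced .paired 2 b := (isoInvariant_isReduced f).mpr h
  have hmarker : IsEmpty G.Marker := inferInstanceAs (IsEmpty Empty)
  refine ⟨G, ⟨hmarker, hasGenus_double.1 hred.hasGenus, hred.nonempty_leg.map Prod.fst,
    (connected_double hmarker).1 hred.connected, fun x => ?_, fun _ _ δ => hmarker.elim δ⟩, ⟨f⟩⟩
  rw [← legCount_double]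
  have hval := hred.valence x
  refine hval.resolve_right fun hpair => ?_
  obtain ⟨o, ho⟩ := hpair.exists_leg
  exact hred.not_isLegPair_foot hb not_isFree_double o (ho.symm ▸ hpair)

end Expandable

theorem eulerChar_isLegged_paired (hb : 2 ≤ b) : eulerChar (IsLegged .paired 2 b) grade = 0 := by
  rw [eulerChar_isLegged_eq_of_not_isFree le_rfl, ← eulerChar_isLegged_unmarked (s := 4) (b := b)
    (by norm_num)]
  refine .symm <| eulerChar_eq_of_full_of_surjective double doubleMap
    (isoInvariant_isLegged _ _ _) (Expandable.isoInvariant_isReduced.and ?_)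
    (SlotFunctor.Marked.isoInvariant_degree isoInvariant_grade)
    (fun _ h => ⟨h.isReduced_double hb, not_isFree_double⟩) (fun _ h => degree_double h.hasLegKind)
    (fun _ h => sign_doubleMap h.hasLegKind)
    (fun _ _ hG hH => exists_doubleMap_eq hG.hasLegKind hH.hasLegKind)
    (fun _ h => h.1.exists_hom_double hb h.2)
  simp only [← not_exists]
  exact IsoInvariant.not fun _ _ f => isoInvariant_exists_isFree f.hom

end DecoratedGraph

/-! ### Marked multiple edges -/

namespace DecoratedGraph

/-- The connected graphs of first Betti number `b` without legs and markers all of whose vertices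
have valence at least `3`. -/
structure IsPlain (b : ℕ) (G : DecoratedGraph) : Prop where
  isEmpty_leg : IsEmpty G.Leg
  isEmpty_marker : IsEmpty G.Marker
  totalDegree_eq : G.totalDegree = 2 * (Nat.card G.Vert + b)
  connected : Connected G
  three_le_degree : ∀ x, 3 ≤ G.degree x

variable {G H : DecoratedGraph} {b : ℕ}

theorem isoInvariant_isPlain (b : ℕ) : IsoInvariant (IsPlain b) := .of_imp fun G H f h =>
  { isEmpty_leg := f.leg.symm.isEmpty_congr.2 h.isEmpty_leg
    isEmpty_marker := f.marker.symm.isEmpty_congr.2 h.isEmpty_marker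
    totalDegree_eq := by rw [totalDegree_map f, h.totalDegree_eq, Nat.card_congr f.vert]
    connected := (isoInvariant_connected f).mp h.connected
    three_le_degree := fun x => by
      obtain ⟨x, rfl⟩ := f.vert.surjective x
      rw [degree_map]
      exact h.three_le_degree x }

theorem finiteUpToIso_isPlain (b : ℕ) : FiniteUpToIso (IsPlain b) := by
  refine finiteUpToIso_of_genus (k := .unmarked) (b := b) le_rfl fun G h =>
    ⟨h.isEmpty_marker, ?_, fun x => (h.three_le_degree x).trans (Nat.le_add_right _ _)⟩
  have := h.isEmpty_leg
  rw [HasGenus, h.totalDegree_eq, Nat.card_of_isEmpty (α := G.Leg), mul_zero, add_zero]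

theorem IsPlain.card_vert_pos (h : G.IsPlain b) (hb : 1 ≤ b) :
    1 ≤ Nat.card G.Vert := by
  refine Nat.one_le_iff_ne_zero.2 fun h₀ => ?_
  have : IsEmpty G.Vert := Finite.card_eq_zero_iff.1 h₀
  have htotal : G.totalDegree = 0 := finsum_of_isEmpty _
  rw [h.totalDegree_eq] at htotal
  omega

/-- The places of a graph at which there can be a multiple edge. -/
def bundleSites : SlotFunctor DecoratedGraph where
  slots G := Sym2 G.Vert
  finite_slots _ := inferInstance
  map f := ⟨Sym2.map f.vert, Sym2.map f.vert.symm, fun s => by simp [Sym2.map_map],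
    fun s => by simp [Sym2.map_map]⟩
  map_id _ s := by
    induction s with | _ x y => rfl
  map_comp _ _ s := by
    induction s with | _ x y => rfl

/-- The pairs of vertices joined by a multiple edge. -/
def bundles (G : DecoratedGraph) : Set (Sym2 G.Vert) :=
  Sym2.fromRel (r := fun x y => 2 ≤ G.mult x y) ⟨fun x y h => by rwa [G.mult_comm]⟩

theorem mem_bundles {x y : G.Vert} : s(x, y) ∈ G.bundles ↔ 2 ≤ G.mult x y := Sym2.fromRel_prop

theorem map_mem_bundles (f : G ⟶ H) (s : Sym2 G.Vert) :
    bundleSites.map f s ∈ H.bundles ↔ s ∈ G.bundles := by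
  induction s with
  | _ x y => exact mem_bundles.trans ((f.mult_map x y).symm ▸ mem_bundles.symm)

theorem isoInvariant_nonempty_bundles : IsoInvariant fun G : DecoratedGraph => G.bundles.Nonempty :=
  .of_imp fun _ _ f h => h.elim fun s hs => ⟨_, (map_mem_bundles f s).2 hs⟩

/-- Graphs with a set of pairs of vertices, which is to consist of bundles of multiple edges. -/
abbrev BundleMarked := bundleSites.Marked

namespace BundleMarked

variable {p q : BundleMarked}

/-- A plain graph, some of whose multiple edges are marked. -/
structure IsPlain (b : ℕ) (p : BundleMarked) : Prop where
  obj : p.obj.IsPlain b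
  marks_subset : p.marks ⊆ p.obj.bundles

theorem isoInvariant_isPlain (b : ℕ) : IsoInvariant (IsPlain b) := .of_imp fun p q f h =>
  { obj := (DecoratedGraph.isoInvariant_isPlain b f.hom).mp h.obj
    marks_subset := fun s hs => by
      obtain ⟨s, rfl⟩ := (bundleSites.map f.hom).surjective s
      exact (map_mem_bundles f.hom s).2 (h.marks_subset ((f.mem_marks_iff s).2 hs)) }

theorem isoInvariant_nonempty_marks : IsoInvariant fun p : BundleMarked => p.marks.Nonempty :=
  .of_imp fun _ _ f h => h.elim fun s hs => ⟨_, (f.mem_marks_iff s).1 hs⟩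

theorem isoInvariant_isPlain_and_nonempty_bundles (b : ℕ) :
    IsoInvariant fun p : BundleMarked => p.IsPlain b ∧ p.obj.bundles.Nonempty :=
  (isoInvariant_isPlain b).and fun _ _ f => isoInvariant_nonempty_bundles f.hom

theorem eulerChar_isPlain_and_nonempty_bundles (b : ℕ) :
    eulerChar (fun p : BundleMarked => p.IsPlain b ∧ p.obj.bundles.Nonempty)
      (SlotFunctor.Marked.degree grade) = 0 :=
  SlotFunctor.Marked.eulerChar_eq_zero_of_toggle bundles
    (isoInvariant_isPlain_and_nonempty_bundles b) isoInvariant_grade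
    (fun _ _ => map_mem_bundles)
    (fun _ _ _ hT h => ⟨⟨h.1.obj, fun s hs => by
      by_contra hs'
      exact hs' (h.1.marks_subset ((hT s hs').2 hs))⟩, h.2⟩)
    (fun _ _ h => h.2) ((finiteUpToIso_isPlain b).mono fun _ ⟨_, h⟩ => h.1.obj)

theorem eulerChar_isPlain_and_marks_eq_empty (b : ℕ) :
    eulerChar (fun p : BundleMarked => (p.IsPlain b ∧ p.obj.bundles.Nonempty) ∧ ¬ p.marks.Nonempty)
      (SlotFunctor.Marked.degree grade) =
    eulerChar (fun G => G.IsPlain b ∧ G.bundles.Nonempty) grade := by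
  refine .symm <| eulerChar_eq_of_full_of_surjective (fun G => ⟨G, ∅⟩)
    (fun f => ⟨f, fun _ => Iff.rfl⟩)
    ((DecoratedGraph.isoInvariant_isPlain b).and isoInvariant_nonempty_bundles)
    ((isoInvariant_isPlain_and_nonempty_bundles b).and isoInvariant_nonempty_marks.not)
    (SlotFunctor.Marked.isoInvariant_degree isoInvariant_grade)
    (fun _ h => ⟨⟨⟨h.1, Set.empty_subset _⟩, h.2⟩, Set.not_nonempty_empty⟩)
    (fun G _ => by simp [SlotFunctor.Marked.degree])
    (fun G _ f => ?_) (fun _ _ _ _ g => ⟨g.hom, rfl⟩) ?_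
  · have (k : Equiv.Perm (∅ : Set (Sym2 G.Vert))) : permSign k = 1 := by
      rw [Subsingleton.elim k 1, map_one]
    exact (congrArg _ (this _)).trans (mul_one _)
  · rintro ⟨G, T⟩ ⟨⟨h, hne⟩, hT⟩ -
    obtain rfl : T = ∅ := Set.not_nonempty_iff_eq_empty.1 hT
    exact ⟨G, ⟨h.obj, hne⟩, ⟨𝟙 _⟩⟩

open Classical in
/-- Two edges of every marked bundle are removed, and a pair of legs with a marker is attached to
the two vertices instead. A leg at `x` is encoded by the ordered pair `(x, y)`. -/
noncomputable abbrev detach (p : BundleMarked) : DecoratedGraph where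
  Vert := p.obj.Vert
  Leg := {a : p.obj.Vert × p.obj.Vert // s(a.1, a.2) ∈ p.marks}
  Marker := p.marks
  finite_marker := Subtype.finite (α := Sym2 p.obj.Vert)
  mult x y := p.obj.mult x y - if s(x, y) ∈ p.marks then 2 else 0
  foot a := a.1.1
  inc a δ := s(a.1.1, a.1.2) = δ.1
  mult_comm x y := by rw [p.obj.mult_comm, Sym2.eq_swap]
  mult_self x := by rw [p.obj.mult_self, Nat.zero_sub]

open Classical in
theorem mult_detach_add (hp : p.marks ⊆ p.obj.bundles) (x y : p.obj.Vert) :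
    p.detach.mult x y + 2 * (if s(x, y) ∈ p.marks then 1 else 0) = p.obj.mult x y := by
  change p.obj.mult x y - _ + _ = _
  split_ifs with h
  · have := mem_bundles.1 (hp h)
    omega
  · omega

theorem ne_of_mem_marks (hp : p.marks ⊆ p.obj.bundles) {x y : p.obj.Vert}
    (h : s(x, y) ∈ p.marks) : x ≠ y := by
  rintro rfl
  have := mem_bundles.1 (hp h)
  rw [p.obj.mult_self] at this
  omega

theorem legCount_detach (x : p.obj.Vert) :
    p.detach.legCount x = Nat.card {y // s(x, y) ∈ p.marks} := by
  refine Nat.card_congr ⟨fun a => ⟨a.1.1.2, ?_⟩, fun y => ⟨⟨(x, y.1), y.2⟩, rfl⟩, ?_, fun _ => rfl⟩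
  · obtain ⟨⟨⟨x', y⟩, h⟩, rfl : x' = x⟩ := a
    exact h
  · rintro ⟨⟨⟨x', y⟩, h⟩, rfl : x' = x⟩
    rfl

theorem degree_detach_add (hp : p.marks ⊆ p.obj.bundles) (x : p.obj.Vert) :
    p.detach.degree x + 2 * p.detach.legCount x = p.obj.degree x := by
  classical
  have := Fintype.ofFinite p.obj.Vert
  rw [legCount_detach, Nat.card_eq_fintype_card, Fintype.card_subtype, Finset.card_filter]
  unfold degree
  rw [finsum_eq_sum_of_fintype, finsum_eq_sum_of_fintype, Finset.mul_sum, ← Finset.sum_add_distrib]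
  exact Finset.sum_congr rfl fun y _ => mult_detach_add hp x y

theorem totalDegree_detach_add (hp : p.marks ⊆ p.obj.bundles) :
    p.detach.totalDegree + 2 * Nat.card p.detach.Leg = p.obj.totalDegree := by
  have := Fintype.ofFinite p.obj.Vert
  rw [← finsum_legCount]
  unfold totalDegree
  rw [finsum_eq_sum_of_fintype, finsum_eq_sum_of_fintype, finsum_eq_sum_of_fintype, Finset.mul_sum,
    ← Finset.sum_add_distrib]
  exact Finset.sum_congr rfl fun x _ => degree_detach_add hp x

theorem hasLegKind_detach (hp : p.marks ⊆ p.obj.bundles) : HasLegKind p.detach .paired := by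
  have hrep (δ : p.marks) : ∃ a : p.obj.Vert × p.obj.Vert, s(a.1, a.2) = δ.1 :=
    Sym2.mk_surjective δ.1
  choose r hr using hrep
  obtain ⟨e, he⟩ := exists_prod_bool_equiv_ordered_pairs (r := r) (T := p.marks)
    (fun δ => ne_of_mem_marks hp (by rw [hr]; exact δ.2))
    (by simp only [hr]; exact Subtype.val_injective)
    (by simp only [hr]; exact Subtype.range_val.symm)
  have hpair (δ i) : s((e (δ, i)).1.1, (e (δ, i)).1.2) = δ.1 := by
    cases i
    · rw [(he δ).1, hr]
    · rw [(he δ).2, Prod.fst_swap, Prod.snd_swap, Sym2.eq_swap, hr]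
  refine ⟨e, fun δ i δ' => ?_⟩
  change s((e (δ, i)).1.1, (e (δ, i)).1.2) = δ'.1 ↔ _
  rw [hpair]
  exact Subtype.ext_iff.symm

theorem connected_detach (hp : p.marks ⊆ p.obj.bundles) (h : IsEmpty p.obj.Leg) :
    p.detach.Connected ↔ p.obj.Connected := by
  classical
  refine ⟨fun hG P hedge _ => hG P (fun x y hxy => hedge x y ?_) ?_,
    fun hG P hedge hmarker => hG P (fun x y hxy => ?_) h.elim⟩
  · have := mult_detach_add hp x y
    omega
  · rintro ⟨⟨x, y⟩, hxy⟩ ⟨⟨x', y'⟩, _⟩ δ (h₁ : s(x, y) = δ.1) (h₂ : s(x', y') = δ.1)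
    rcases Sym2.eq_iff.1 (h₁.trans h₂.symm) with ⟨rfl, rfl⟩ | ⟨rfl, rfl⟩
    · exact id
    · exact hedge x y (Nat.two_pos.trans_le (mem_bundles.1 (hp hxy)))
  · by_cases hs : s(x, y) ∈ p.marks
    · exact hmarker ⟨(x, y), hs⟩ ⟨(y, x), Sym2.eq_swap ▸ hs⟩ ⟨_, hs⟩ rfl Sym2.eq_swap
    · have := mult_detach_add hp x y
      rw [if_neg hs] at this
      exact hedge x y (by omega)

theorem noMarkerLoop_detach (p : BundleMarked) : p.detach.NoMarkerLoop := by
  rintro ⟨⟨x, y⟩, _⟩ ⟨⟨x', y'⟩, _⟩ δ hne (h₁ : s(x, y) = δ.1) (h₂ : s(x', y') = δ.1) (rfl : x = x')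
  exact hne (Subtype.ext (Prod.ext rfl (Sym2.congr_right.1 (h₁.trans h₂.symm))))

theorem isLegged_detach_iff (hp : p.marks ⊆ p.obj.bundles) (hleg : IsEmpty p.obj.Leg)
    (hmarker : IsEmpty p.obj.Marker) :
    p.detach.IsLegged .paired 2 b ↔ p.IsPlain b ∧ p.marks.Nonempty := by
  have hgenus : p.detach.HasGenus 2 b ↔ p.obj.totalDegree = 2 * (Nat.card p.obj.Vert + b) := by
    rw [HasGenus, totalDegree_detach_add hp]
  have htri : p.detach.Trivalent ↔ ∀ x, 3 ≤ p.obj.degree x :=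
    forall_congr' fun x => by rw [degree_detach_add hp]
  have hne : Nonempty p.detach.Leg ↔ p.marks.Nonempty := by
    refine ⟨fun ⟨a⟩ => ⟨_, a.2⟩, fun ⟨s, hs⟩ => ?_⟩
    induction s using Sym2.ind with | _ x y => exact ⟨⟨(x, y), hs⟩⟩
  refine ⟨fun h => ⟨⟨⟨hleg, hmarker, hgenus.1 h.hasGenus, (connected_detach hp hleg).1 h.connected,
      htri.1 h.trivalent⟩, hp⟩, hne.1 h.nonempty_leg⟩, fun h => ?_⟩
  exact ⟨hasLegKind_detach hp, hgenus.2 h.1.obj.totalDegree_eq, hne.2 h.2,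
    (connected_detach hp hleg).2 h.1.obj.connected, htri.2 h.1.obj.three_le_degree,
    noMarkerLoop_detach p⟩

/-- The isomorphism of detached graphs induced by an isomorphism. -/
noncomputable def detachMap (f : p ⟶ q) : p.detach ⟶ q.detach where
  vert := f.hom.vert
  leg := (f.hom.vert.prodCongr f.hom.vert).subtypeEquiv fun a => f.mem_marks_iff s(a.1, a.2)
  marker := f.marksEquiv
  mult_map x y := by
    classical
    exact congrArg₂ (· - ·) (f.hom.mult_map x y)
      (if_congr (f.mem_marks_iff s(x, y)).symm rfl rfl)
  foot_map _ := rfl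
  inc_map a δ := (bundleSites.map f.hom).injective.eq_iff (a := s(a.1.1, a.1.2)) (b := δ.1)

theorem odd_mult_detach (hp : p.marks ⊆ p.obj.bundles) (x y : p.obj.Vert) :
    Odd (p.obj.mult x y) ↔ Odd (p.detach.mult x y) := by
  classical
  rw [← mult_detach_add hp x y, Nat.odd_add]
  exact iff_true_right (even_two_mul _)

theorem sign_detachMap (hp : p.marks ⊆ p.obj.bundles) (hmarker : IsEmpty p.obj.Marker)
    (f : p ⟶ p) : sign (detachMap f) = sign f := by
  have hodd : permSign f.hom.oddPair = permSign (detachMap f).oddPair :=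
    permSign_congr (Equiv.subtypeEquivRight fun a : p.obj.Vert × p.obj.Vert =>
      odd_mult_detach hp a.1 a.2) _ _ fun _ => rfl
  have hmark : permSign f.hom.marker = 1 := by
    rw [Subsingleton.elim f.hom.marker 1, map_one]
  rw [SlotFunctor.Marked.sign_eq, sign_eq f.hom, hodd, hmark, mul_one]
  rfl

theorem grade_detach (hmarker : IsEmpty p.obj.Marker) :
    p.detach.grade = SlotFunctor.Marked.degree grade p := by
  rw [SlotFunctor.Marked.degree, grade, grade, Nat.card_of_isEmpty (α := p.obj.Marker), add_zero,
    ← Nat.card_coe_set_eq]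

theorem leg_eq_of_hom_detach (hp : p.marks ⊆ p.obj.bundles) (g : p.detach ⟶ q.detach)
    (a : p.detach.Leg) : (g.leg a).1 = (g.vert a.1.1, g.vert a.1.2) := by
  have hswap : s(a.1.2, a.1.1) ∈ p.marks := Sym2.eq_swap ▸ a.2
  have hfoot (a) : (g.leg a).1.1 = g.vert a.1.1 := g.foot_map a
  have h₁ : s((g.leg a).1.1, (g.leg a).1.2) = (g.marker ⟨_, a.2⟩).1 := (g.inc_map a ⟨_, a.2⟩).2 rfl
  have h₂ := (g.inc_map ⟨(a.1.2, a.1.1), hswap⟩ ⟨_, a.2⟩).2 Sym2.eq_swap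
  have h := h₁.trans h₂.symm
  rw [hfoot, hfoot] at h
  rcases Sym2.eq_iff.1 h with ⟨h, -⟩ | ⟨-, h⟩
  · exact (ne_of_mem_marks hp a.2 (g.vert.injective h)).elim
  · exact Prod.ext (hfoot a) h

theorem mem_marks_iff_of_hom_detach (hp : p.marks ⊆ p.obj.bundles) (g : p.detach ⟶ q.detach)
    (x y : p.obj.Vert) : s(x, y) ∈ p.marks ↔ s(g.vert x, g.vert y) ∈ q.marks := by
  constructor
  · intro h
    have := (g.leg ⟨(x, y), h⟩).2
    rwa [leg_eq_of_hom_detach hp] at this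
  · intro h
    obtain ⟨a, ha⟩ := g.leg.surjective ⟨(g.vert x, g.vert y), h⟩
    have := leg_eq_of_hom_detach hp g a
    rw [ha] at this
    rw [g.vert.injective (congrArg Prod.fst this), g.vert.injective (congrArg Prod.snd this)]
    exact a.2

theorem exists_detachMap_eq (hp : p.IsPlain b) (hq : q.IsPlain b) (g : p.detach ⟶ q.detach) :
    ∃ f, detachMap f = g := by
  classical
  have hmarks := mem_marks_iff_of_hom_detach hp.marks_subset g
  have := hp.obj.isEmpty_leg
  have := hp.obj.isEmpty_marker
  have := hq.obj.isEmpty_leg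
  have := hq.obj.isEmpty_marker
  let f : p ⟶ q :=
    { hom := ⟨g.vert, .equivOfIsEmpty _ _, .equivOfIsEmpty _ _, fun x y => by
        rw [← mult_detach_add hp.marks_subset x y,
          ← mult_detach_add hq.marks_subset (g.vert x) (g.vert y)]
        exact congrArg₂ (· + 2 * ·) (g.mult_map x y) (if_congr (hmarks x y).symm rfl rfl),
        isEmptyElim, isEmptyElim⟩
      mem_marks_iff := fun s => by
        induction s using Sym2.ind with | _ x y => exact hmarks x y }
  refine ⟨f, Hom.ext rfl (Equiv.ext fun a => Subtype.ext ?_) (Equiv.ext ?_)⟩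
  · exact (leg_eq_of_hom_detach hp.marks_subset g a).symm
  · rintro ⟨s, hs⟩
    refine Subtype.ext ?_
    induction s using Sym2.ind with
    | _ x y =>
      have h : s((g.leg ⟨(x, y), hs⟩).1.1, (g.leg ⟨(x, y), hs⟩).1.2) = (g.marker ⟨_, hs⟩).1 :=
        (g.inc_map ⟨(x, y), hs⟩ ⟨_, hs⟩).2 rfl
      rwa [leg_eq_of_hom_detach hp.marks_subset] at h

end BundleMarked

end DecoratedGraph

namespace DecoratedGraph

variable {G : DecoratedGraph} {b : ℕ}

section Pairing

variable {e : G.Marker × Bool ≃ G.Leg}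

open Classical in
/-- The automorphism exchanging two markers whose legs are attached to the same vertices. -/
noncomputable def swapMarkers (he : ∀ δ i δ', G.inc (e (δ, i)) δ' ↔ δ = δ') {δ δ' : G.Marker}
    (h : ∀ i, G.foot (e (δ, i)) = G.foot (e (δ', i))) : G ⟶ G where
  vert := .refl _
  leg := e.symm.trans (((Equiv.swap δ δ').prodCongr (.refl _)).trans e)
  marker := Equiv.swap δ δ'
  mult_map _ _ := rfl
  foot_map o := by
    obtain ⟨⟨ε, i⟩, rfl⟩ := e.surjective o
    simp only [Equiv.trans_apply, Equiv.symm_apply_apply, Equiv.prodCongr_apply, Prod.map_apply,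
      Equiv.refl_apply]
    rw [Equiv.swap_apply_def]
    split_ifs with hε hε'
    · rw [hε, h]
    · rw [hε', h]
    · rfl
  inc_map o ε := by
    obtain ⟨⟨ε', i⟩, rfl⟩ := e.surjective o
    simp [he]

theorem sign_swapMarkers (he : ∀ δ i δ', G.inc (e (δ, i)) δ' ↔ δ = δ') {δ δ' : G.Marker}
    (h : ∀ i, G.foot (e (δ, i)) = G.foot (e (δ', i))) (hne : δ ≠ δ') :
    sign (swapMarkers he h) = -1 := by
  classical
  have := Fintype.ofFinite G.Marker
  have hvert : permSign (swapMarkers he h).vert = 1 := map_one _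
  have hodd : permSign (swapMarkers he h).oddPair = 1 := map_one _
  have hmarker : permSign (swapMarkers he h).marker = -1 := by
    rw [permSign_eq_sign]
    exact Equiv.Perm.sign_swap hne
  rw [sign_eq, hvert, hodd, hmarker, mul_one, one_mul]

theorem injective_ends_of_orientable (he : ∀ δ i δ', G.inc (e (δ, i)) δ' ↔ δ = δ')
    (hG : Orientable G) :
    Function.Injective fun δ => s(G.foot (e (δ, false)), G.foot (e (δ, true))) := by
  classical
  have key {e : G.Marker × Bool ≃ G.Leg} (he : ∀ δ i δ', G.inc (e (δ, i)) δ' ↔ δ = δ') {δ δ'}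
      (h : ∀ i, G.foot (e (δ, i)) = G.foot (e (δ', i))) : δ = δ' := by
    by_contra hne
    exact absurd ((hG _).symm.trans (sign_swapMarkers he h hne)) (by decide)
  intro δ δ' h
  rcases Sym2.eq_iff.1 h with ⟨hf, ht⟩ | ⟨hf, ht⟩
  · exact key he fun i => by cases i <;> assumption
  · by_contra hne
    let twist : G.Marker × Bool ≃ G.Marker × Bool :=
      .prodShear (.refl _) fun ε => if ε = δ' then Equiv.boolNot else .refl _
    refine hne (key (e := twist.trans e) (fun ε i ε' => he _ _ _) fun i => ?_)
    cases i <;> simpa [twist, hne]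

end Pairing

open Classical in
/-- Two edges are added between the two vertices of each pair in `T`, and legs and markers are
forgotten. -/
noncomputable abbrev attach (G : DecoratedGraph) (T : Set (Sym2 G.Vert)) (hT : ∀ x, s(x, x) ∉ T) :
    DecoratedGraph where
  Vert := G.Vert
  Leg := Empty
  Marker := Empty
  mult x y := G.mult x y + if s(x, y) ∈ T then 2 else 0
  foot := Empty.elim
  inc := Empty.elim
  mult_comm x y := by rw [G.mult_comm, Sym2.eq_swap]
  mult_self x := by rw [G.mult_self, if_neg (hT x)]

theorem subset_bundles_attach {T : Set (Sym2 G.Vert)} (hT : ∀ x, s(x, x) ∉ T) :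
    T ⊆ (G.attach T hT).bundles := by
  classical
  intro s hs
  induction s with
  | _ x y =>
    refine mem_bundles.2 ?_
    change 2 ≤ G.mult x y + if s(x, y) ∈ T then 2 else 0
    rw [if_pos hs]
    exact Nat.le_add_left _ _

theorem exists_hom_detach (hleg : HasLegKind G .paired) (hloop : G.NoMarkerLoop)
    (hG : Orientable G) :
    ∃ p : BundleMarked, p.marks ⊆ p.obj.bundles ∧ IsEmpty p.obj.Leg ∧ IsEmpty p.obj.Marker ∧
      Nonempty (G ⟶ p.detach) := by
  obtain ⟨e, he⟩ := hleg
  have hinj := injective_ends_of_orientable he hG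
  let r (δ : G.Marker) := (G.foot (e (δ, false)), G.foot (e (δ, true)))
  have hr (δ) : (r δ).1 ≠ (r δ).2 :=
    hloop _ _ δ (e.injective.ne (by simp)) ((he _ _ _).2 rfl) ((he _ _ _).2 rfl)
  let T : Set (Sym2 G.Vert) := Set.range fun δ => s((r δ).1, (r δ).2)
  have hT (x) : s(x, x) ∉ T := by
    rintro ⟨δ, h⟩
    rcases Sym2.eq_iff.1 h with ⟨h₁, h₂⟩ | ⟨h₁, h₂⟩ <;> exact hr δ (h₁.trans h₂.symm)
  obtain ⟨F, hF⟩ := exists_prod_bool_equiv_ordered_pairs hr hinj (rfl : T = _)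
  have hends (δ i) : s((F (δ, i)).1.1, (F (δ, i)).1.2) = s((r δ).1, (r δ).2) := by
    cases i
    · rw [(hF δ).1]
    · rw [(hF δ).2, Prod.fst_swap, Prod.snd_swap, Sym2.eq_swap]
  refine ⟨⟨G.attach T hT, T⟩, subset_bundles_attach hT, inferInstanceAs (IsEmpty Empty),
    inferInstanceAs (IsEmpty Empty),
    ⟨⟨.refl _, e.symm.trans F, .ofInjective _ hinj, fun x y => ?_, fun o => ?_,
      fun o δ => ?_⟩⟩⟩
  · exact Nat.add_sub_cancel _ _
  · obtain ⟨⟨δ, i⟩, rfl⟩ := e.surjective o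
    change (F (e.symm (e (δ, i)))).1.1 = G.foot (e (δ, i))
    rw [e.symm_apply_apply]
    cases i
    · rw [(hF δ).1]
    · rw [(hF δ).2]; rfl
  · obtain ⟨⟨δ', i⟩, rfl⟩ := e.surjective o
    change s((F (e.symm (e (δ', i)))).1.1, (F (e.symm (e (δ', i)))).1.2) = s((r δ).1, (r δ).2) ↔ _
    rw [e.symm_apply_apply, hends, he]
    exact hinj.eq_iff

namespace BundleMarked

theorem isoInvariant_isPlain_and_nonempty_marks (b : ℕ) :
    IsoInvariant fun p : BundleMarked => p.IsPlain b ∧ p.marks.Nonempty :=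
  (isoInvariant_isPlain b).and isoInvariant_nonempty_marks

theorem eulerChar_isPlain_and_nonempty_marks (hb : 2 ≤ b) :
    eulerChar (fun p : BundleMarked => p.IsPlain b ∧ p.marks.Nonempty)
      (SlotFunctor.Marked.degree grade) = 0 := by
  rw [← eulerChar_isLegged_paired hb]
  refine eulerChar_eq_of_full_of_surjective detach detachMap
    (isoInvariant_isPlain_and_nonempty_marks b) (isoInvariant_isLegged .paired 2 b)
    isoInvariant_grade
    (fun p h => (isLegged_detach_iff h.1.marks_subset h.1.obj.isEmpty_leg
      h.1.obj.isEmpty_marker).2 h)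
    (fun p h => by rw [grade_detach h.1.obj.isEmpty_marker])
    (fun p h f => sign_detachMap h.1.marks_subset h.1.obj.isEmpty_marker f)
    (fun p q hp hq g => exists_detachMap_eq hp.1 hq.1 g) fun G h hG => ?_
  obtain ⟨p, hp, hleg, hmarker, ⟨f⟩⟩ := exists_hom_detach h.hasLegKind h.noMarkerLoop hG
  exact ⟨p, (isLegged_detach_iff hp hleg hmarker).1 ((isoInvariant_isLegged .paired 2 b f).mp h),
    ⟨Groupoid.inv f⟩⟩

end BundleMarked

theorem eulerChar_isPlain_and_nonempty_bundles (hb : 2 ≤ b) :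
    eulerChar (fun G => G.IsPlain b ∧ G.bundles.Nonempty) grade = 0 := by
  have hfin : FiniteUpToIso fun p : BundleMarked => p.IsPlain b ∧ p.obj.bundles.Nonempty :=
    SlotFunctor.Marked.finiteUpToIso
      (BundleMarked.isoInvariant_isPlain_and_nonempty_bundles b)
      ((finiteUpToIso_isPlain b).mono fun _ ⟨_, h⟩ => h.1.obj)
  have hsplit := eulerChar_add_compl hfin (fun p => p.marks.Nonempty)
    (SlotFunctor.Marked.degree grade)
  have hmarked : eulerChar (fun p : BundleMarked =>
      (p.IsPlain b ∧ p.obj.bundles.Nonempty) ∧ p.marks.Nonempty)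
      (SlotFunctor.Marked.degree grade) = 0 := by
    rw [← BundleMarked.eulerChar_isPlain_and_nonempty_marks hb]
    exact eulerChar_congr fun p _ =>
      ⟨fun h => ⟨h.1.1, h.2⟩, fun h => ⟨⟨h.1, h.2.mono h.1.marks_subset⟩, h.2⟩⟩
  rwa [hmarked, zero_add, BundleMarked.eulerChar_isPlain_and_nonempty_bundles,
    BundleMarked.eulerChar_isPlain_and_marks_eq_empty] at hsplit

theorem eulerChar_isPlain (hb : 2 ≤ b) :
    eulerChar (IsPlain b) grade =
      eulerChar (fun G => G.IsPlain b ∧ ¬ G.bundles.Nonempty) grade := by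
  rw [← eulerChar_add_compl (finiteUpToIso_isPlain b) (fun G => G.bundles.Nonempty) grade,
    eulerChar_isPlain_and_nonempty_bundles hb, zero_add]

end DecoratedGraph

/-! ### Labelled graphs -/

open Classical in
/-- A choice of orientation of the unordered pairs: the sign of an ordered pair relative to the
chosen order of its components. -/
noncomputable def pairSign {V : Type*} (a : V × V) : ℤˣ := if a = s(a.1, a.2).out then 1 else -1

/-- The sign that records whether a permutation preserves the chosen orientations of an unordered
pair and its image. -/
noncomputable def twist {V : Type*} (ρ : Equiv.Perm V) (s : Sym2 V) : ℤˣ :=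
  pairSign (s.out.map ρ ρ)

section PairSign

variable {V : Type*}

theorem out_eq_or_eq_swap (a : V × V) : s(a.1, a.2).out = a ∨ s(a.1, a.2).out = a.swap :=
  (Sym2.eq_iff.1 (Quot.out_eq s(a.1, a.2))).imp (fun h => Prod.ext h.1 h.2)
    fun h => Prod.ext h.1 h.2

theorem pairSign_out (s : Sym2 V) : pairSign s.out = 1 :=
  if_pos (congrArg Quot.out (Quot.out_eq s)).symm

theorem pairSign_swap {a : V × V} (ha : a.1 ≠ a.2) : pairSign a.swap = -pairSign a := by
  have hswap : a.swap ≠ a := fun h => ha (congrArg Prod.snd h)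
  unfold pairSign
  rw [Prod.fst_swap, Prod.snd_swap, Sym2.eq_swap]
  rcases out_eq_or_eq_swap a with h | h
  · rw [h, if_neg hswap, if_pos rfl]
  · rw [h, if_pos rfl, if_neg hswap.symm, neg_neg]

theorem pairSign_map (ρ : Equiv.Perm V) {a : V × V} (ha : a.1 ≠ a.2) :
    pairSign (a.map ρ ρ) = twist ρ s(a.1, a.2) * pairSign a := by
  unfold twist
  rcases out_eq_or_eq_swap a with h | h
  · have := pairSign_out s(a.1, a.2)
    rw [h] at this ⊢
    rw [this, mul_one]
  · have hout := pairSign_out s(a.1, a.2)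
    rw [h, pairSign_swap ha, neg_eq_iff_eq_neg] at hout
    have hmap : a.swap.map ρ ρ = (a.map ρ ρ).swap := rfl
    rw [h, hmap, pairSign_swap (ρ.injective.ne ha), hout, neg_mul_neg, mul_one]

theorem sign_fin_two (τ : Equiv.Perm (Fin 2)) :
    Equiv.Perm.sign τ = if τ 0 = 0 then 1 else -1 := by
  decide +revert

theorem pairSign_flipPair (τ : Equiv.Perm (Fin 2)) {a : V × V} (ha : a.1 ≠ a.2) :
    pairSign (flipPair τ a) = Equiv.Perm.sign τ * pairSign a := by
  rw [sign_fin_two, flipPair]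
  split_ifs
  · rw [one_mul]
  · rw [pairSign_swap ha, neg_one_mul]

end PairSign

namespace DecoratedGraph

variable {G : DecoratedGraph}

/-- The pairs of vertices joined by an odd number of edges. -/
def oddBundles (G : DecoratedGraph) : Set (Sym2 G.Vert) :=
  Sym2.fromRel (r := fun x y => Odd (G.mult x y)) ⟨fun x y h => by rwa [G.mult_comm]⟩

theorem mem_oddBundles {x y : G.Vert} : s(x, y) ∈ G.oddBundles ↔ Odd (G.mult x y) :=
  Sym2.fromRel_prop

theorem permSign_oddPair (f : G ⟶ G) :
    permSign f.oddPair = ∏ᶠ s ∈ G.oddBundles, twist f.vert s := by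
  have := Fintype.ofFinite G.oddBundles
  have hout (s : Sym2 G.Vert) : s(s.out.1, s.out.2) = s := Quot.out_eq s
  have hne (s : G.oddBundles) : s.1.out.1 ≠ s.1.out.2 := fun h => by
    have hs := s.2
    rw [← hout s.1, h, mem_oddBundles, G.mult_self] at hs
    exact absurd hs (by decide)
  obtain ⟨e, he⟩ : ∃ e : G.oddBundles × Bool ≃ G.OddPair,
      ∀ s, (e (s, false)).1 = s.1.out ∧ (e (s, true)).1 = s.1.out.swap :=
    exists_prod_bool_equiv_ordered_pairs (T := G.oddBundles) hne
      (by simp only [hout]; exact Subtype.val_injective)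
      (by simp only [hout]; exact Subtype.range_val.symm)
  have hnot (s c) : (e (s, !c)).1 = (e (s, c)).1.swap := by
    cases c
    · exact (he s).2.trans (congrArg _ (he s).1.symm)
    · exact (he s).1.trans (congrArg Prod.swap (he s).2).symm
  let π : Equiv.Perm (G.oddBundles × Bool) := (e.trans f.oddPair).trans e.symm
  have hπ (a) : e (π a) = f.oddPair (e a) := e.apply_symm_apply _
  have hsign : permSign π = permSign f.oddPair := permSign_congr e _ _ hπ
  rw [← finprod_set_coe_eq_finprod_mem, finprod_eq_prod_of_fintype, ← hsign,
    permSign_of_commute_not]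
  · refine Finset.prod_congr rfl fun s _ => ?_
    have hs : (e (π (s, false))).1 = s.1.out.map f.vert f.vert := by
      rw [hπ, ← (he s).1]
      rfl
    rw [twist, ← hs]
    obtain ⟨s', c⟩ := π (s, false)
    cases c
    · rw [(he s').1, pairSign_out]
      rfl
    · rw [(he s').2, pairSign_swap (hne s'), pairSign_out]
      rfl
  · intro s c
    refine e.injective (Subtype.ext ?_)
    rw [hπ, hnot, hπ]
    change Prod.map f.vert f.vert (e (s, !c)).1 = (Prod.map f.vert f.vert (e (s, c)).1).swap
    rw [hnot]
    rfl

end DecoratedGraph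

section Labelled

variable {v e : ℕ} {g g' : Graph v e}

/-- The unordered pair of end points of an edge of a labelled graph. -/
def edgeEnds (g : Graph v e) (i : Fin e) : Sym2 (Fin v) := s((g i).1, (g i).2)

/-- The labelled graph has no edge with equal end points. -/
def Loopless (g : Graph v e) : Prop := ∀ i, (g i).1 ≠ (g i).2

theorem edgeEnds_flipPair {V : Type*} (τ : Equiv.Perm (Fin 2)) (a : V × V) :
    s((flipPair τ a).1, (flipPair τ a).2) = s(a.1, a.2) := by
  unfold flipPair
  split_ifs
  · rfl
  · exact Sym2.eq_swap

theorem flipPair_map {V W : Type*} (ρ : V → W) (τ : Equiv.Perm (Fin 2)) (a : V × V) :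
    flipPair τ (a.map ρ ρ) = (flipPair τ a).map ρ ρ := by
  unfold flipPair
  split_ifs <;> rfl

theorem act_apply (γ : Gamma v e) (g : Graph v e) (i : Fin e) :
    act γ g (γ.2.1 i) = (flipPair (γ.2.2 i) (g i)).map γ.1 γ.1 := by
  have hi : γ.2.1⁻¹ (γ.2.1 i) = i := γ.2.1.symm_apply_apply i
  unfold act
  rw [hi]

theorem edgeEnds_act (γ : Gamma v e) (g : Graph v e) (i : Fin e) :
    edgeEnds (act γ g) (γ.2.1 i) = (edgeEnds g i).map γ.1 := by
  unfold edgeEnds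
  rw [act_apply, ← edgeEnds_flipPair (γ.2.2 i) (g i)]
  rfl

theorem loopless_iff : Loopless g ↔ ∀ i, ¬ (edgeEnds g i).IsDiag := Iff.rfl

theorem Loopless.act (hg : Loopless g) (γ : Gamma v e) : Loopless (act γ g) := by
  refine loopless_iff.2 fun i => ?_
  obtain ⟨i, rfl⟩ := γ.2.1.surjective i
  rw [edgeEnds_act, Sym2.isDiag_map γ.1.injective]
  exact loopless_iff.1 hg i

theorem Loopless.edgeEnds_ne (hg : Loopless g) (i : Fin e) (x : Fin v) : edgeEnds g i ≠ s(x, x) :=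
  fun h => loopless_iff.1 hg i (h ▸ Sym2.mk_isDiag_iff.2 rfl)

/-- The decorated graph without legs and markers obtained from a labelled graph by deleting the
loops and forgetting the labels and orientations. -/
noncomputable abbrev toDecorated (g : Graph v e) : DecoratedGraph where
  Vert := Fin v
  Leg := Empty
  Marker := Empty
  mult x y := if x = y then 0 else Nat.card {i // edgeEnds g i = s(x, y)}
  foot := Empty.elim
  inc := Empty.elim
  mult_comm x y := by simp only [eq_comm (a := x), Sym2.eq_swap (a := x)]
  mult_self _ := if_pos rfl

theorem mult_toDecorated (hg : Loopless g) (x y : Fin v) :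
    (toDecorated g).mult x y = Nat.card {i // edgeEnds g i = s(x, y)} := by
  refine ite_eq_right_iff.2 ?_
  rintro rfl
  have : IsEmpty {i // edgeEnds g i = s(x, x)} := ⟨fun i => hg.edgeEnds_ne i.1 x i.2⟩
  exact Nat.card_of_isEmpty.symm

/-- The isomorphism of the underlying unlabelled graphs given by a relabelling. -/
noncomputable def homOfAct (γ : Gamma v e) (h : g' = act γ g) :
    toDecorated g ⟶ toDecorated g' where
  vert := γ.1
  leg := .refl _
  marker := .refl _
  mult_map x y := by
    subst h
    refine if_congr γ.1.injective.eq_iff rfl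
      (Nat.card_congr (γ.2.1.subtypeEquiv fun i => ?_)).symm
    rw [edgeEnds_act]
    exact (Sym2.map.injective γ.1.injective).eq_iff.symm
  foot_map := Empty.rec
  inc_map := Empty.rec

theorem exists_flipPair_eq {V : Type*} {a a' : V × V} (h : s(a'.1, a'.2) = s(a.1, a.2)) :
    ∃ τ, a' = flipPair τ a := by
  rcases Sym2.eq_iff.1 h with ⟨h₁, h₂⟩ | ⟨h₁, h₂⟩
  · exact ⟨1, Prod.ext h₁ h₂⟩
  · exact ⟨Equiv.swap 0 1, (Prod.ext h₁ h₂ : a' = a.swap).trans (if_neg (by simp)).symm⟩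

theorem exists_act_eq_of_hom (hg : Loopless g) (hg' : Loopless g')
    (f : toDecorated g ⟶ toDecorated g') : ∃ γ : Gamma v e, γ.1 = f.vert ∧ g' = act γ g := by
  let ρ : Equiv.Perm (Fin v) := f.vert
  have hcard (s : Sym2 (Fin v)) : Nat.card {i // (edgeEnds g i).map ρ = s} =
      Nat.card {i // edgeEnds g' i = s} := by
    induction s with
    | _ x y =>
      obtain ⟨x, rfl⟩ := ρ.surjective x
      obtain ⟨y, rfl⟩ := ρ.surjective y
      have hmult : (toDecorated g').mult (ρ x) (ρ y) = (toDecorated g).mult x y := f.mult_map x y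
      rw [mult_toDecorated hg, mult_toDecorated hg'] at hmult
      refine Eq.trans (Nat.card_congr (Equiv.subtypeEquivRight fun i => ?_)) hmult.symm
      exact (Sym2.map.injective ρ.injective).eq_iff (b := s(x, y))
  obtain ⟨μ, hμ⟩ := exists_equiv_of_card_fiber_eq hcard
  choose ν hν using fun i => exists_flipPair_eq (a := (g i).map ρ ρ) (a' := g' (μ i)) (hμ i)
  refine ⟨(ρ, μ, ν), rfl, ?_⟩
  funext i
  obtain ⟨i, rfl⟩ := μ.surjective i
  exact (hν i).trans ((flipPair_map ρ (ν i) (g i)).trans (act_apply (ρ, μ, ν) g i).symm)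

theorem exists_act_eq_iff (hg : Loopless g) :
    (∃ γ, g' = act γ g) ↔ Loopless g' ∧ Nonempty (toDecorated g ⟶ toDecorated g') := by
  constructor
  · rintro ⟨γ, rfl⟩
    exact ⟨hg.act γ, ⟨homOfAct γ rfl⟩⟩
  · rintro ⟨hg', ⟨f⟩⟩
    exact (exists_act_eq_of_hom hg hg' f).imp fun _ h => h.2

theorem Loopless.of_chi_eq_one (h : ∀ γ : Gamma v e, GraphComplexOdd.act γ g = g → chi γ = 1) :
    Loopless g := by
  intro i hi
  let γ : Gamma v e := (1, 1, Function.update 1 i (Equiv.swap 0 1))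
  have hact : GraphComplexOdd.act γ g = g := by
    funext j
    refine (act_apply γ g j).trans ?_
    change flipPair (γ.2.2 j) (g j) = g j
    by_cases hj : j = i
    · subst hj
      unfold flipPair
      split_ifs
      · rfl
      · exact Prod.ext hi.symm hi
    · have hν : γ.2.2 j = 1 := Function.update_of_ne hj _ _
      rw [hν]
      rfl
  have hchi : chi γ = -1 := by
    unfold chi
    rw [Finset.prod_eq_single i (fun j _ hj => by simp [γ, hj]) (by simp)]
    simp [γ]
  exact absurd ((h γ hact).symm.trans hchi) (by decide)

theorem prod_sign_eq_prod_twist (hg : Loopless g) {γ : Gamma v e} (h : act γ g = g) :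
    ∏ i, Equiv.Perm.sign (γ.2.2 i) = ∏ i, twist γ.1 (edgeEnds g i) := by
  have hedge (i) : pairSign (g (γ.2.1 i)) =
      twist γ.1 (edgeEnds g i) * (Equiv.Perm.sign (γ.2.2 i) * pairSign (g i)) := by
    have hne : (flipPair (γ.2.2 i) (g i)).1 ≠ (flipPair (γ.2.2 i) (g i)).2 := by
      unfold flipPair
      split_ifs
      · exact hg i
      · exact (hg i).symm
    conv_lhs => rw [← h]
    rw [act_apply, pairSign_map _ hne, edgeEnds_flipPair, pairSign_flipPair _ (hg i)]
    rfl
  have hprod := Equiv.prod_comp γ.2.1 fun i => pairSign (g i)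
  simp only [hedge, Finset.prod_mul_distrib] at hprod
  rw [← mul_assoc, mul_eq_right] at hprod
  rw [← inv_eq_of_mul_eq_one_right hprod, Int.units_inv_eq_self]

theorem mem_oddBundles_toDecorated (hg : Loopless g) (s : Sym2 (Fin v)) :
    s ∈ (toDecorated g).oddBundles ↔ Odd (Nat.card {i // edgeEnds g i = s}) := by
  induction s with
  | _ x y =>
    rw [← mult_toDecorated hg]
    exact DecoratedGraph.mem_oddBundles (G := toDecorated g)

theorem prod_twist_edgeEnds (hg : Loopless g) (ρ : Equiv.Perm (Fin v)) :
    ∏ i, twist ρ (edgeEnds g i) = ∏ᶠ s ∈ (toDecorated g).oddBundles, twist ρ s := by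
  classical
  rw [finprod_mem_def, finprod_eq_prod_of_fintype, ← Finset.prod_fiberwise Finset.univ (edgeEnds g)]
  refine Finset.prod_congr rfl fun s _ => ?_
  have hpow : ∏ i with edgeEnds g i = s, twist ρ (edgeEnds g i) =
      twist ρ s ^ Nat.card {i // edgeEnds g i = s} := by
    rw [Nat.card_eq_fintype_card, Fintype.card_subtype]
    exact Finset.prod_eq_pow_card fun i hi => congrArg _ (Finset.mem_filter.1 hi).2
  rw [hpow, Set.mulIndicator_apply, Int.units_pow_eq_pow_mod_two]
  split_ifs with hs
  · rw [Nat.odd_iff.1 ((mem_oddBundles_toDecorated hg s).1 hs), pow_one]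
  · rw [Nat.not_odd_iff.1 fun h => hs ((mem_oddBundles_toDecorated hg s).2 h), pow_zero]

theorem sign_eq_chi (hg : Loopless g) {γ : Gamma v e} (h : act γ g = g)
    {f : toDecorated g ⟶ toDecorated g} (hf : f.vert = γ.1) : (sign f : ℤ) = chi γ := by
  have hmarker : permSign f.marker = 1 := by rw [Subsingleton.elim f.marker 1, map_one]
  rw [DecoratedGraph.sign_eq, DecoratedGraph.permSign_oddPair, hmarker, mul_one, hf,
    ← prod_twist_edgeEnds hg, ← prod_sign_eq_prod_twist hg h, permSign_eq_sign]
  simp [chi]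

theorem orientable_toDecorated_iff (hg : Loopless g) :
    Orientable (toDecorated g) ↔ ∀ γ : Gamma v e, act γ g = g → chi γ = 1 := by
  refine ⟨fun h γ hγ => ?_, fun h f => ?_⟩
  · rw [← sign_eq_chi hg hγ (f := homOfAct γ hγ.symm) rfl, h, Units.val_one]
  · obtain ⟨γ, hf, hγ⟩ := exists_act_eq_of_hom hg hg f
    exact Units.ext ((sign_eq_chi hg hγ.symm hf.symm).trans (h γ hγ.symm))

theorem mult_pos_toDecorated_iff (hg : Loopless g) (x y : Fin v) :
    0 < (toDecorated g).mult x y ↔ adj g x y := by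
  have hends (i : Fin e) : edgeEnds g i = s(x, y) ↔ g i = (x, y) ∨ g i = (y, x) := by
    rw [edgeEnds, Sym2.eq_iff, Prod.ext_iff, Prod.ext_iff]
  rw [mult_toDecorated hg, Finite.card_pos_iff, nonempty_subtype]
  exact exists_congr hends

theorem sum_ite_sym2_eq {V : Type*} [Fintype V] [DecidableEq V] {a : V × V} (ha : a.1 ≠ a.2)
    (x : V) : (∑ y, if s(a.1, a.2) = s(x, y) then 1 else 0) =
      (if a.1 = x then 1 else 0) + if a.2 = x then 1 else 0 := by
  have hmk (y : V) : s(a.1, a.2) = s(x, y) ↔ a.1 = x ∧ a.2 = y ∨ a.2 = x ∧ a.1 = y := by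
    rw [Sym2.eq_iff, and_comm (a := a.1 = y)]
  simp only [hmk]
  rcases eq_or_ne a.1 x with h₁ | h₁ <;> rcases eq_or_ne a.2 x with h₂ | h₂
  · exact (ha (h₁.trans h₂.symm)).elim
  all_goals simp [h₁, h₂]

theorem degree_toDecorated (hg : Loopless g) (x : Fin v) :
    (toDecorated g).degree x = valence g x := by
  have hcard (y : Fin v) : (toDecorated g).mult x y =
      ∑ i, if edgeEnds g i = s(x, y) then 1 else 0 := by
    rw [mult_toDecorated hg, Nat.card_eq_fintype_card, Fintype.card_subtype, Finset.card_filter]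
  calc (toDecorated g).degree x = ∑ y : Fin v, (toDecorated g).mult x y :=
        finsum_eq_sum_of_fintype (α := Fin v) _
    _ = ∑ y : Fin v, ∑ i, if edgeEnds g i = s(x, y) then 1 else 0 :=
        Finset.sum_congr rfl fun y _ => hcard y
    _ = ∑ i, ∑ y, if edgeEnds g i = s(x, y) then 1 else 0 := Finset.sum_comm
    _ = valence g x := Finset.sum_congr rfl fun i _ => sum_ite_sym2_eq (hg i) x

theorem sum_valence (g : Graph v e) : ∑ x, valence g x = 2 * e := by
  unfold valence
  rw [Finset.sum_comm]
  simp [Finset.sum_add_distrib, mul_comm]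

theorem totalDegree_toDecorated (hg : Loopless g) : (toDecorated g).totalDegree = 2 * e := by
  rw [← sum_valence g]
  exact (finsum_eq_sum_of_fintype (α := Fin v) _).trans
    (Finset.sum_congr rfl fun x _ => degree_toDecorated hg x)

theorem connected_toDecorated_iff (hg : Loopless g) :
    (toDecorated g).Connected ↔ ∀ x y, Relation.EqvGen (adj g) x y := by
  refine ⟨fun h x y => ?_, fun h P hedge _ x y => ?_⟩
  · exact h (Relation.EqvGen (adj g) x)
      (fun y z hyz hy => hy.trans _ _ _ (.rel _ _ ((mult_pos_toDecorated_iff hg y z).1 hyz)))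
      Empty.rec x y (.refl x)
  · have hP {x y : Fin v} (hxy : Relation.EqvGen (adj g) x y) : P x ↔ P y := by
      induction hxy with
      | rel x y hxy =>
        have hpos := (mult_pos_toDecorated_iff hg x y).2 hxy
        exact ⟨hedge x y hpos, hedge y x (DecoratedGraph.mult_pos_symm hpos)⟩
      | refl => exact Iff.rfl
      | symm _ _ _ ih => exact ih.symm
      | trans _ _ _ _ _ ih ih' => exact ih.trans ih'
    exact (hP (h x y)).1

theorem isPlain_toDecorated_iff {b : ℕ} {g : Graph v (b + v)} (hg : Loopless g) :
    (toDecorated g).IsPlain b ↔ IsX g := by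
  have hdegree : (∀ x, 3 ≤ (toDecorated g).degree x) ↔ ∀ x, 3 ≤ valence g x :=
    forall_congr' fun x => by rw [degree_toDecorated hg]
  refine ⟨fun h => ⟨hdegree.1 h.three_le_degree, (connected_toDecorated_iff hg).1 h.connected⟩,
    fun h => ⟨inferInstance, inferInstance, ?_, (connected_toDecorated_iff hg).2 h.2,
      hdegree.2 h.1⟩⟩
  rw [totalDegree_toDecorated hg, Nat.card_fin, add_comm b]

theorem edgeEnds_eq_iff {i j : Fin e} :
    edgeEnds g i = edgeEnds g j ↔ g i = g j ∨ g i = (g j).swap := by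
  rw [edgeEnds, edgeEnds, Sym2.eq_iff, Prod.ext_iff, Prod.ext_iff]
  rfl

theorem noMultiple_iff : NoMultiple g ↔ Function.Injective (edgeEnds g) := by
  refine ⟨fun h i j hij => by_contra fun hne => ?_, fun h i j hne => ?_⟩
  · exact not_or.2 (h j i (Ne.symm hne)) (edgeEnds_eq_iff.1 hij)
  · exact not_or.1 fun hji => hne (h (edgeEnds_eq_iff.2 hji)).symm

theorem nonempty_bundles_toDecorated_iff (hg : Loopless g) :
    (toDecorated g).bundles.Nonempty ↔ ¬ NoMultiple g := by
  have hbundle (s : Sym2 (Fin v)) :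
      s ∈ (toDecorated g).bundles ↔ ∃ i j, edgeEnds g i = s ∧ edgeEnds g j = s ∧ i ≠ j := by
    induction s with
    | _ x y =>
      refine (DecoratedGraph.mem_bundles (G := toDecorated g)).trans ?_
      rw [mult_toDecorated hg, Nat.succ_le_iff, Finite.one_lt_card_iff_nontrivial,
        nontrivial_iff]
      simp only [Subtype.exists, ne_eq, Subtype.mk.injEq, exists_prop]
      exact exists_congr fun i => ⟨fun ⟨hi, j, hj, h⟩ => ⟨j, hi, hj, h⟩,
        fun ⟨j, hi, hj, h⟩ => ⟨hi, j, hj, h⟩⟩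
  rw [noMultiple_iff, Function.not_injective_iff]
  exact ⟨fun ⟨s, hs⟩ => let ⟨i, j, hi, hj, h⟩ := (hbundle s).1 hs
      ⟨i, j, hi.trans hj.symm, h⟩,
    fun ⟨i, j, hij, h⟩ => ⟨_, (hbundle _).2 ⟨i, j, hij, rfl, h⟩⟩⟩

end Labelled

theorem exists_loopless_hom (G : DecoratedGraph) [IsEmpty G.Leg] [IsEmpty G.Marker] :
    ∃ (e : ℕ) (g : Graph (Nat.card G.Vert) e),
      Loopless g ∧ Nonempty (toDecorated g ⟶ G) := by
  let ρ : Fin (Nat.card G.Vert) ≃ G.Vert := (Finite.equivFin G.Vert).symm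
  let m : Sym2 (Fin (Nat.card G.Vert)) → ℕ :=
    Sym2.lift ⟨fun x y => G.mult (ρ x) (ρ y), fun _ _ => G.mult_comm _ _⟩
  let I := Σ s, Fin (m s)
  let E : Fin (Nat.card I) ≃ I := (Finite.equivFin I).symm
  let g : Graph (Nat.card G.Vert) (Nat.card I) := fun i => (E i).1.out
  have hends (i) : edgeEnds g i = (E i).1 := Quot.out_eq _
  have hcard (s) : Nat.card {i // edgeEnds g i = s} = m s := by
    rw [Nat.card_congr ((E.subtypeEquiv (q := fun z : I => z.1 = s) fun i => by rw [hends]).trans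
      (Equiv.sigmaSubtype s)), Nat.card_fin]
  have hg : Loopless g := fun i hi => by
    have hm : m (edgeEnds g i) = 0 := by
      change G.mult (ρ (g i).1) (ρ (g i).2) = 0
      rw [hi, G.mult_self]
    rw [← hcard] at hm
    exact (Finite.card_eq_zero_iff.1 hm).false ⟨i, rfl⟩
  exact ⟨_, g, hg, ⟨⟨ρ, .equivOfIsEmpty _ _, .equivOfIsEmpty _ _,
    fun x y => ((mult_toDecorated hg x y).trans (hcard s(x, y))).symm, Empty.rec, Empty.rec⟩⟩⟩

section Orbits

variable {v e : ℕ}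

/-- A `Γ`-orbit of labelled graphs with property `Q` on which `χ` is trivial on all stabilizers. -/
def IsOddOrbit (Q : Graph v e → Prop) (S : Set (Graph v e)) : Prop :=
  ∃ g, Q g ∧ S = {g' | ∃ γ, g' = act γ g} ∧ ∀ g' ∈ S, ∀ γ, act γ g' = g' → chi γ = 1

/-- The loopless labelled graphs whose underlying unlabelled graph has isomorphism class `c`. -/
def labellings (v e : ℕ) (c : IsoClass DecoratedGraph) : Set (Graph v e) :=
  {g | Loopless g ∧ isoClass (toDecorated g) = c}

theorem setOf_act_eq_labellings {g : Graph v e} (hg : Loopless g) :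
    {g' | ∃ γ, g' = act γ g} = labellings v e (isoClass (toDecorated g)) :=
  Set.ext fun _ => (exists_act_eq_iff hg).trans
    (and_congr_right fun _ => isoClass_eq_iff.symm.trans eq_comm)

theorem isOddOrbit_iff {Q : Graph v e → Prop} {S : Set (Graph v e)} :
    IsOddOrbit Q S ↔ ∃ g, Q g ∧ Loopless g ∧ Orientable (toDecorated g) ∧
      S = labellings v e (isoClass (toDecorated g)) := by
  constructor
  · rintro ⟨g, hQ, rfl, hchi⟩
    have hstab := hchi g ⟨1, rfl⟩
    have hg := Loopless.of_chi_eq_one hstab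
    exact ⟨g, hQ, hg, (orientable_toDecorated_iff hg).2 hstab, setOf_act_eq_labellings hg⟩
  · rintro ⟨g, hQ, hg, hor, rfl⟩
    refine ⟨g, hQ, (setOf_act_eq_labellings hg).symm, fun g' ⟨hg', hc⟩ => ?_⟩
    obtain ⟨f⟩ := isoClass_eq_iff.1 hc.symm
    exact (orientable_toDecorated_iff hg').1 (hor.of_hom f)

theorem labellings_nonempty {b : ℕ} {c : IsoClass DecoratedGraph} (hc : c.out.IsPlain b)
    (hv : Nat.card c.out.Vert = v) : (labellings v (b + v) c).Nonempty := by
  have := hc.isEmpty_leg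
  have := hc.isEmpty_marker
  obtain ⟨e, g, hg, ⟨f⟩⟩ := exists_loopless_hom c.out
  have htotal := DecoratedGraph.totalDegree_map f
  rw [totalDegree_toDecorated hg, hc.totalDegree_eq] at htotal
  obtain rfl : e = b + Nat.card c.out.Vert := by omega
  subst hv
  exact ⟨g, hg, (isoClass_eq f).trans (isoClass_out c)⟩

variable {b : ℕ} {P : DecoratedGraph → Prop}

theorem setOf_isOddOrbit_eq_image {Q : Graph v (b + v) → Prop} (hP : IsoInvariant P)
    (hPb : ∀ G, P G → G.IsPlain b) (hQ : ∀ g, Loopless g → (Q g ↔ P (toDecorated g))) :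
    {S | IsOddOrbit Q S} = labellings v (b + v) ''
      {c : IsoClass DecoratedGraph | (P c.out ∧ Orientable c.out) ∧ Nat.card c.out.Vert = v} := by
  ext S
  refine isOddOrbit_iff.trans ⟨?_, ?_⟩
  · rintro ⟨g, hQg, hg, hor, rfl⟩
    obtain ⟨f⟩ := nonempty_out_hom (toDecorated g)
    refine ⟨_, ⟨⟨?_, hor.of_hom (Groupoid.inv f)⟩, ?_⟩, rfl⟩
    · rw [hP f]
      exact (hQ g hg).1 hQg
    · exact (Nat.card_congr f.vert).trans (Nat.card_fin v)
  · rintro ⟨c, ⟨⟨hPc, hor⟩, hv⟩, rfl⟩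
    obtain ⟨g, hg, rfl⟩ := labellings_nonempty (hPb _ hPc) hv
    obtain ⟨f⟩ := nonempty_out_hom (toDecorated g)
    refine ⟨g, (hQ g hg).2 ?_, hg, hor.of_hom f, rfl⟩
    rwa [← hP f]

theorem card_isOddOrbit {Q : Graph v (b + v) → Prop} (hP : IsoInvariant P)
    (hPb : ∀ G, P G → G.IsPlain b) (hQ : ∀ g, Loopless g → (Q g ↔ P (toDecorated g))) :
    Nat.card {S // IsOddOrbit Q S} =
      {c : IsoClass DecoratedGraph |
        (P c.out ∧ Orientable c.out) ∧ Nat.card c.out.Vert = v}.ncard := by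
  have hinj : Set.InjOn (labellings v (b + v))
      {c : IsoClass DecoratedGraph | (P c.out ∧ Orientable c.out) ∧ Nat.card c.out.Vert = v} := by
    rintro c ⟨⟨hPc, -⟩, hv⟩ c' - h
    obtain ⟨g, hg⟩ := labellings_nonempty (hPb _ hPc) hv
    exact hg.2.symm.trans (h ▸ hg).2
  rw [← hinj.ncard_image, ← setOf_isOddOrbit_eq_image hP hPb hQ]
  exact Nat.card_coe_set_eq _

theorem eulerChar_grade_eq_finsum_card_isOddOrbit (hb : 1 ≤ b) (hP : IsoInvariant P)
    (hPb : ∀ G, P G → G.IsPlain b) (Q : ∀ {v}, Graph v (b + v) → Prop)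
    (hQ : ∀ {v} (g : Graph v (b + v)), Loopless g → (Q g ↔ P (toDecorated g))) :
    eulerChar P DecoratedGraph.grade =
      ∑ᶠ v ∈ Set.Ici 1, (-1 : ℤ) ^ v * Nat.card {S : Set (Graph v (b + v)) // IsOddOrbit Q S} := by
  have hfin : {c : IsoClass DecoratedGraph | P c.out ∧ Orientable c.out}.Finite :=
    (DecoratedGraph.finiteUpToIso_isPlain b).subset fun c hc => hPb _ hc.1
  have hgrade {G : DecoratedGraph} (h : P G) : G.grade = Nat.card G.Vert := by
    have := (hPb G h).isEmpty_marker
    rw [DecoratedGraph.grade, Nat.card_of_isEmpty (α := G.Marker), add_zero]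
  rw [eulerChar_eq_finsum_mem, finsum_mem_congr rfl fun c hc => by rw [hgrade hc.1],
    finsum_mem_comp_eq_finsum_mem_mul_ncard hfin
      (fun c hc => (hPb _ hc.1).card_vert_pos hb) fun v => (-1 : ℤ) ^ v]
  exact finsum_mem_congr rfl fun v _ => by rw [card_isOddOrbit hP hPb hQ]; rfl

theorem eulerChar_isPlain_eq_finsum_nOdd (hb : 1 ≤ b) :
    eulerChar (DecoratedGraph.IsPlain b) DecoratedGraph.grade =
      ∑ᶠ v ∈ Set.Ici 1, (-1 : ℤ) ^ v * nOdd v (b + v) :=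
  eulerChar_grade_eq_finsum_card_isOddOrbit hb (DecoratedGraph.isoInvariant_isPlain b)
    (fun _ h => h) IsX fun _ hg => (isPlain_toDecorated_iff hg).symm

theorem eulerChar_isPlain_and_not_nonempty_bundles_eq_finsum_nOddStar (hb : 1 ≤ b) :
    eulerChar (fun G => G.IsPlain b ∧ ¬ G.bundles.Nonempty) DecoratedGraph.grade =
      ∑ᶠ v ∈ Set.Ici 1, (-1 : ℤ) ^ v * nOddStar v (b + v) :=
  eulerChar_grade_eq_finsum_card_isOddOrbit hb
    ((DecoratedGraph.isoInvariant_isPlain b).and DecoratedGraph.isoInvariant_nonempty_bundles.not)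
    (fun _ h => h.1) (fun g => IsX g ∧ NoMultiple g) fun g hg => by
      rw [isPlain_toDecorated_iff hg, nonempty_bundles_toDecorated_iff hg, not_not]

end Orbits

/-- For every genus `b ≥ 2`, the Euler characteristics of the genus-`b`
parts of the connected odd graph complexes with and without multiple edges agree:
`∑_{v ≥ 1} (-1)^v · ñ^{odd}(v, b+v) = ∑_{v ≥ 1} (-1)^v · ñ^{odd*}(v, b+v)`
(both sums are finite since at-least-trivalent graphs satisfy `v ≤ 2b - 2`). -/
theorem stmt_14 (b : ℕ) (hb : 2 ≤ b) :
    ∑ᶠ v ∈ Set.Ici 1, ((-1 : ℤ) ^ v * nOdd v (b + v)) =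
    ∑ᶠ v ∈ Set.Ici 1, ((-1 : ℤ) ^ v * nOddStar v (b + v)) := by
  have hb' : 1 ≤ b := one_le_two.trans hb
  rw [← eulerChar_isPlain_eq_finsum_nOdd hb', DecoratedGraph.eulerChar_isPlain hb,
    eulerChar_isPlain_and_not_nonempty_bundles_eq_finsum_nOddStar hb']

end GraphComplexOdd
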